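/- Suppose the family {ρ_{x,y,s}} satisfies Assumption A. For every n≥1 and all R̂₁,R̂₂>0 there exist operators T^X and T^Y on (ℂ^𝒳)^{⊗n}⊗(ℂ^𝒴)^{⊗n}⊗H_B^{⊗n} with 0⪯T^X⪯I and 0⪯T^Y⪯I such that for all probability distributions P_X on 𝒳 and P_Y on 𝒴, all t∈(0,1), every ε>0, and every finite 𝒮_ε⊆𝒮 witnessing Assumption A at ε, with f := (n+1)^{|𝒮_ε|−1 + t|𝒳||𝒴|(d_B−1)d_B/2 + (d_B−1)t|𝒳||𝒴|}, g₁ := n^{|𝒳|d_B(d_B−1)/2}Λ(n,d_B)^{|𝒳|}, g₂ := n^{|𝒴|d_B(d_B−1)/2}Λ(n,d_B)^{|𝒴|}, g₃ := n^{d_B(d_B−1)/2}Λ(n,d_B), and all minima over probability distributions Q supported on 𝒮_ε: (i) for all s^n∈𝒮^n, Tr[(I−T^X)ρ^{XYB}_{P_X,P_Y,s^n}] ≤ f·(1+ε)^n·(2^{nt(R̂₁ − min_Q I_{1−t}[X;B|Y]_{P_X,P_Y,Q})} + 2^{nt(R̂₁+R̂₂ − min_Q I_{1−t}[XY;B]_{P_X,P_Y,Q})});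 (ii) for all s^n∈𝒮^n, Tr[(I−T^Y)ρ^{XYB}_{P_X,P_Y,s^n}] ≤ f·(1+ε)^n·(2^{nt(R̂₂ − min_Q I_{1−t}[Y;B|X]_{P_X,P_Y,Q})} + 2^{nt(R̂₁+R̂₂ − min_Q I_{1−t}[XY;B]_{P_X,P_Y,Q})}); (iii) for every family {σ_{y^n}}_{y^n∈𝒴^n} of density matrices on H_B^{⊗n}, Tr[T^X · Σ_{x^n,y^n} P_X^n(x^n)P_Y^n(y^n)|x^n⟩⟨x^n|⊗|y^n⟩⟨y^n|⊗σ_{y^n}] ≤ g₂·2^{−nR̂₁}; (iv) for every density matrix σ on H_B^{⊗n}, Tr[T^X · Σ_{x^n,y^n} P_X^n(x^n)P_Y^n(y^n)|x^n⟩⟨x^n|⊗|y^n⟩⟨y^n|⊗σ] ≤ g₃·2^{−n(R̂₁+R̂₂)}; (v) for every family {σ_{x^n}}_{x^n∈𝒳^n}, Tr[T^Y · Σ_{x^n,y^n} P_X^n(x^n)P_Y^n(y^n)|x^n⟩⟨x^n|⊗|y^n⟩⟨y^n|⊗σ_{x^n}] ≤ g₁·2^{−nR̂₂}; (vi) for every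 density matrix σ, Tr[T^Y · Σ_{x^n,y^n} P_X^n(x^n)P_Y^n(y^n)|x^n⟩⟨x^n|⊗|y^n⟩⟨y^n|⊗σ] ≤ g₃·2^{−n(R̂₁+R̂₂)}. -/

import Mathlib

open scoped ComplexOrder

noncomputable section

/-- A density matrix: positive semidefinite with unit trace. -/
def IsDensity {m : Type*} [Fintype m] (ρ : Matrix m m ℂ) : Prop :=
  ρ.PosSemidef ∧ ρ.trace = 1

/-- Loewner order `A ⪯ B`. -/
def Loewner {m : Type*} [Fintype m] (A B : Matrix m m ℂ) : Prop :=
  (B - A).PosSemidef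

/-- Functional calculus for Hermitian matrices (junk value `0` on non-Hermitian input). -/
def matFun {m : Type*} [Fintype m] [DecidableEq m] (f : ℝ → ℝ) (A : Matrix m m ℂ) :
    Matrix m m ℂ :=
  if hA : A.IsHermitian then
    (hA.eigenvectorUnitary : Matrix m m ℂ) *
        Matrix.diagonal (fun i => (f (hA.eigenvalues i) : ℂ)) *
      star (hA.eigenvectorUnitary : Matrix m m ℂ)
  else 0

/-- Matrix power, taken on the support (`0^p := 0` on the kernel). -/
def mpow {m : Type*} [Fintype m] [DecidableEq m] (A : Matrix m m ℂ) (p : ℝ) :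
    Matrix m m ℂ :=
  matFun (fun u => if u ≤ 0 then 0 else u ^ p) A

/-- The classical–classical–quantum state `Σ_{x,y} wX(x)wY(y)|x⟩⟨x|⊗|y⟩⟨y|⊗ρ_{x,y}`. -/
def cqState2 {X Y B : Type*} [DecidableEq X] [DecidableEq Y]
    (wX : X → ℝ) (wY : Y → ℝ) (ρ : X → Y → Matrix B B ℂ) :
    Matrix ((X × Y) × B) ((X × Y) × B) ℂ :=
  Matrix.of fun p q =>
    (if p.1 = q.1 then ((wX p.1.1 * wY p.1.2 : ℝ) : ℂ) else 0) * ρ p.1.1 p.1.2 p.2 q.2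

/-- Tensor product of a finite family of matrices, realized on functions. -/
def tensorFam {k d : Type*} [Fintype k] (ρ : k → Matrix d d ℂ) :
    Matrix (k → d) (k → d) ℂ :=
  Matrix.of fun i j => ∏ a, ρ a (i a) (j a)

/-- The `n`-copy classical–classical–quantum state with i.i.d. classical inputs. -/
def cq2n {𝒳 𝒴 : Type*} [Fintype 𝒳] [DecidableEq 𝒳] [Fintype 𝒴] [DecidableEq 𝒴] {d : ℕ}
    (n : ℕ) (PX : 𝒳 → ℝ) (PY : 𝒴 → ℝ)
    (F : (Fin n → 𝒳) → (Fin n → 𝒴) → Matrix (Fin n → Fin d) (Fin n → Fin d) ℂ) :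
    Matrix (((Fin n → 𝒳) × (Fin n → 𝒴)) × (Fin n → Fin d))
      (((Fin n → 𝒳) × (Fin n → 𝒴)) × (Fin n → Fin d)) ℂ :=
  cqState2 (fun xv : Fin n → 𝒳 => ∏ k, PX (xv k)) (fun yv : Fin n → 𝒴 => ∏ k, PY (yv k)) F

/-- `Λ(n,d)`: the number of partitions of `n` into at most `d` parts. -/
def numPartLe (n d : ℕ) : ℕ := Nat.card {p : Nat.Partition n // p.parts.card ≤ d}

/-- The Rényi-type quantity `I_{1−t}[X;B|Y]_{P_X,P_Y,Q}`, given the mixed states `ρQ x y`. -/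
def renyiXgY {𝒳 𝒴 : Type*} [Fintype 𝒳] [Fintype 𝒴] {d : ℕ}
    (PX : 𝒳 → ℝ) (PY : 𝒴 → ℝ) (ρQ : 𝒳 → 𝒴 → Matrix (Fin d) (Fin d) ℂ) (t : ℝ) : ℝ :=
  -((1 - t) / t) * Real.logb 2
    (∑ y, PY y *
      (Matrix.trace (mpow (∑ x, PX x • mpow (ρQ x y) (1 - t)) (1 / (1 - t)))).re)

/-- The Rényi-type quantity `I_{1−t}[Y;B|X]_{P_X,P_Y,Q}`. -/
def renyiYgX {𝒳 𝒴 : Type*} [Fintype 𝒳] [Fintype 𝒴] {d : ℕ}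
    (PX : 𝒳 → ℝ) (PY : 𝒴 → ℝ) (ρQ : 𝒳 → 𝒴 → Matrix (Fin d) (Fin d) ℂ) (t : ℝ) : ℝ :=
  -((1 - t) / t) * Real.logb 2
    (∑ x, PX x *
      (Matrix.trace (mpow (∑ y, PY y • mpow (ρQ x y) (1 - t)) (1 / (1 - t)))).re)

/-- The Rényi-type quantity `I_{1−t}[XY;B]_{P_X,P_Y,Q}`. -/
def renyiXY {𝒳 𝒴 : Type*} [Fintype 𝒳] [Fintype 𝒴] {d : ℕ}
    (PX : 𝒳 → ℝ) (PY : 𝒴 → ℝ) (ρQ : 𝒳 → 𝒴 → Matrix (Fin d) (Fin d) ℂ) (t : ℝ) : ℝ :=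
  -((1 - t) / t) * Real.logb 2
    (Matrix.trace (mpow (∑ x, ∑ y, (PX x * PY y) • mpow (ρQ x y) (1 - t))
      (1 / (1 - t)))).re

/-- The polynomial factor `f`. -/
def fFac (n cardS cardX cardY d : ℕ) (t : ℝ) : ℝ :=
  ((n : ℝ) + 1) ^ (((cardS : ℝ) - 1)
    + t * (cardX : ℝ) * (cardY : ℝ) * ((d : ℝ) - 1) * (d : ℝ) / 2
    + ((d : ℝ) - 1) * t * (cardX : ℝ) * (cardY : ℝ))

/-- The polynomial factor `n^{c·d(d−1)/2}·Λ(n,d)^c`. -/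
def gFac (n c d : ℕ) : ℝ :=
  (n : ℝ) ^ ((c : ℝ) * (d : ℝ) * ((d : ℝ) - 1) / 2) * (numPartLe n d : ℝ) ^ c

/-!
For a word `w`, the matrices invariant under the permutations of the tensor factors that preserve
`w` form a `*`-algebra. Its central blocks, suitably weighted, give a universal state that dominates
every invariant density matrix. To see this, average with a Hilbert–Schmidt basis of the algebra as
one would over a unitary group; the trace of the universal state is then at most the square root of
the dimension of the centre times the dimension of the algebra. The first is bounded by counting
partitions, the second by counting multisets.

The universal states for `w`, for `q ∘ w` and for the constant word commute. The test on the block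
of `w` accepts, smoothly, where the first exceeds prescribed multiples of the other two. Domination
bounds the probability of accepting a state that depends on `q ∘ w` only, or not on `w` at all. The
inequality `u / (c + u) ≤ (u / c) ^ t` bounds the probability of rejecting `σ` by a trace
`Tr (E ^ t σ ^ (1 - t))`, where `E` is one of the other two universal states, and Hölder's
inequality turns this into a Rényi quantity.

The test is permutation covariant, so a product state along `s^n` may be symmetrized. By counting
types, the result is at most `(n + 1) ^ (|S| - 1)` times a power of the mixture of the states under
the empirical distribution of `s^n`. Replacing the states by their representatives in `S` costs a
factor `1 + ε` per position. The choices `q = Prod.snd` and `q = Prod.fst` give `T^X` and `T^Y`.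
-/

section FunctionalCalculus

open scoped MatrixOrder

variable {m : Type*} [Fintype m]

lemma trace_eq_re {A : Matrix m m ℂ} (hA : A.PosSemidef) :
    A.trace = (A.trace.re : ℂ) :=
  Complex.eq_re_of_ofReal_le (r := 0) (by simpa using hA.trace_nonneg)

lemma re_trace_pos {A : Matrix m m ℂ} (hA : A.PosSemidef) (hne : A ≠ 0) : 0 < A.trace.re := by
  refine (Complex.nonneg_iff.1 hA.trace_nonneg).1.lt_of_ne fun h => hne (hA.trace_eq_zero_iff.1 ?_)
  rw [trace_eq_re hA, ← h, Complex.ofReal_zero]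

lemma posSemidef_mul_of_commute {A B : Matrix m m ℂ} (hA : A.PosSemidef) (hB : B.PosSemidef)
    (h : Commute A B) : (A * B).PosSemidef := by
  classical
  exact Matrix.nonneg_iff_posSemidef.1 (h.mul_nonneg hA.nonneg hB.nonneg)

lemma re_trace_mul_nonneg {A B : Matrix m m ℂ} (hA : A.PosSemidef) (hB : B.PosSemidef) :
    0 ≤ (A * B).trace.re := by
  classical
  have hroot : (CFC.sqrt A).PosSemidef := Matrix.nonneg_iff_posSemidef.1 (CFC.sqrt_nonneg A)
  have hconj := (hB.mul_mul_conjTranspose_same (CFC.sqrt A)).trace_nonneg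
  rw [hroot.1.eq, Matrix.trace_mul_comm, ← Matrix.mul_assoc,
    CFC.sqrt_mul_sqrt_self A hA.nonneg] at hconj
  exact (Complex.le_def.1 hconj).1

lemma re_trace_mul_le {A B C : Matrix m m ℂ} (hA : A.PosSemidef) (h : B ≤ C) :
    (A * B).trace.re ≤ (A * C).trace.re := by
  have hdiff := re_trace_mul_nonneg hA (Matrix.le_iff.1 h)
  rw [Matrix.mul_sub, Matrix.trace_sub, Complex.sub_re] at hdiff
  exact sub_nonneg.1 hdiff

lemma re_trace_mul_le_of_le_left {A B ω : Matrix m m ℂ} (h : A ≤ B) (hω : ω.PosSemidef) :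
    (A * ω).trace.re ≤ (B * ω).trace.re := by
  simpa only [Matrix.trace_mul_comm ω] using re_trace_mul_le hω h

lemma le_smul_of_sq_le_smul {X p : Matrix m m ℂ} (hp : IsStarProjection p)
    (hX : IsSelfAdjoint X) (hXp : X * p = X) {c : ℝ} (hc : 0 < c) (h : X * X ≤ c ^ 2 • p) :
    X ≤ c • p := by
  have hpX : p * X = X := by simpa [hX.star_eq, hp.isSelfAdjoint.star_eq] using congrArg star hXp
  have hsq : 0 ≤ (X - c • p) * (X - c • p) := by
    have hsa : IsSelfAdjoint (X - c • p) := hX.sub (.smul (.all c) hp.isSelfAdjoint)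
    simpa only [hsa.star_eq] using star_mul_self_nonneg (X - c • p)
  have hexpand : (X - c • p) * (X - c • p) = X * X - (2 * c) • X + c ^ 2 • p := by
    simp only [mul_sub, sub_mul, smul_mul_assoc, mul_smul_comm, hXp, hpX, hp.isIdempotentElem.eq]
    module
  have htwo : (2 * c) • X ≤ (2 * c) • c • p := by
    calc (2 * c) • X ≤ (2 * c) • X + (X - c • p) * (X - c • p) := le_add_of_nonneg_right hsq
      _ = X * X + c ^ 2 • p := by rw [hexpand]; abel
      _ ≤ c ^ 2 • p + c ^ 2 • p := by gcongr
      _ = (2 * c) • c • p := by module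
  exact le_of_smul_le_smul_left htwo (by positivity)

variable [DecidableEq m]

/-- The matrix `U · diag(a) · U*`, a spectral decomposition when `U` is unitary. -/
def specForm (U : Matrix m m ℂ) (a : m → ℝ) : Matrix m m ℂ :=
  U * Matrix.diagonal (fun i => (a i : ℂ)) * star U

lemma exists_eq_specForm {A : Matrix m m ℂ} (hA : A.IsHermitian) :
    ∃ U ∈ Matrix.unitaryGroup m ℂ, A = specForm U hA.eigenvalues ∧
      ∀ f, matFun f A = specForm U (fun i => f (hA.eigenvalues i)) := by
  refine ⟨hA.eigenvectorUnitary, hA.eigenvectorUnitary.2, ?_, fun f => ?_⟩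
  · exact hA.spectral_theorem.trans (Unitary.conjStarAlgAut_apply _ _)
  · simp [matFun, hA, specForm]

lemma exists_eq_specForm_nonneg {A : Matrix m m ℂ} (hA : A.PosSemidef) :
    ∃ U ∈ Matrix.unitaryGroup m ℂ, ∃ a : m → ℝ, (∀ i, 0 ≤ a i) ∧ A = specForm U a := by
  obtain ⟨U, hU, hAU, -⟩ := exists_eq_specForm hA.1
  exact ⟨U, hU, _, hA.eigenvalues_nonneg, hAU⟩

lemma isHermitian_specForm (U : Matrix m m ℂ) (a : m → ℝ) : (specForm U a).IsHermitian :=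
  Matrix.isHermitian_mul_mul_conjTranspose U
    (Matrix.isHermitian_diagonal_iff.2 fun i => Complex.conj_ofReal (a i))

lemma posSemidef_specForm (U : Matrix m m ℂ) {a : m → ℝ} (ha : ∀ i, 0 ≤ a i) :
    (specForm U a).PosSemidef :=
  (Matrix.posSemidef_diagonal_iff.2 fun i => by exact_mod_cast ha i).mul_mul_conjTranspose_same U

lemma trace_specForm {U : Matrix m m ℂ} (hU : U ∈ Matrix.unitaryGroup m ℂ) (a : m → ℝ) :
    (specForm U a).trace = ((∑ i, a i : ℝ) : ℂ) := by
  rw [specForm, Matrix.trace_mul_comm, ← Matrix.mul_assoc, Matrix.mem_unitaryGroup_iff'.1 hU,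
    Matrix.one_mul, Matrix.trace_diagonal, Complex.ofReal_sum]

lemma trace_specForm_mul (U : Matrix m m ℂ) (a : m → ℝ) (M : Matrix m m ℂ) :
    (specForm U a * M).trace = ∑ i, (a i : ℂ) * (star U * M * U) i i := by
  rw [specForm, Matrix.mul_assoc, Matrix.mul_assoc, Matrix.trace_mul_comm, Matrix.mul_assoc,
    Matrix.trace]
  simp only [Matrix.diag_apply, Matrix.diagonal_mul, Matrix.mul_assoc]

lemma mul_diagonal_comp_eq {W : Matrix m m ℂ} {a b : m → ℝ}
    (h : W * Matrix.diagonal (fun i => (a i : ℂ)) = Matrix.diagonal (fun i => (b i : ℂ)) * W)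
    (f : ℝ → ℝ) :
    W * Matrix.diagonal (fun i => (f (a i) : ℂ)) =
      Matrix.diagonal (fun i => (f (b i) : ℂ)) * W := by
  ext i j
  have hij := congrFun (congrFun h i) j
  rw [Matrix.mul_diagonal, Matrix.diagonal_mul] at hij ⊢
  by_cases hW : W i j = 0
  · simp [hW]
  · rw [mul_comm] at hij
    have hab : a j = b i := by exact_mod_cast mul_right_cancel₀ hW hij
    rw [hab, mul_comm]

lemma specForm_eq_specForm_iff {U V : Matrix m m ℂ} (hU : U ∈ Matrix.unitaryGroup m ℂ)
    (hV : V ∈ Matrix.unitaryGroup m ℂ) (a b : m → ℝ) :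
    specForm U a = specForm V b ↔
      (star V * U) * Matrix.diagonal (fun i => (a i : ℂ)) =
        Matrix.diagonal (fun i => (b i : ℂ)) * (star V * U) := by
  have hU₁ := Matrix.mem_unitaryGroup_iff'.1 hU
  have hU₂ := Matrix.mem_unitaryGroup_iff.1 hU
  have hV₁ := Matrix.mem_unitaryGroup_iff'.1 hV
  have hV₂ := Matrix.mem_unitaryGroup_iff.1 hV
  constructor <;> intro h
  · have := congrArg (fun M => star V * M * U) h
    simp only [specForm, Matrix.mul_assoc, hU₁, Matrix.mul_one] at this
    simpa only [← Matrix.mul_assoc, hV₁, Matrix.one_mul] using this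
  · have := congrArg (fun M => V * M * star U) h
    simp only [Matrix.mul_assoc, hU₂, Matrix.mul_one] at this
    simpa only [specForm, ← Matrix.mul_assoc, hV₂, Matrix.one_mul] using this

lemma matFun_specForm {U : Matrix m m ℂ} (hU : U ∈ Matrix.unitaryGroup m ℂ) (a : m → ℝ)
    (f : ℝ → ℝ) : matFun f (specForm U a) = specForm U (fun i => f (a i)) := by
  obtain ⟨V, hV, hspec, hfun⟩ := exists_eq_specForm (isHermitian_specForm U a)
  rw [hfun, specForm_eq_specForm_iff hV hU]
  exact mul_diagonal_comp_eq ((specForm_eq_specForm_iff hV hU _ _).1 hspec.symm) f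

end FunctionalCalculus

section HilbertSchmidt

open scoped Matrix MatrixOrder

variable {m ι : Type*} [Fintype m] [Fintype ι]

/-- `E` is an orthonormal basis of `S` for the Hilbert–Schmidt inner product `tr(a* b)`. -/
structure IsHilbertSchmidtBasis [DecidableEq ι] (S : Submodule ℂ (Matrix m m ℂ))
    (E : ι → Matrix m m ℂ) : Prop where
  mem : ∀ j, E j ∈ S
  orthonormal : ∀ i j, ((E i)ᴴ * E j).trace = if i = j then 1 else 0
  expansion : ∀ a ∈ S, a = ∑ j, ((E j)ᴴ * a).trace • E j

lemma exists_isHilbertSchmidtBasis (S : Submodule ℂ (Matrix m m ℂ)) :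
    ∃ E : Fin (Module.finrank ℂ S) → Matrix m m ℂ, IsHilbertSchmidtBasis S E := by
  classical
  let _ := Matrix.toMatrixNormedAddCommGroup (1 : Matrix m m ℂ) Matrix.PosDef.one
  let _ := Matrix.toMatrixInnerProductSpace (1 : Matrix m m ℂ) Matrix.PosSemidef.one
  have hinner (a b : Matrix m m ℂ) : inner ℂ a b = (aᴴ * b).trace := by
    change (b * 1 * aᴴ).trace = _
    rw [Matrix.mul_one, Matrix.trace_mul_comm]
  let e := stdOrthonormalBasis ℂ S
  refine ⟨fun j => e j, fun j => (e j).2, fun i j => ?_, fun a ha => ?_⟩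
  · rw [← hinner]
    exact orthonormal_iff_ite.1 e.orthonormal i j
  · have hsum := congrArg Subtype.val (e.sum_repr' ⟨a, ha⟩)
    simp only [Submodule.coe_sum, Submodule.coe_smul, Submodule.coe_inner, hinner] at hsum
    exact hsum.symm

lemma IsHilbertSchmidtBasis.conjTranspose [DecidableEq ι] {S : Submodule ℂ (Matrix m m ℂ)}
    {E : ι → Matrix m m ℂ} (hE : IsHilbertSchmidtBasis S E) (hS : ∀ a ∈ S, aᴴ ∈ S) :
    IsHilbertSchmidtBasis S fun j => (E j)ᴴ where
  mem j := hS _ (hE.mem j)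
  orthonormal i j := by
    rw [Matrix.conjTranspose_conjTranspose, Matrix.trace_mul_comm, hE.orthonormal]
    exact ite_congr (propext eq_comm) (fun _ => rfl) fun _ => rfl
  expansion a ha := by
    rw [← Matrix.conjTranspose_inj]
    refine (hE.expansion _ (hS a ha)).trans ?_
    rw [Matrix.conjTranspose_sum]
    refine Finset.sum_congr rfl fun j _ => ?_
    rw [Matrix.conjTranspose_smul, Matrix.conjTranspose_conjTranspose, ← Matrix.trace_conjTranspose,
      Matrix.conjTranspose_mul, Matrix.trace_mul_comm]

lemma IsHilbertSchmidtBasis.sum_mul_star_trace [DecidableEq ι] {S : Submodule ℂ (Matrix m m ℂ)}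
    {E : ι → Matrix m m ℂ} (hE : IsHilbertSchmidtBasis S E) {a : Matrix m m ℂ} (ha : a ∈ S) :
    ∑ j, ((E j)ᴴ * a).trace * star ((E j)ᴴ * a).trace = (aᴴ * a).trace := by
  conv_rhs => rw [congrArg (aᴴ * ·) (hE.expansion a ha)]
  rw [Finset.mul_sum, Matrix.trace_sum]
  refine Finset.sum_congr rfl fun j _ => ?_
  rw [Matrix.mul_smul, Matrix.trace_smul, smul_eq_mul, ← Matrix.trace_conjTranspose,
    Matrix.conjTranspose_mul, Matrix.conjTranspose_conjTranspose]

/-- The completely positive map `X ↦ ∑ⱼ Eⱼ X Eⱼ*`. For a Hilbert–Schmidt basis `E` of a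
`*`-algebra it takes values in the commutant, like the twirl over a unitary group. -/
def hsTwirl (E : ι → Matrix m m ℂ) (X : Matrix m m ℂ) : Matrix m m ℂ :=
  ∑ j, E j * X * (E j)ᴴ

lemma posSemidef_hsTwirl (E : ι → Matrix m m ℂ) {X : Matrix m m ℂ} (hX : X.PosSemidef) :
    (hsTwirl E X).PosSemidef :=
  Matrix.posSemidef_sum _ fun j _ => hX.mul_mul_conjTranspose_same (E j)

lemma commute_hsTwirl [DecidableEq m] [DecidableEq ι] {A : StarSubalgebra ℂ (Matrix m m ℂ)}
    {E : ι → Matrix m m ℂ} (hE : IsHilbertSchmidtBasis A.toSubalgebra.toSubmodule E)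
    (X : Matrix m m ℂ) {a : Matrix m m ℂ} (ha : a ∈ A) : a * hsTwirl E X = hsTwirl E X * a := by
  have hmem (j : ι) : E j ∈ A := hE.mem j
  have hmul (j : ι) : a * E j = ∑ l, ((E l)ᴴ * a * E j).trace • E l := by
    simpa only [Matrix.mul_assoc] using hE.expansion _ (mul_mem ha (hmem j) : a * E j ∈ A)
  have hmul' (l : ι) : (E l)ᴴ * a = ∑ j, ((E l)ᴴ * a * E j).trace • (E j)ᴴ := by
    have h := hE.expansion _ (mul_mem (star_mem ha) (hmem l) : star a * E l ∈ A)
    rw [← Matrix.conjTranspose_inj, Matrix.conjTranspose_sum] at h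
    simpa only [Matrix.star_eq_conjTranspose, Matrix.conjTranspose_smul, Matrix.conjTranspose_mul,
      Matrix.conjTranspose_conjTranspose, ← Matrix.trace_conjTranspose] using h
  calc a * hsTwirl E X = ∑ j, (a * E j) * X * (E j)ᴴ := by
        simp only [hsTwirl, Finset.mul_sum, Matrix.mul_assoc]
    _ = ∑ j, ∑ l, ((E l)ᴴ * a * E j).trace • (E l * X * (E j)ᴴ) := by
        simp only [hmul, Finset.sum_mul, Matrix.smul_mul]
    _ = ∑ l, E l * X * ((E l)ᴴ * a) := by
        rw [Finset.sum_comm]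
        refine Finset.sum_congr rfl fun l _ => ?_
        simp_rw [← Matrix.mul_smul, ← Finset.mul_sum, ← hmul' l]
    _ = hsTwirl E X * a := by simp only [hsTwirl, Finset.sum_mul, Matrix.mul_assoc]

lemma sum_smul_mul_mul_conjTranspose_le (α : ι → ℂ) (E : ι → Matrix m m ℂ) {X : Matrix m m ℂ}
    (hX : X.PosSemidef) :
    (∑ j, α j • E j) * X * (∑ j, α j • E j)ᴴ ≤ (∑ j, α j * star (α j)) • hsTwirl E X := by
  have hterm (j l : ι) : (star (α l) • E j - star (α j) • E l) * X *
        (star (α l) • E j - star (α j) • E l)ᴴ =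
      (α l * star (α l)) • (E j * X * (E j)ᴴ) + (α j * star (α j)) • (E l * X * (E l)ᴴ) -
        (α j * star (α l)) • (E j * X * (E l)ᴴ) - (α l * star (α j)) • (E l * X * (E j)ᴴ) := by
    simp only [Matrix.conjTranspose_sub, Matrix.conjTranspose_smul, star_star, Matrix.sub_mul,
      Matrix.mul_sub, Matrix.smul_mul, Matrix.mul_smul, smul_sub, smul_smul]
    abel
  have hdiag : ∑ j, ∑ l, (α l * star (α l)) • (E j * X * (E j)ᴴ) =
      (∑ j, α j * star (α j)) • hsTwirl E X := by
    simp only [hsTwirl, ← Finset.sum_smul, ← Finset.smul_sum]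
  have hcross : ∑ j, ∑ l, (α j * star (α l)) • (E j * X * (E l)ᴴ) =
      (∑ j, α j • E j) * X * (∑ j, α j • E j)ᴴ := by
    rw [Finset.sum_comm]
    simp only [Matrix.conjTranspose_sum, Finset.sum_mul, Finset.mul_sum, Matrix.conjTranspose_smul,
      Matrix.smul_mul, Matrix.mul_smul, smul_smul, mul_comm]
  have hsum : (∑ j, ∑ l, (star (α l) • E j - star (α j) • E l) * X *
        (star (α l) • E j - star (α j) • E l)ᴴ) =
      (2 : ℝ) • ((∑ j, α j * star (α j)) • hsTwirl E X -
        (∑ j, α j • E j) * X * (∑ j, α j • E j)ᴴ) := by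
    simp only [hterm, Finset.sum_sub_distrib, Finset.sum_add_distrib]
    rw [hdiag, Finset.sum_comm, hdiag, hcross, Finset.sum_comm, hcross]
    module
  have hnonneg := (Matrix.posSemidef_sum Finset.univ fun j _ =>
    Matrix.posSemidef_sum Finset.univ fun l _ =>
      hX.mul_mul_conjTranspose_same (star (α l) • E j - star (α j) • E l)).smul
        (inv_nonneg.2 (zero_le_two (α := ℝ)))
  rwa [hsum, inv_smul_smul₀ (two_ne_zero' ℝ)] at hnonneg

lemma cfc_mem_starSubalgebra [DecidableEq m] {A : StarSubalgebra ℂ (Matrix m m ℂ)}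
    {a : Matrix m m ℂ} (ha : a ∈ A) (f : ℝ → ℝ) : cfc f a ∈ A :=
  have : IsClosed (A : Set (Matrix m m ℂ)) :=
    Submodule.closed_of_finiteDimensional A.toSubalgebra.toSubmodule
  cfc_mem f ha

lemma sq_le_trace_smul_hsTwirl [DecidableEq m] [DecidableEq ι]
    {A : StarSubalgebra ℂ (Matrix m m ℂ)} {E : ι → Matrix m m ℂ}
    (hE : IsHilbertSchmidtBasis A.toSubalgebra.toSubmodule E) {X : Matrix m m ℂ}
    (hX : X.PosSemidef) (hXA : X ∈ A) : X * X ≤ X.trace • hsTwirl E X := by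
  have hroot : CFC.sqrt X ∈ A := by
    rw [CFC.sqrt_eq_real_sqrt X hX.nonneg, cfcₙ_eq_cfc]
    exact cfc_mem_starSubalgebra hXA _
  have hadj : (CFC.sqrt X)ᴴ = CFC.sqrt X := (CFC.sqrt_nonneg X).isSelfAdjoint
  have hsq : CFC.sqrt X * CFC.sqrt X = X := CFC.sqrt_mul_sqrt_self X hX.nonneg
  have h := sum_smul_mul_mul_conjTranspose_le (fun j => ((E j)ᴴ * CFC.sqrt X).trace) E hX
  rw [hE.sum_mul_star_trace hroot, ← hE.expansion _ hroot, hadj, hsq] at h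
  calc X * X = CFC.sqrt X * (CFC.sqrt X * CFC.sqrt X) * CFC.sqrt X := by
        rw [← Matrix.mul_assoc, hsq, Matrix.mul_assoc, hsq]
    _ = CFC.sqrt X * X * CFC.sqrt X := by rw [hsq]
    _ ≤ X.trace • hsTwirl E X := h

lemma trace_mul_hsTwirl {E : ι → Matrix m m ℂ} {p : Matrix m m ℂ} [DecidableEq m]
    (hp : ∀ j, E j * p = p * E j) (X : Matrix m m ℂ) :
    (p * hsTwirl E X).trace = (hsTwirl (fun j => (E j)ᴴ) 1 * (p * X)).trace := by
  simp only [hsTwirl, Finset.mul_sum, Finset.sum_mul, Matrix.trace_sum]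
  refine Finset.sum_congr rfl fun j _ => ?_
  rw [← Matrix.mul_assoc, Matrix.trace_mul_comm, ← Matrix.mul_assoc p, ← hp j,
    Matrix.conjTranspose_conjTranspose]
  simp only [Matrix.mul_one, Matrix.mul_assoc]

end HilbertSchmidt

section CentralResolution

open scoped Matrix MatrixOrder

variable {m : Type*} [Fintype m] [DecidableEq m]

/-- The centre of a `*`-algebra of matrices, as a `*`-algebra of matrices. -/
def starCenter (A : StarSubalgebra ℂ (Matrix m m ℂ)) : StarSubalgebra ℂ (Matrix m m ℂ) :=
  A ⊓ StarSubalgebra.centralizer ℂ (A : Set (Matrix m m ℂ))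

lemma mem_starCenter {A : StarSubalgebra ℂ (Matrix m m ℂ)} {z : Matrix m m ℂ} :
    z ∈ starCenter A ↔ z ∈ A ∧ ∀ a ∈ A, a * z = z * a := by
  rw [starCenter, StarSubalgebra.mem_inf, StarSubalgebra.mem_centralizer_iff]
  exact and_congr_right' ⟨fun h a ha => (h a ha).1, fun h a ha => ⟨h a ha, h _ (star_mem ha)⟩⟩

lemma mul_comm_of_mem_starCenter {A : StarSubalgebra ℂ (Matrix m m ℂ)} {y z : Matrix m m ℂ}
    (hy : y ∈ starCenter A) (hz : z ∈ starCenter A) : y * z = z * y :=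
  (mem_starCenter.1 hz).2 y (mem_starCenter.1 hy).1

/-- A resolution of the identity into mutually orthogonal central projections of `A`. -/
structure IsCentralResolution {ι : Type*} [Fintype ι] (A : StarSubalgebra ℂ (Matrix m m ℂ))
    (p : ι → Matrix m m ℂ) : Prop extends CompleteOrthogonalIdempotents p where
  isSelfAdjoint : ∀ i, IsSelfAdjoint (p i)
  mem_starCenter : ∀ i, p i ∈ starCenter A

namespace IsCentralResolution

variable {ι : Type*} [Fintype ι] {A : StarSubalgebra ℂ (Matrix m m ℂ)} {p : ι → Matrix m m ℂ}

lemma isStarProjection (hp : IsCentralResolution A p) (i : ι) : IsStarProjection (p i) :=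
  ⟨hp.idem i, hp.isSelfAdjoint i⟩

lemma posSemidef (hp : IsCentralResolution A p) (i : ι) : (p i).PosSemidef :=
  Matrix.nonneg_iff_posSemidef.1 (hp.isStarProjection i).nonneg

lemma prod {κ : Type*} [Fintype κ] {q : κ → Matrix m m ℂ} (hp : IsCentralResolution A p)
    (hq : IsCentralResolution A q) :
    IsCentralResolution A fun ij : ι × κ => p ij.1 * q ij.2 := by
  have hcomm (j : κ) (i : ι) : q j * p i = p i * q j :=
    mul_comm_of_mem_starCenter (hq.mem_starCenter j) (hp.mem_starCenter i)
  have hmul (i i' : ι) (j j' : κ) : p i * q j * (p i' * q j') = p i * p i' * (q j * q j') := by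
    rw [mul_assoc, ← mul_assoc (q j), hcomm, mul_assoc, mul_assoc]
  refine ⟨CompleteOrthogonalIdempotents.iff_ortho_complete.2 ⟨?_, ?_⟩, ?_, ?_⟩
  · rintro ⟨i, j⟩ ⟨i', j'⟩ hne
    rw [hmul]
    by_cases hi : i = i'
    · have hj : j ≠ j' := fun hj => hne (Prod.ext hi hj)
      rw [hq.ortho hj, mul_zero]
    · rw [hp.ortho hi, zero_mul]
  · simp only [Fintype.sum_prod_type, ← Finset.mul_sum, hp.complete, hq.complete, mul_one]
  · exact fun ij => ((hp.isSelfAdjoint _).commute_iff (hq.isSelfAdjoint _)).1 (hcomm _ _).symm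
  · exact fun ij => mul_mem (hp.mem_starCenter _) (hq.mem_starCenter _)

lemma subtype_ne_zero (hp : IsCentralResolution A p) [Fintype {i // p i ≠ 0}] :
    IsCentralResolution A fun i : {i // p i ≠ 0} => p i := by
  refine ⟨CompleteOrthogonalIdempotents.iff_ortho_complete.2 ⟨fun i j hij => ?_, ?_⟩,
    fun i => hp.isSelfAdjoint _, fun i => hp.mem_starCenter _⟩
  · exact hp.ortho fun h => hij (Subtype.ext h)
  · classical
    rw [← hp.complete, ← Finset.sum_filter_ne_zero (s := Finset.univ) (f := p)]
    exact (Finset.sum_subtype (p := fun i => p i ≠ 0) {i | p i ≠ 0} (by simp) p).symm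

lemma comp_equiv {κ : Type*} [Fintype κ] (hp : IsCentralResolution A p) (e : κ ≃ ι) :
    IsCentralResolution A fun j => p (e j) :=
  ⟨(CompleteOrthogonalIdempotents.equiv e).2 hp.toCompleteOrthogonalIdempotents,
    fun _ => hp.isSelfAdjoint _, fun _ => hp.mem_starCenter _⟩

lemma linearIndependent (hp : IsCentralResolution A p) (hne : ∀ i, p i ≠ 0) :
    LinearIndependent ℂ p := by
  classical
  rw [Fintype.linearIndependent_iff]
  intro g hg i
  have hi : p i * ∑ j, g j • p j = g i • p i := by
    simp only [Finset.mul_sum, mul_smul_comm, hp.mul_eq, smul_ite, smul_zero, Finset.sum_ite_eq,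
      Finset.mem_univ, if_true]
  rw [hg, mul_zero] at hi
  exact (smul_eq_zero.1 hi.symm).resolve_right (hne i)

lemma card_le_finrank (hp : IsCentralResolution A p) (hne : ∀ i, p i ≠ 0) :
    Fintype.card ι ≤ Module.finrank ℂ (starCenter A) := by
  have hli : LinearIndependent ℂ fun i => (⟨p i, hp.mem_starCenter i⟩ : starCenter A) :=
    .of_comp (starCenter A).toSubalgebra.toSubmodule.subtype (hp.linearIndependent hne)
  have : Module.Finite ℂ (starCenter A) :=
    inferInstanceAs (Module.Finite ℂ (starCenter A).toSubalgebra.toSubmodule)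
  exact hli.fintype_card_le_finrank

end IsCentralResolution

lemma exists_spectral_centralResolution {A : StarSubalgebra ℂ (Matrix m m ℂ)}
    {z : Matrix m m ℂ} (hz : z ∈ starCenter A) (hz' : IsSelfAdjoint z) :
    ∃ (κ : Type) (_ : Fintype κ) (q : κ → Matrix m m ℂ), IsCentralResolution A q ∧
      ∀ j, ∃ c : ℂ, q j * z = c • q j := by
  let indicator (l : spectrum ℝ z) (x : ℝ) : ℝ := if x = l then 1 else 0
  have hcont (f : ℝ → ℝ) : ContinuousOn f (spectrum ℝ z) := z.finite_real_spectrum.continuousOn f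
  have hfin := Fintype.ofFinite (spectrum ℝ z)
  refine ⟨spectrum ℝ z, hfin, fun l => cfc (indicator l) z,
    ⟨CompleteOrthogonalIdempotents.iff_ortho_complete.2 ⟨fun l l' hne => ?_, ?_⟩,
      fun l => cfc_predicate _ _, fun l => cfc_mem_starSubalgebra hz _⟩, fun l => ⟨(l : ℝ), ?_⟩⟩
  · have hzero : (fun x => indicator l x * indicator l' x) = fun _ => 0 := by
      funext x
      have : (l : ℝ) ≠ l' := fun h => hne (Subtype.ext h)
      grind
    exact (cfc_mul _ _ z (hcont _) (hcont _)).symm.trans (hzero ▸ cfc_const_zero ℝ z)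
  · rw [← cfc_sum_univ _ z fun _ => hcont _]
    refine (cfc_congr fun x hx => ?_).trans (cfc_const_one ℝ z)
    rw [Finset.sum_apply, Finset.sum_eq_single ⟨x, hx⟩] <;> grind
  · have hmul : (fun x => indicator l x * x) = fun x => (l : ℝ) * indicator l x := by
      funext x
      grind
    calc cfc (indicator l) z * z = cfc (indicator l) z * cfc (fun x => x) z := by
          rw [cfc_id' ℝ z]
      _ = cfc (fun x => (l : ℝ) * indicator l x) z := by
          rw [← cfc_mul _ _ z (hcont _) (hcont _), hmul]
      _ = ((l : ℝ) : ℂ) • cfc (indicator l) z := by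
          rw [cfc_const_mul _ _ z (hcont _), Complex.coe_smul]

lemma exists_centralResolution_forall_mem {A : StarSubalgebra ℂ (Matrix m m ℂ)}
    (t : Finset (Matrix m m ℂ)) (ht : ∀ z ∈ t, z ∈ starCenter A ∧ IsSelfAdjoint z) :
    ∃ (ι : Type) (_ : Fintype ι) (p : ι → Matrix m m ℂ), IsCentralResolution A p ∧
      ∀ i, ∀ z ∈ t, ∃ c : ℂ, p i * z = c • p i := by
  classical
  induction t using Finset.induction with
  | empty =>
    exact ⟨Unit, inferInstance, fun _ => 1, ⟨CompleteOrthogonalIdempotents.unique_iff.2 rfl,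
      fun _ => .one _, fun _ => one_mem _⟩, by simp⟩
  | insert z t _ ih =>
    obtain ⟨ι, _, p, hp, hpt⟩ := ih fun y hy => ht y (Finset.mem_insert_of_mem hy)
    have hz := ht z (Finset.mem_insert_self z t)
    obtain ⟨κ, _, q, hq, hqz⟩ := exists_spectral_centralResolution hz.1 hz.2
    refine ⟨ι × κ, inferInstance, _, hp.prod hq, fun ⟨i, j⟩ y hy => ?_⟩
    obtain rfl | hy := Finset.mem_insert.1 hy
    · obtain ⟨c, hc⟩ := hqz j
      exact ⟨c, by rw [mul_assoc, hc, mul_smul_comm]⟩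
    · obtain ⟨c, hc⟩ := hpt i y hy
      have hcomm : q j * y = y * q j := mul_comm_of_mem_starCenter (hq.mem_starCenter j)
        (ht y (Finset.mem_insert_of_mem hy)).1
      exact ⟨c, by rw [mul_assoc, hcomm, ← mul_assoc, hc, smul_mul_assoc]⟩

lemma exists_finset_selfAdjoint_span_eq (C : StarSubalgebra ℂ (Matrix m m ℂ)) :
    ∃ t : Finset (Matrix m m ℂ), (∀ z ∈ t, z ∈ C ∧ IsSelfAdjoint z) ∧
      ∀ z ∈ C, z ∈ Submodule.span ℂ (t : Set (Matrix m m ℂ)) := by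
  classical
  have hreal {z : Matrix m m ℂ} (hz : z ∈ C) : (realPart z : Matrix m m ℂ) ∈ C := by
    rw [realPart_apply_coe, ← Complex.coe_smul]
    exact C.smul_mem (add_mem hz (star_mem hz)) _
  have himag {z : Matrix m m ℂ} (hz : z ∈ C) : (imaginaryPart z : Matrix m m ℂ) ∈ C := by
    rw [imaginaryPart_apply_coe, ← Complex.coe_smul]
    exact C.smul_mem (C.smul_mem (sub_mem hz (star_mem hz)) _) _
  obtain ⟨s, hs⟩ := IsNoetherian.noetherian C.toSubalgebra.toSubmodule
  have hsC {z : Matrix m m ℂ} (hz : z ∈ s) : z ∈ C := hs.le (Submodule.subset_span hz)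
  refine ⟨s.image (fun z => (realPart z : Matrix m m ℂ)) ∪
    s.image (fun z => (imaginaryPart z : Matrix m m ℂ)), fun z hz => ?_, fun z hz => ?_⟩
  · simp only [Finset.mem_union, Finset.mem_image] at hz
    obtain ⟨y, hy, rfl⟩ | ⟨y, hy, rfl⟩ := hz
    · exact ⟨hreal (hsC hy), (realPart y).2⟩
    · exact ⟨himag (hsC hy), (imaginaryPart y).2⟩
  · refine Submodule.span_le.2 (fun y hy => ?_) (hs.ge hz)
    rw [← realPart_add_I_smul_imaginaryPart y]
    refine add_mem (Submodule.subset_span ?_) (Submodule.smul_mem _ _ (Submodule.subset_span ?_))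
    · exact Finset.mem_union_left _ (Finset.mem_image_of_mem _ hy)
    · exact Finset.mem_union_right _ (Finset.mem_image_of_mem _ hy)

lemma exists_minimal_centralResolution (A : StarSubalgebra ℂ (Matrix m m ℂ)) :
    ∃ (N : ℕ) (p : Fin N → Matrix m m ℂ), IsCentralResolution A p ∧ (∀ i, p i ≠ 0) ∧
      ∀ i, ∀ z ∈ starCenter A, ∃ c : ℂ, p i * z = c • p i := by
  classical
  obtain ⟨t, ht, hspan⟩ := exists_finset_selfAdjoint_span_eq (starCenter A)
  obtain ⟨ι, _, p, hp, hpt⟩ := exists_centralResolution_forall_mem t ht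
  let e := (Fintype.equivFin {i // p i ≠ 0}).symm
  refine ⟨_, fun j => p (e j), hp.subtype_ne_zero.comp_equiv e, fun j => (e j).2, fun j z hz => ?_⟩
  change ∃ c : ℂ, p (e j) * z = c • p (e j)
  replace hz := hspan z hz
  induction hz using Submodule.span_induction with
  | mem z hz => exact hpt _ z hz
  | zero => exact ⟨0, by simp⟩
  | add y z _ _ hy hz =>
    obtain ⟨⟨c, hc⟩, ⟨c', hc'⟩⟩ := And.intro hy hz
    exact ⟨c + c', by rw [mul_add, hc, hc', add_smul]⟩
  | smul a z _ hz =>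
    obtain ⟨c, hc⟩ := hz
    exact ⟨a * c, by rw [mul_smul_comm, hc, smul_smul]⟩

/-- The dimension of the block `p * A`, for a central projection `p` of `A` and a Hilbert–Schmidt
basis `E` of `A`. -/
def blockDim {ι : Type*} [Fintype ι] (E : ι → Matrix m m ℂ) (p : Matrix m m ℂ) : ℝ :=
  (p * hsTwirl (fun j => (E j)ᴴ) 1).trace.re

section Block

variable {ι : Type*} [Fintype ι] [DecidableEq ι] {A : StarSubalgebra ℂ (Matrix m m ℂ)}
  {E : ι → Matrix m m ℂ} {p : Matrix m m ℂ}

lemma hsTwirl_mem_starCenter (hE : IsHilbertSchmidtBasis A.toSubalgebra.toSubmodule E)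
    {X : Matrix m m ℂ} (hX : X ∈ A) : hsTwirl E X ∈ starCenter A := by
  have hmem (j : ι) : E j ∈ A := hE.mem j
  exact mem_starCenter.2 ⟨sum_mem fun j _ => mul_mem (mul_mem (hmem j) hX) (star_mem (hmem j)),
    fun a ha => commute_hsTwirl hE X ha⟩

lemma posSemidef_mul_hsTwirl_conjTranspose_one
    (hE : IsHilbertSchmidtBasis A.toSubalgebra.toSubmodule E) (hpA : p ∈ A)
    (hp : IsStarProjection p) : (p * hsTwirl (fun j => (E j)ᴴ) 1).PosSemidef :=
  posSemidef_mul_of_commute (Matrix.nonneg_iff_posSemidef.1 hp.nonneg)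
    (posSemidef_hsTwirl _ .one)
    (commute_hsTwirl (hE.conjTranspose fun _ ha => star_mem (S := StarSubalgebra _ _) ha) 1 hpA)

lemma blockDim_pos (hE : IsHilbertSchmidtBasis A.toSubalgebra.toSubmodule E)
    (hp : IsStarProjection p) (hp0 : p ≠ 0) : 0 < blockDim E p := by
  have hE' := hE.conjTranspose fun _ ha => star_mem (S := StarSubalgebra _ _) ha
  have hpsd := Matrix.nonneg_iff_posSemidef.1 hp.nonneg
  have hle := re_trace_mul_le hpsd (sq_le_trace_smul_hsTwirl hE' .one (one_mem A))
  rw [mul_one, mul_one, Matrix.trace_one, Matrix.mul_smul, Matrix.trace_smul, smul_eq_mul,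
    ← Complex.ofReal_natCast, Complex.re_ofReal_mul] at hle
  exact pos_of_mul_pos_right ((re_trace_pos hpsd hp0).trans_le hle) (Nat.cast_nonneg _)

lemma sum_blockDim {S : Submodule ℂ (Matrix m m ℂ)} (hE : IsHilbertSchmidtBasis S E)
    {κ : Type*} [Fintype κ] {q : κ → Matrix m m ℂ} (hq : ∑ i, q i = 1) :
    ∑ i, blockDim E (q i) = Fintype.card ι := by
  have htrace : (hsTwirl (fun j => (E j)ᴴ) 1).trace = Fintype.card ι := by
    simp [hsTwirl, Matrix.trace_sum, hE.orthonormal]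
  simp only [blockDim]
  rw [← Complex.re_sum, ← Matrix.trace_sum, ← Finset.sum_mul, hq, one_mul, htrace,
    Complex.natCast_re]

lemma mul_hsTwirl_eq_smul (hE : IsHilbertSchmidtBasis A.toSubalgebra.toSubmodule E)
    (hp : IsStarProjection p) (hpA : p ∈ starCenter A) (hp0 : p ≠ 0)
    (hmin : ∀ z ∈ starCenter A, ∃ c : ℂ, p * z = c • p) {X : Matrix m m ℂ} (hXA : X ∈ A)
    (hpX : p * X = X) :
    p * hsTwirl E X = (blockDim E p / p.trace.re ^ 2 * X.trace : ℂ) • p := by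
  obtain ⟨hpA', hcomm⟩ := mem_starCenter.1 hpA
  have hpsd := Matrix.nonneg_iff_posSemidef.1 hp.nonneg
  have htr : (p.trace.re : ℂ) ≠ 0 := by exact_mod_cast (re_trace_pos hpsd hp0).ne'
  have hE' := hE.conjTranspose fun _ ha => star_mem (S := StarSubalgebra _ _) ha
  obtain ⟨φ, hφ⟩ := hmin _ (hsTwirl_mem_starCenter hE hXA)
  obtain ⟨ψ, hψ⟩ := hmin _ (hsTwirl_mem_starCenter hE' (one_mem A))
  have hψ' : ψ * p.trace.re = blockDim E p := by
    have hdim := trace_eq_re (posSemidef_mul_hsTwirl_conjTranspose_one hE hpA' hp)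
    rw [blockDim, ← hdim, hψ, Matrix.trace_smul, smul_eq_mul, ← trace_eq_re hpsd]
  have hφ' : φ * p.trace.re = ψ * X.trace := by
    have htwirl := trace_mul_hsTwirl (fun j => hcomm _ (hE.mem j)) X
    rw [hφ, ← mul_assoc, ← commute_hsTwirl hE' 1 hpA', hψ, Matrix.smul_mul, hpX, Matrix.trace_smul,
      Matrix.trace_smul, smul_eq_mul, smul_eq_mul, trace_eq_re hpsd] at htwirl
    exact htwirl
  rw [hφ]
  congr 1
  field_simp
  linear_combination (p.trace.re : ℂ) * hφ' + X.trace * hψ'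

lemma mul_density_le_smul (hE : IsHilbertSchmidtBasis A.toSubalgebra.toSubmodule E)
    (hp : IsStarProjection p) (hpA : p ∈ starCenter A) (hp0 : p ≠ 0)
    (hmin : ∀ z ∈ starCenter A, ∃ c : ℂ, p * z = c • p)
    {σ : Matrix m m ℂ} (hσA : σ ∈ A) (hσ : IsDensity σ) :
    p * σ ≤ (√(blockDim E p) / p.trace.re) • p := by
  obtain ⟨hpA', hcomm⟩ := mem_starCenter.1 hpA
  have hpsd := Matrix.nonneg_iff_posSemidef.1 hp.nonneg
  have hr := re_trace_pos hpsd hp0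
  have hdim := blockDim_pos hE hp hp0
  have hX : (p * σ).PosSemidef := posSemidef_mul_of_commute hpsd hσ.1 (hcomm σ hσA).symm
  have hpX : p * (p * σ) = p * σ := by rw [← mul_assoc, hp.isIdempotentElem.eq]
  have hXp : p * σ * p = p * σ := by rw [mul_assoc, hcomm σ hσA, hpX]
  have hXA : p * σ ∈ A := mul_mem hpA' hσA
  have hτ : (p * σ).trace.re ≤ 1 := by
    have h := re_trace_mul_le hσ.1 hp.le_one
    rwa [hcomm σ hσA, mul_one, hσ.2, Complex.one_re] at h
  have hτ₀ : 0 ≤ (p * σ).trace.re := re_trace_mul_nonneg hpsd hσ.1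
  refine le_smul_of_sq_le_smul hp hX.1.isSelfAdjoint hXp (by positivity) ?_
  calc p * σ * (p * σ) = p * (p * σ * (p * σ)) * p := by
        rw [← mul_assoc p (p * σ), hpX, mul_assoc (p * σ) (p * σ) p, hXp]
    _ ≤ p * ((p * σ).trace • hsTwirl E (p * σ)) * p :=
        hp.isSelfAdjoint.conjugate_le_conjugate (sq_le_trace_smul_hsTwirl hE hX hXA)
    _ = ((p * σ).trace.re ^ 2 * (blockDim E p / p.trace.re ^ 2)) • p := by
        rw [mul_smul_comm, mul_hsTwirl_eq_smul hE hp hpA hp0 hmin hXA hpX, smul_smul,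
          smul_mul_assoc, hp.isIdempotentElem.eq, ← Complex.coe_smul]
        have htr := trace_eq_re hX
        congr 1
        push_cast
        rw [← htr]
        ring
    _ ≤ (1 ^ 2 * (blockDim E p / p.trace.re ^ 2)) • p := by
        have := hp.nonneg
        gcongr
    _ = (√(blockDim E p) / p.trace.re) ^ 2 • p := by
        rw [div_pow, Real.sq_sqrt hdim.le, one_pow, one_mul]

end Block

theorem exists_centralResolution_mul_density_le (A : StarSubalgebra ℂ (Matrix m m ℂ)) :
    ∃ (N : ℕ) (p : Fin N → Matrix m m ℂ) (c : Fin N → ℝ), IsCentralResolution A p ∧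
      (∀ i, 0 < c i) ∧ (∀ i, ∀ σ ∈ A, IsDensity σ → p i * σ ≤ c i • p i) ∧
      ∑ i, c i * (p i).trace.re ≤
        √(Module.finrank ℂ (starCenter A) * Module.finrank ℂ A : ℝ) := by
  obtain ⟨N, p, hp, hp0, hmin⟩ := exists_minimal_centralResolution A
  obtain ⟨E, hE⟩ := exists_isHilbertSchmidtBasis A.toSubalgebra.toSubmodule
  have htr (i : Fin N) := re_trace_pos (hp.posSemidef i) (hp0 i)
  have hdim (i : Fin N) := blockDim_pos hE (hp.isStarProjection i) (hp0 i)
  refine ⟨N, p, fun i => √(blockDim E (p i)) / (p i).trace.re, hp,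
    fun i => div_pos (Real.sqrt_pos.2 (hdim i)) (htr i), fun i σ hσA hσ =>
      mul_density_le_smul hE (hp.isStarProjection i) (hp.mem_starCenter i) (hp0 i) (hmin i) hσA hσ,
    Real.le_sqrt_of_sq_le ?_⟩
  have hcard := hp.card_le_finrank hp0
  have hsum := sum_blockDim hE hp.complete
  rw [Fintype.card_fin] at hcard hsum
  calc (∑ i, √(blockDim E (p i)) / (p i).trace.re * (p i).trace.re) ^ 2
      = (∑ i, √(blockDim E (p i))) ^ 2 := by
        simp only [div_mul_cancel₀ _ (htr _).ne']
    _ ≤ N * ∑ i, √(blockDim E (p i)) ^ 2 := by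
        simpa using sq_sum_le_card_mul_sum_sq (s := Finset.univ)
          (f := fun i => √(blockDim E (p i)))
    _ = N * Module.finrank ℂ A := by
        simp only [Real.sq_sqrt (hdim _).le, hsum]
        rfl
    _ ≤ Module.finrank ℂ (starCenter A) * Module.finrank ℂ A := by gcongr

end CentralResolution

section TensorPower

open scoped Matrix MatrixOrder

variable {k D : Type*} [Fintype k]

lemma tensorFam_apply (A : k → Matrix D D ℂ) (i j : k → D) :
    tensorFam A i j = ∏ a, A a (i a) (j a) := rfl

lemma conjTranspose_tensorFam (A : k → Matrix D D ℂ) :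
    (tensorFam A)ᴴ = tensorFam (fun a => (A a)ᴴ) := by
  ext i j
  simp only [Matrix.conjTranspose_apply, tensorFam_apply, star_prod]

lemma tensorFam_diagonal [DecidableEq D] (a : k → D → ℂ) :
    tensorFam (fun b => Matrix.diagonal (a b)) = Matrix.diagonal (fun i => ∏ b, a b (i b)) := by
  ext i j
  rw [tensorFam_apply]
  obtain rfl | hne := eq_or_ne i j
  · simp only [Matrix.diagonal_apply_eq]
  · obtain ⟨b, hb⟩ := Function.ne_iff.1 hne
    rw [Matrix.diagonal_apply_ne _ hne]
    exact Finset.prod_eq_zero (Finset.mem_univ b) (Matrix.diagonal_apply_ne _ hb)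

lemma tensorFam_one [DecidableEq D] : tensorFam (fun _ : k => (1 : Matrix D D ℂ)) = 1 := by
  simpa using tensorFam_diagonal (k := k) (D := D) (fun _ _ => 1)

lemma tensorFam_smul (c : k → ℂ) (A : k → Matrix D D ℂ) :
    tensorFam (fun b => c b • A b) = (∏ b, c b) • tensorFam A := by
  ext i j
  simp [tensorFam_apply, Finset.prod_mul_distrib]

lemma tensorFam_real_smul (c : k → ℝ) (A : k → Matrix D D ℂ) :
    tensorFam (fun b => c b • A b) = (∏ b, c b) • tensorFam A := by
  simpa only [Complex.coe_smul, ← Complex.ofReal_prod] using tensorFam_smul (fun b => (c b : ℂ)) A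

lemma tensorFam_sum [DecidableEq k] {S : Type*} (T : k → Finset S) (f : k → S → Matrix D D ℂ) :
    tensorFam (fun b => ∑ s ∈ T b, f b s) =
      ∑ s ∈ Fintype.piFinset T, tensorFam (fun b => f b (s b)) := by
  ext i j
  simp only [Matrix.sum_apply, tensorFam_apply]
  rw [Finset.prod_univ_sum]

lemma tensorFam_sum_univ [DecidableEq k] {S : Type*} [Fintype S] (f : k → S → Matrix D D ℂ) :
    tensorFam (fun b => ∑ s, f b s) = ∑ s : k → S, tensorFam (fun b => f b (s b)) := by
  rw [tensorFam_sum, Fintype.piFinset_univ]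

lemma tensorFam_add [DecidableEq k] (A B : k → Matrix D D ℂ) :
    tensorFam (fun b => A b + B b) = ∑ t : Finset k, tensorFam (t.piecewise A B) := by
  ext i j
  simp only [Matrix.sum_apply, tensorFam_apply, Matrix.add_apply]
  rw [Finset.prod_add, Finset.powerset_univ]
  refine Finset.sum_congr rfl fun t _ => ?_
  rw [← Finset.prod_mul_prod_compl t, ← Finset.compl_eq_univ_sdiff]
  congr 1 <;> refine Finset.prod_congr rfl fun b hb => ?_
  · rw [Finset.piecewise_eq_of_mem _ _ _ hb]
  · rw [Finset.piecewise_eq_of_notMem _ _ _ (Finset.mem_compl.1 hb)]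

section Diagonalization

variable [DecidableEq k] [Fintype D]

lemma tensorFam_mul_tensorFam (A B : k → Matrix D D ℂ) :
    tensorFam A * tensorFam B = tensorFam (fun a => A a * B a) := by
  ext i j
  simp only [Matrix.mul_apply, tensorFam_apply]
  rw [Finset.prod_univ_sum, Fintype.piFinset_univ]
  exact Finset.sum_congr rfl fun x _ => Finset.prod_mul_distrib.symm

lemma trace_tensorFam (A : k → Matrix D D ℂ) : (tensorFam A).trace = ∏ a, (A a).trace := by
  simp only [Matrix.trace, Matrix.diag_apply, tensorFam_apply]
  rw [Finset.prod_univ_sum, Fintype.piFinset_univ]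

variable [DecidableEq D]

lemma tensorFam_mem_unitaryGroup {U : k → Matrix D D ℂ}
    (hU : ∀ a, U a ∈ Matrix.unitaryGroup D ℂ) :
    tensorFam U ∈ Matrix.unitaryGroup (k → D) ℂ := by
  rw [Matrix.mem_unitaryGroup_iff, Matrix.star_eq_conjTranspose, conjTranspose_tensorFam,
    tensorFam_mul_tensorFam, ← tensorFam_one]
  exact congrArg tensorFam (funext fun a => Matrix.mem_unitaryGroup_iff.1 (hU a))

lemma tensorFam_specForm (U : k → Matrix D D ℂ) (a : k → D → ℝ) :
    tensorFam (fun b => specForm (U b) (a b)) =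
      specForm (tensorFam U) (fun i => ∏ b, a b (i b)) := by
  simp only [specForm, Matrix.star_eq_conjTranspose, Complex.ofReal_prod]
  rw [conjTranspose_tensorFam, ← tensorFam_diagonal fun b i => (a b i : ℂ),
    tensorFam_mul_tensorFam, tensorFam_mul_tensorFam]

end Diagonalization

lemma posSemidef_tensorFam [Finite D] {A : k → Matrix D D ℂ} (hA : ∀ a, (A a).PosSemidef) :
    (tensorFam A).PosSemidef := by
  classical
  have := Fintype.ofFinite D
  choose U _ a ha h using fun b => exists_eq_specForm_nonneg (hA b)
  rw [funext h, tensorFam_specForm]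
  exact posSemidef_specForm _ fun i => Finset.prod_nonneg fun b _ => ha b _

lemma isDensity_tensorFam [DecidableEq k] [Fintype D] {A : k → Matrix D D ℂ}
    (hA : ∀ a, IsDensity (A a)) : IsDensity (tensorFam A) :=
  ⟨posSemidef_tensorFam fun a => (hA a).1, by
    rw [trace_tensorFam]; exact Finset.prod_eq_one fun a _ => (hA a).2⟩

lemma tensorFam_le_tensorFam [Finite D] {A B : k → Matrix D D ℂ}
    (hA : ∀ a, (A a).PosSemidef) (hAB : ∀ a, A a ≤ B a) : tensorFam A ≤ tensorFam B := by
  classical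
  have hterm (t : Finset k) : 0 ≤ tensorFam (t.piecewise A fun b => B b - A b) := by
    refine (posSemidef_tensorFam fun b => ?_).nonneg
    by_cases hb : b ∈ t
    · rw [Finset.piecewise_eq_of_mem _ _ _ hb]
      exact hA b
    · rw [Finset.piecewise_eq_of_notMem _ _ _ hb]
      exact Matrix.le_iff.1 (hAB b)
  calc tensorFam A = tensorFam (Finset.univ.piecewise A fun b => B b - A b) := by
        rw [Finset.piecewise_univ]
    _ ≤ ∑ t : Finset k, tensorFam (t.piecewise A fun b => B b - A b) :=
        Finset.single_le_sum (fun t _ => hterm t) (Finset.mem_univ _)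
    _ = tensorFam B := by
        rw [← tensorFam_add]
        simp only [add_sub_cancel]

variable [DecidableEq k] [Fintype D] [DecidableEq D]

/-- The power function on the positive reals, extended by zero. -/
def supPow (p u : ℝ) : ℝ := if u ≤ 0 then 0 else u ^ p

lemma supPow_nonneg (p u : ℝ) : 0 ≤ supPow p u := by
  unfold supPow
  split_ifs with h
  · exact le_rfl
  · exact Real.rpow_nonneg (not_le.1 h).le _

lemma supPow_prod {ι : Type*} (s : Finset ι) (p : ℝ) (u : ι → ℝ) (hu : ∀ i ∈ s, 0 ≤ u i) :
    supPow p (∏ i ∈ s, u i) = ∏ i ∈ s, supPow p (u i) := by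
  by_cases h : ∃ i ∈ s, u i = 0
  · obtain ⟨i, hi, hzero⟩ := h
    rw [Finset.prod_eq_zero hi hzero, Finset.prod_eq_zero hi (by simp [supPow, hzero])]
    simp [supPow]
  · push Not at h
    have hpos : ∀ i ∈ s, 0 < u i := fun i hi => (hu i hi).lt_of_ne (h i hi).symm
    have heq : ∀ i ∈ s, supPow p (u i) = u i ^ p := fun i hi => if_neg (hpos i hi).not_ge
    rw [Finset.prod_congr rfl heq, Real.finsetProd_rpow _ _ hu]
    exact if_neg (Finset.prod_pos hpos).not_ge

lemma mpow_specForm {U : Matrix D D ℂ} (hU : U ∈ Matrix.unitaryGroup D ℂ) (a : D → ℝ) (p : ℝ) :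
    mpow (specForm U a) p = specForm U (fun i => supPow p (a i)) :=
  matFun_specForm hU a _

lemma posSemidef_mpow {A : Matrix D D ℂ} (hA : A.PosSemidef) (p : ℝ) : (mpow A p).PosSemidef := by
  obtain ⟨U, hU, a, _, rfl⟩ := exists_eq_specForm_nonneg hA
  rw [mpow_specForm hU]
  exact posSemidef_specForm _ fun i => supPow_nonneg _ _

lemma mpow_tensorFam {A : k → Matrix D D ℂ} (hA : ∀ b, (A b).PosSemidef) (p : ℝ) :
    mpow (tensorFam A) p = tensorFam (fun b => mpow (A b) p) := by
  choose U hU a ha h using fun b => exists_eq_specForm_nonneg (hA b)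
  rw [funext h, tensorFam_specForm, mpow_specForm (tensorFam_mem_unitaryGroup hU)]
  simp only [mpow_specForm (hU _), tensorFam_specForm]
  exact congrArg _ (funext fun i => supPow_prod _ _ _ fun b _ => ha b _)

/-- The action of a permutation of the tensor factors on matrices over `k → D`. -/
def permAut (π : Equiv.Perm k) : Matrix (k → D) (k → D) ℂ ≃ₐ[ℂ] Matrix (k → D) (k → D) ℂ :=
  Matrix.reindexAlgEquiv ℂ ℂ (Equiv.arrowCongr π (Equiv.refl D))

lemma permAut_apply (π : Equiv.Perm k) (M : Matrix (k → D) (k → D) ℂ) (i j : k → D) :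
    permAut π M i j = M (i ∘ π) (j ∘ π) := rfl

lemma permAut_conjTranspose (π : Equiv.Perm k) (M : Matrix (k → D) (k → D) ℂ) :
    permAut π Mᴴ = (permAut π M)ᴴ := rfl

lemma trace_permAut (π : Equiv.Perm k) (M : Matrix (k → D) (k → D) ℂ) :
    (permAut π M).trace = M.trace :=
  Equiv.sum_comp (Equiv.arrowCongr π (Equiv.refl D)).symm fun i => M i i

lemma permAut_tensorFam (π : Equiv.Perm k) (A : k → Matrix D D ℂ) :
    permAut π (tensorFam A) = tensorFam (fun b => A (π.symm b)) := by
  ext i j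
  rw [permAut_apply, tensorFam_apply, tensorFam_apply, ← Equiv.prod_comp π.symm]
  simp only [Function.comp_apply, Equiv.apply_symm_apply]

/-- The matrices over `k → D` invariant under the permutations of the tensor factors that preserve
the labelling `w`. -/
def invAlg {W : Type*} (D : Type*) [Fintype D] [DecidableEq D] (w : k → W) :
    StarSubalgebra ℂ (Matrix (k → D) (k → D) ℂ) where
  carrier := {M | ∀ π : Equiv.Perm k, w ∘ π = w → permAut π M = M}
  mul_mem' ha hb π hπ := by rw [map_mul, ha π hπ, hb π hπ]
  add_mem' ha hb π hπ := by rw [map_add, ha π hπ, hb π hπ]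
  algebraMap_mem' r π _ := AlgEquivClass.commutes _ r
  star_mem' ha π hπ := by rw [Matrix.star_eq_conjTranspose, permAut_conjTranspose, ha π hπ]

lemma mem_invAlg {W : Type*} {w : k → W} {M : Matrix (k → D) (k → D) ℂ} :
    M ∈ invAlg D w ↔ ∀ π : Equiv.Perm k, w ∘ π = w → permAut π M = M := Iff.rfl

lemma apply_comp_of_mem_invAlg {W : Type*} {w : k → W} {M : Matrix (k → D) (k → D) ℂ}
    (hM : M ∈ invAlg D w) {π : Equiv.Perm k} (hπ : w ∘ π = w) (i j : k → D) :
    M (i ∘ π) (j ∘ π) = M i j :=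
  congrFun (congrFun (hM π hπ) i) j

lemma mem_invAlg_of_comp {W V : Type*} {w : k → W} {q : W → V} {M : Matrix (k → D) (k → D) ℂ}
    (hM : M ∈ invAlg D (q ∘ w)) : M ∈ invAlg D w :=
  fun π hπ => hM π (by rw [Function.comp_assoc, hπ])

lemma tensorFam_mem_invAlg {W : Type*} (w : k → W) (A : W → Matrix D D ℂ) :
    tensorFam (fun b => A (w b)) ∈ invAlg D w := by
  intro π hπ
  have hw : w ∘ π.symm = w := (Equiv.comp_symm_eq π w w).2 hπ.symm
  rw [permAut_tensorFam]
  exact congrArg tensorFam (funext fun b => congrArg A (congrFun hw b))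

lemma trace_tensorFam_comp_mul {W : Type*} {w : k → W} {z : Matrix (k → D) (k → D) ℂ}
    (hz : z ∈ invAlg D w) (h : k → Matrix D D ℂ) {f : k → k} (hwf : w ∘ f = w)
    (hf : f.Surjective) : (tensorFam (h ∘ f) * z).trace = (tensorFam h * z).trace := by
  let π := Equiv.ofBijective f (Finite.injective_iff_bijective.1
    (Finite.injective_iff_surjective.2 hf))
  have hπ : permAut π.symm (tensorFam h) = tensorFam (h ∘ f) := permAut_tensorFam _ _
  rw [← trace_permAut π.symm (tensorFam h * z), map_mul, hπ,
    mem_invAlg.1 hz π.symm ((Equiv.comp_symm_eq π w w).2 hwf.symm)]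

end TensorPower

section Counting

lemma card_piAntidiag_le {S : Type*} [DecidableEq S] {s : Finset S} (hs : s.Nonempty) (n : ℕ) :
    (s.piAntidiag n).card ≤ (n + 1) ^ (s.card - 1) := by
  induction hs using Finset.Nonempty.cons_induction generalizing n with
  | singleton a =>
    rw [Finset.card_singleton, Nat.sub_self, pow_zero, Finset.card_le_one]
    intro f hf g hg
    simp only [Finset.mem_piAntidiag, Finset.sum_singleton, Finset.mem_singleton] at hf hg
    funext b
    obtain rfl | hb := eq_or_ne b a
    · rw [hf.1, hg.1]
    · rw [not_imp_comm.1 (hf.2 b) hb, not_imp_comm.1 (hg.2 b) hb]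
  | cons a s ha hs ih =>
    rw [Finset.piAntidiag_cons, Finset.card_disjiUnion]
    refine (Finset.sum_le_card_nsmul _ _ ((n + 1) ^ (s.card - 1)) fun p hp => ?_).trans_eq ?_
    · rw [Finset.card_map]
      exact (ih p.2).trans (Nat.pow_le_pow_left
        (Nat.add_le_add_right (Finset.HasAntidiagonal.antidiagonal.snd_le hp) 1) _)
    · rw [Finset.Nat.card_antidiagonal, smul_eq_mul, ← pow_succ', Finset.card_cons,
        Nat.add_sub_cancel, Nat.sub_add_cancel hs.card_pos]

lemma exists_univ_val_map_eq {β : Type*} (s : Multiset β) :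
    ∃ f : Fin s.card → β, Finset.univ.val.map f = s := by
  induction s using Quot.inductionOn with
  | h l =>
    refine ⟨fun i => l.get i, ?_⟩
    change (((List.finRange l.length).map fun i => l.get i : List β) : Multiset β) = l
    rw [List.map_get_finRange]

lemma exists_mem_piAntidiag_filter_eq {n d : ℕ} (p : Nat.Partition n) (hp : p.parts.card ≤ d) :
    ∃ f ∈ (Finset.univ : Finset (Fin d)).piAntidiag n,
      (Finset.univ.val.map f).filter (· ≠ 0) = p.parts := by
  obtain ⟨f, hf⟩ := exists_univ_val_map_eq (p.parts + Multiset.replicate (d - p.parts.card) 0)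
  have hcard : (p.parts + Multiset.replicate (d - p.parts.card) 0).card = d := by
    rw [Multiset.card_add, Multiset.card_replicate, Nat.add_sub_cancel' hp]
  revert f
  rw [hcard]
  intro f hf
  refine ⟨f, ?_, ?_⟩
  · have hsum := congrArg Multiset.sum hf
    rw [Multiset.sum_add, p.parts_sum, Multiset.sum_replicate, smul_zero, add_zero] at hsum
    exact Finset.mem_piAntidiag.2 ⟨hsum, fun _ _ => Finset.mem_univ _⟩
  · rw [hf, Multiset.filter_add, Multiset.filter_eq_self.2 fun a ha => (p.parts_pos ha).ne',
      Multiset.filter_eq_nil.2 fun a ha => not_not.2 (Multiset.eq_of_mem_replicate ha), add_zero]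

lemma numPartLe_le (n : ℕ) {d : ℕ} (hd : d ≠ 0) : numPartLe n d ≤ (n + 1) ^ (d - 1) := by
  choose f hf hparts using fun p : {p : Nat.Partition n // p.parts.card ≤ d} =>
    exists_mem_piAntidiag_filter_eq p.1 p.2
  have hinj : Function.Injective f := fun p q hpq =>
    Subtype.ext (Nat.Partition.ext (by rw [← hparts, ← hparts, hpq]))
  have : NeZero d := ⟨hd⟩
  calc numPartLe n d ≤ ((Finset.univ : Finset (Fin d)).piAntidiag n).card := by
        rw [numPartLe, Nat.card_eq_fintype_card, ← Finset.card_univ]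
        exact Finset.card_le_card_of_injOn f (fun p _ => hf p) hinj.injOn
    _ ≤ (n + 1) ^ (d - 1) := by
        simpa using card_piAntidiag_le (Finset.univ_nonempty (α := Fin d)) n

/-- The multiset obtained by adding one to a largest element. -/
def raiseMax (s : Multiset ℕ) : Multiset ℕ := (s.sup + 1) ::ₘ s.erase s.sup

lemma cons_sup_erase_sup {s : Multiset ℕ} (hs : s ≠ 0) : s.sup ::ₘ s.erase s.sup = s := by
  have hne : s.toFinset.Nonempty := Multiset.toFinset_nonempty.2 hs
  obtain ⟨a, ha, hsup⟩ := Finset.exists_mem_eq_sup s.toFinset hne id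
  have hsup' : s.toFinset.sup id = s.sup := by
    rw [Finset.sup_def, Multiset.map_id, Multiset.toFinset_val, Multiset.sup_dedup]
  refine Multiset.cons_erase ?_
  rw [← hsup', hsup]
  exact Multiset.mem_toFinset.1 ha

lemma sum_raiseMax (s : Multiset ℕ) : (raiseMax s).sum = s.sum + 1 := by
  obtain rfl | hs := eq_or_ne s 0
  · simp [raiseMax]
  · conv_rhs => rw [← cons_sup_erase_sup hs]
    rw [raiseMax, Multiset.sum_cons, Multiset.sum_cons]
    omega

lemma card_raiseMax_le {s : Multiset ℕ} {d : ℕ} (hd : d ≠ 0) (hs : s.card ≤ d) :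
    (raiseMax s).card ≤ d := by
  obtain rfl | hne := eq_or_ne s 0
  · simpa [raiseMax] using Nat.one_le_iff_ne_zero.2 hd
  · rw [raiseMax, Multiset.card_cons, ← Multiset.card_cons s.sup, cons_sup_erase_sup hne]
    exact hs

lemma sup_raiseMax (s : Multiset ℕ) : (raiseMax s).sup = s.sup + 1 := by
  rw [raiseMax, Multiset.sup_cons, sup_eq_left]
  exact (Multiset.sup_mono (Multiset.erase_subset _ _)).trans (Nat.le_succ _)

lemma raiseMax_injOn : Set.InjOn raiseMax {s | ∀ a ∈ s, 0 < a} := by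
  have hzero {s : Multiset ℕ} (hs : ∀ a ∈ s, 0 < a) : s = 0 ↔ s.sup = 0 := by
    refine ⟨fun h => h ▸ rfl, fun h => Multiset.eq_zero_of_forall_notMem fun a ha => ?_⟩
    exact (hs a ha).ne' (Nat.le_zero.1 (h ▸ Multiset.le_sup ha))
  intro s hs t ht hst
  have hsup : s.sup = t.sup := by
    simpa only [sup_raiseMax, add_left_inj] using congrArg Multiset.sup hst
  obtain rfl | hne := eq_or_ne s 0
  · exact ((hzero ht).2 hsup.symm).symm
  · have herase : s.erase s.sup = t.erase t.sup := by
      rw [raiseMax, raiseMax, hsup, Multiset.cons_inj_right] at hst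
      rw [hsup, hst]
    have hne' : t ≠ 0 := fun h => hne ((hzero hs).2 (hsup.trans ((hzero ht).1 h)))
    rw [← cons_sup_erase_sup hne, herase, hsup, cons_sup_erase_sup hne']

lemma numPartLe_mono {d : ℕ} (hd : d ≠ 0) : Monotone (numPartLe · d) := by
  refine monotone_nat_of_le_succ fun n => Nat.card_le_card_of_injective
    (fun p : {p : Nat.Partition n // p.parts.card ≤ d} =>
      (⟨⟨raiseMax p.1.parts, fun {a} ha => ?_, ?_⟩, card_raiseMax_le hd p.2⟩ :
        {p : Nat.Partition (n + 1) // p.parts.card ≤ d})) fun p q hpq => ?_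
  · obtain rfl | ha := Multiset.mem_cons.1 ha
    · exact Nat.succ_pos _
    · exact p.1.parts_pos (Multiset.mem_of_mem_erase ha)
  · rw [sum_raiseMax, p.1.parts_sum]
  · have hparts : raiseMax p.1.parts = raiseMax q.1.parts :=
      congrArg (fun r => r.1.parts) hpq
    exact Subtype.ext (Nat.Partition.ext
      (raiseMax_injOn (fun _ => p.1.parts_pos) (fun _ => q.1.parts_pos) hparts))

lemma eq_of_filter_ne_zero_eq {s t : Multiset ℕ} (hcard : s.card = t.card)
    (hfilter : s.filter (· ≠ 0) = t.filter (· ≠ 0)) : s = t := by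
  have hzero (u : Multiset ℕ) :
      u.filter (¬ · ≠ 0) = Multiset.replicate (u.card - (u.filter (· ≠ 0)).card) 0 := by
    rw [Multiset.eq_replicate]
    refine ⟨?_, fun b hb => not_not.1 (Multiset.mem_filter.1 hb).2⟩
    have hsplit := congrArg Multiset.card (Multiset.filter_add_not (· ≠ 0) u)
    rw [Multiset.card_add] at hsplit
    omega
  rw [← Multiset.filter_add_not (· ≠ 0) s, ← Multiset.filter_add_not (· ≠ 0) t, hzero, hzero,
    hfilter, hcard]

lemma exists_perm_of_map_eq {α β : Type*} [Fintype α] {f g : α → β}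
    (h : (Finset.univ : Finset α).val.map f = Finset.univ.val.map g) :
    ∃ σ : Equiv.Perm α, f = g ∘ σ := by
  classical
  have hfiber (b : β) : Nonempty ({x // f x = b} ≃ {x // g x = b}) := by
    rw [← Fintype.card_eq, Fintype.card_subtype, Fintype.card_subtype]
    have hcount := congrArg (Multiset.count b) h
    rw [Multiset.count_map, Multiset.count_map] at hcount
    simpa [Finset.card_def, eq_comm] using hcount
  let e (b : β) := (hfiber b).some
  exact ⟨((Equiv.sigmaFiberEquiv f).symm.trans (Equiv.sigmaCongrRight e)).trans
    (Equiv.sigmaFiberEquiv g), funext fun x => (e (f x) ⟨x, rfl⟩).2.symm⟩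

end Counting

section InvariantAlgebra

open scoped Matrix MatrixOrder ComplexStarModule

lemma finrank_le_natCard_of_factorsThrough {V α τ : Type*} [AddCommGroup V] [Module ℂ V]
    [Finite τ] {L : V →ₗ[ℂ] α → ℂ} (hL : Function.Injective L) (key : α → τ)
    (hkey : ∀ v, (L v).FactorsThrough key) : Module.finrank ℂ V ≤ Nat.card τ := by
  have : Fintype τ := Fintype.ofFinite τ
  have hrange : LinearMap.range L ≤ LinearMap.range (LinearMap.funLeft ℂ ℂ key) := by
    rintro _ ⟨v, rfl⟩
    obtain ⟨g, hg⟩ := (Function.factorsThrough_iff _).1 (hkey v)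
    exact ⟨g, hg.symm⟩
  calc Module.finrank ℂ V = Module.finrank ℂ (LinearMap.range L) :=
        (LinearMap.finrank_range_of_inj hL).symm
    _ ≤ Module.finrank ℂ (LinearMap.range (LinearMap.funLeft ℂ ℂ key)) :=
        Submodule.finrank_mono hrange
    _ ≤ Module.finrank ℂ (τ → ℂ) := LinearMap.finrank_range_le _
    _ = Nat.card τ := by rw [Module.finrank_fintype_fun_eq_card, Nat.card_eq_fintype_card]

lemma multichoose_mono {N : ℕ} (hN : N ≠ 0) : Monotone N.multichoose := by
  obtain ⟨N, rfl⟩ := Nat.exists_eq_succ_of_ne_zero hN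
  exact monotone_nat_of_le_succ fun m => by
    rw [Nat.multichoose_succ_succ]
    exact Nat.le_add_left _ _

section StarCenter

variable {k D W : Type*} [Fintype k] [DecidableEq k] [Fintype D] [DecidableEq D]

lemma trace_tensorFam_mul_eq_zero_of_isHermitian {w : k → W} {z : Matrix (k → D) (k → D) ℂ}
    (hz : z ∈ starCenter (invAlg D w)) (hdiag : ∀ i, z i i = 0) {h : W → Matrix D D ℂ}
    (hh : ∀ a, (h a).IsHermitian) : ((tensorFam fun b => h (w b)) * z).trace = 0 := by
  choose U hU hspec _ using fun a => exists_eq_specForm (hh a)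
  have hconj : star (tensorFam fun b => U (w b)) * z * (tensorFam fun b => U (w b)) = z := by
    rw [mul_assoc, ← (mem_starCenter.1 hz).2 _ (tensorFam_mem_invAlg w U), ← mul_assoc,
      Matrix.mem_unitaryGroup_iff'.1 (tensorFam_mem_unitaryGroup fun b => hU (w b)), one_mul]
  rw [funext fun b => hspec (w b), tensorFam_specForm, trace_specForm_mul, hconj]
  simp [hdiag]

lemma apply_perm_of_mem_starCenter_invAlg {w : k → W} {z : Matrix (k → D) (k → D) ℂ}
    (hz : z ∈ starCenter (invAlg D w)) (u : W → Equiv.Perm D) (i : k → D) :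
    z (fun b => u (w b) (i b)) (fun b => u (w b) (i b)) = z i i := by
  let E : Equiv.Perm (k → D) := Equiv.piCongrRight fun b => u (w b)
  have hE : tensorFam (fun b => (u (w b)).permMatrix ℂ) = E.permMatrix ℂ := by
    ext x y
    simp only [tensorFam_apply, PEquiv.toMatrix_apply, Equiv.toPEquiv_apply, Option.mem_some_iff,
      Finset.prod_ite_zero, Finset.prod_const_one, Finset.mem_univ, forall_true_left, funext_iff]
    rfl
  have hcomm := (mem_starCenter.1 hz).2 _ (tensorFam_mem_invAlg w fun a => (u a).permMatrix ℂ)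
  rw [hE, PEquiv.toMatrix_toPEquiv_mul, PEquiv.mul_toMatrix_toPEquiv] at hcomm
  calc z (E i) (E i) = z i (E.symm (E i)) := congrFun (congrFun hcomm i) (E i)
    _ = z i i := by rw [Equiv.symm_apply_apply]

end StarCenter

variable {k D W : Type*} [Fintype k]

section Labelling

variable [DecidableEq W]

lemma exists_perm_comp_eq_of_fiber_map_eq {β : Type*} {w : k → W} {f g : k → β}
    (h : ∀ a, ({b | w b = a} : Finset k).val.map f = ({b | w b = a} : Finset k).val.map g) :
    ∃ π : Equiv.Perm k, w ∘ π = w ∧ f = g ∘ π := by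
  classical
  have hpair : (Finset.univ : Finset k).val.map (fun b => (w b, f b)) =
      Finset.univ.val.map fun b => (w b, g b) := by
    ext ⟨a, c⟩
    have hcount := congrArg (Multiset.count c) (h a)
    simp only [Multiset.count_map, ← Finset.filter_val, ← Finset.card_def,
      Finset.filter_filter] at hcount ⊢
    simpa only [Prod.mk.injEq, eq_comm (a := a)] using hcount
  obtain ⟨π, hπ⟩ := exists_perm_of_map_eq hpair
  exact ⟨π, funext fun b => (congrArg Prod.fst (congrFun hπ b)).symm,
    funext fun b => congrArg Prod.snd (congrFun hπ b)⟩

/-- The partition of the number of positions labelled `a` given by the frequencies of the letters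
of `i` at these positions. -/
def labelPartition [Fintype D] [DecidableEq D] (w : k → W) (i : k → D) (a : W) :
    Nat.Partition ({b | w b = a} : Finset k).card :=
  Nat.Partition.ofSums _
    ((Finset.univ : Finset D).val.map fun c => ({b | w b = a ∧ i b = c} : Finset k).card) <| by
    rw [Finset.card_eq_sum_card_fiberwise (f := i) (t := Finset.univ) fun _ _ => by simp]
    simp only [Finset.filter_filter]
    rfl

lemma card_labelPartition_le [Fintype D] [DecidableEq D] (w : k → W) (i : k → D) (a : W) :
    (labelPartition w i a).parts.card ≤ Fintype.card D :=
  (Multiset.card_le_card (Multiset.filter_le _ _)).trans_eq (by simp)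

variable [DecidableEq k]

lemma sum_surjective_tensorFam (w : k → W) (h : k → Matrix D D ℂ) :
    ∑ f : k → k with w ∘ f = w ∧ f.Surjective, tensorFam (h ∘ f) =
      ∑ R : Finset k, (-1 : ℤ) ^ R.card •
        tensorFam fun b => ∑ c with c ∉ R ∧ w c = w b, h c := by
  have hinf (R : Finset k) : R.inf (fun c => ({f | c ∉ Set.range f} : Finset (k → k))) =
      ({f | ∀ b, f b ∉ R} : Finset (k → k)) := by
    ext f
    simp only [Finset.mem_inf, Finset.mem_filter_univ, Set.mem_range, not_exists]
    exact ⟨fun H b hb => H _ hb b rfl, fun H c hc b hb => H b (hb ▸ hc)⟩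
  have hsurj : Finset.univ.inf (fun c => ({f | c ∉ Set.range f} : Finset (k → k))ᶜ) =
      ({f | f.Surjective} : Finset (k → k)) := by
    ext f
    simp only [Finset.mem_inf, Finset.mem_compl, Finset.mem_filter_univ, not_not, Finset.mem_univ,
      true_imp_iff]
    exact Iff.rfl
  have hincl := Finset.inclusion_exclusion_sum_inf_compl Finset.univ
    (fun c => ({f | c ∉ Set.range f} : Finset (k → k)))
    (fun f => if w ∘ f = w then tensorFam (h ∘ f) else 0)
  rw [hsurj, ← Finset.sum_filter, Finset.filter_filter, Finset.powerset_univ] at hincl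
  simp only [and_comm (a := w ∘ _ = w)]
  rw [hincl]
  refine Finset.sum_congr rfl fun R _ => ?_
  rw [hinf, ← Finset.sum_filter, Finset.filter_filter, tensorFam_sum]
  refine congrArg _ (Finset.sum_congr (Finset.ext fun f => ?_) fun _ _ => rfl)
  simp [Fintype.mem_piFinset, funext_iff, forall_and]

variable [Fintype D] [DecidableEq D]

lemma apply_eq_of_labelPartition_eq {w : k → W} {z : Matrix (k → D) (k → D) ℂ}
    (hz : z ∈ starCenter (invAlg D w)) {i j : k → D}
    (hij : labelPartition w i = labelPartition w j) : z i i = z j j := by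
  have hfreq (a : W) :
      (Finset.univ : Finset D).val.map (fun c => ({b | w b = a ∧ i b = c} : Finset k).card) =
        Finset.univ.val.map fun c => ({b | w b = a ∧ j b = c} : Finset k).card :=
    eq_of_filter_ne_zero_eq (by rw [Multiset.card_map, Multiset.card_map])
      (congrArg Nat.Partition.parts (congrFun hij a))
  choose u hu using fun a => exists_perm_of_map_eq (hfreq a)
  obtain ⟨π, hw, hπ⟩ := exists_perm_comp_eq_of_fiber_map_eq (w := w)
    (f := fun b => u (w b) (i b)) (g := j) fun a => by
      ext c
      have hcount := congrFun (hu a) ((u a).symm c)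
      simp only [Function.comp_apply, Equiv.apply_symm_apply, Equiv.eq_symm_apply] at hcount
      simp only [Multiset.count_map, ← Finset.filter_val, ← Finset.card_def,
        Finset.filter_filter, eq_comm (a := c), ← hcount]
      exact congrArg Finset.card (Finset.filter_congr fun b _ => and_congr_right fun h => by rw [h])
  rw [← apply_perm_of_mem_starCenter_invAlg hz u i, hπ,
    apply_comp_of_mem_invAlg (mem_starCenter.1 hz).1 hw]

end Labelling

variable [DecidableEq k] [Fintype D] [DecidableEq D]

lemma finrank_invAlg_le [Nonempty D] [Fintype W] (w : k → W) :
    Module.finrank ℂ (invAlg D w) ≤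
      (Fintype.card D * Fintype.card D).multichoose (Fintype.card k) ^ Fintype.card W := by
  classical
  let key (ij : (k → D) × (k → D)) (a : W) : Sym (D × D) ({b | w b = a} : Finset k).card :=
    ⟨({b | w b = a} : Finset k).val.map fun b => (ij.1 b, ij.2 b), Multiset.card_map _ _⟩
  let entries : invAlg D w →ₗ[ℂ] (k → D) × (k → D) → ℂ :=
    { toFun := fun M ij => M.1 ij.1 ij.2
      map_add' := fun _ _ => rfl
      map_smul' := fun _ _ => rfl }
  have hinj : Function.Injective entries := fun M N h =>
    Subtype.ext (Matrix.ext fun i j => congrFun h (i, j))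
  have hkey (M : invAlg D w) : (entries M).FactorsThrough key := by
    intro ij ij' h
    obtain ⟨π, hw, hπ⟩ := exists_perm_comp_eq_of_fiber_map_eq (w := w)
      (fun a => congrArg Subtype.val (congrFun h a))
    have hi : ij.1 = ij'.1 ∘ π := funext fun b => congrArg Prod.fst (congrFun hπ b)
    have hj : ij.2 = ij'.2 ∘ π := funext fun b => congrArg Prod.snd (congrFun hπ b)
    change M.1 ij.1 ij.2 = M.1 ij'.1 ij'.2
    rw [hi, hj, apply_comp_of_mem_invAlg M.2 hw]
  refine (finrank_le_natCard_of_factorsThrough hinj key hkey).trans ?_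
  rw [Nat.card_pi, ← Finset.card_univ]
  refine Finset.prod_le_pow_card _ _ _ fun a _ => ?_
  rw [Nat.card_eq_fintype_card, Sym.card_sym_eq_multichoose, Fintype.card_prod]
  exact multichoose_mono (mul_ne_zero Fintype.card_ne_zero Fintype.card_ne_zero)
    (Finset.card_le_univ _)

lemma trace_tensorFam_mul_eq_zero_of_forall_isHermitian {w : k → W}
    {z : Matrix (k → D) (k → D) ℂ} (hz : z ∈ starCenter (invAlg D w)) (hdiag : ∀ i, z i i = 0)
    {h : k → Matrix D D ℂ} (hh : ∀ b, (h b).IsHermitian) : (tensorFam h * z).trace = 0 := by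
  classical
  have hpolar := congrArg (fun M => (M * z).trace) (sum_surjective_tensorFam w h)
  simp only [Finset.sum_mul, Matrix.trace_sum, smul_mul_assoc, Matrix.trace_smul] at hpolar
  have hright (R : Finset k) :
      ((tensorFam fun b => ∑ c with c ∉ R ∧ w c = w b, h c) * z).trace = 0 :=
    trace_tensorFam_mul_eq_zero_of_isHermitian hz hdiag
      (h := fun a => ∑ c with c ∉ R ∧ w c = a, h c) fun a => isSelfAdjoint_sum _ fun c _ => hh c
  simp only [hright, smul_zero, Finset.sum_const_zero] at hpolar
  rw [Finset.sum_congr rfl fun f hf => trace_tensorFam_comp_mul (mem_starCenter.1 hz).1 h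
    (Finset.mem_filter.1 hf).2.1 (Finset.mem_filter.1 hf).2.2, Finset.sum_const,
    smul_eq_zero] at hpolar
  refine hpolar.resolve_left (Finset.card_ne_zero_of_mem (a := id) ?_)
  simp [Function.surjective_id]

lemma eq_zero_of_mem_starCenter_invAlg {w : k → W} {z : Matrix (k → D) (k → D) ℂ}
    (hz : z ∈ starCenter (invAlg D w)) (hdiag : ∀ i, z i i = 0) : z = 0 := by
  have htrace (M : k → Matrix D D ℂ) : (tensorFam M * z).trace = 0 := by
    let coeff (s : Bool) : ℂ := if s then 1 else Complex.I
    let part (b : k) (s : Bool) : Matrix D D ℂ := if s then ℜ (M b) else ℑ (M b)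
    have hpart (b : k) (s : Bool) : (part b s).IsHermitian := by
      cases s
      · exact (ℑ (M b)).2
      · exact (ℜ (M b)).2
    have hM : M = fun b => ∑ s, coeff s • part b s := funext fun b => by
      simpa [coeff, part] using (realPart_add_I_smul_imaginaryPart (M b)).symm
    rw [hM, tensorFam_sum_univ, Finset.sum_mul, Matrix.trace_sum]
    refine Finset.sum_eq_zero fun s _ => ?_
    rw [tensorFam_smul (fun b => coeff (s b)) (fun b => part b (s b)), smul_mul_assoc,
      Matrix.trace_smul,
      trace_tensorFam_mul_eq_zero_of_forall_isHermitian hz hdiag fun b => hpart b (s b), smul_zero]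
  ext i j
  have hsingle : tensorFam (fun b => Matrix.single (j b) (i b) (1 : ℂ)) = Matrix.single j i 1 := by
    ext x y
    simp only [tensorFam_apply, Matrix.single_apply, Finset.prod_ite_zero, Finset.prod_const_one,
      Finset.mem_univ, forall_true_left, forall_and, funext_iff]
  have hentry := htrace fun b => Matrix.single (j b) (i b) 1
  rw [hsingle, Matrix.trace_single_mul] at hentry
  simpa using hentry

lemma finrank_starCenter_invAlg_le [Nonempty D] [Fintype W] (w : k → W) :
    Module.finrank ℂ (starCenter (invAlg D w)) ≤
      numPartLe (Fintype.card k) (Fintype.card D) ^ Fintype.card W := by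
  classical
  let key (i : k → D) (a : W) :
      {p : Nat.Partition ({b | w b = a} : Finset k).card // p.parts.card ≤ Fintype.card D} :=
    ⟨labelPartition w i a, card_labelPartition_le w i a⟩
  let diagonal : starCenter (invAlg D w) →ₗ[ℂ] (k → D) → ℂ :=
    { toFun := fun z i => z.1 i i
      map_add' := fun _ _ => rfl
      map_smul' := fun _ _ => rfl }
  have hinj : Function.Injective diagonal := (injective_iff_map_eq_zero diagonal).2 fun z h =>
    Subtype.ext (eq_zero_of_mem_starCenter_invAlg z.2 fun i => congrFun h i)
  have hkey (z : starCenter (invAlg D w)) : (diagonal z).FactorsThrough key := fun i j h =>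
    apply_eq_of_labelPartition_eq z.2 (funext fun a => congrArg Subtype.val (congrFun h a))
  refine (finrank_le_natCard_of_factorsThrough hinj key hkey).trans ?_
  rw [Nat.card_pi, ← Finset.card_univ]
  exact Finset.prod_le_pow_card _ _ _ fun a _ =>
    numPartLe_mono Fintype.card_ne_zero (Finset.card_le_univ _)

/-- The bound `√((Λ(n, d) · C(d² + n - 1, n)) ^ c)` for the volume of a universal state on `n`
systems of dimension `d` with positions labelled by `c` letters. -/
def universalVolume (n d c : ℕ) : ℝ :=
  √((numPartLe n d * (d * d).multichoose n : ℕ) ^ c)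

theorem exists_centralResolution_invAlg [Nonempty D] [Fintype W] (w : k → W) :
    ∃ (N : ℕ) (p : Fin N → Matrix (k → D) (k → D) ℂ) (c : Fin N → ℝ),
      IsCentralResolution (invAlg D w) p ∧ (∀ i, 0 < c i) ∧
      (∀ i, ∀ σ ∈ invAlg D w, IsDensity σ → p i * σ ≤ c i • p i) ∧
      ∑ i, c i * (p i).trace.re ≤
        universalVolume (Fintype.card k) (Fintype.card D) (Fintype.card W) := by
  obtain ⟨N, p, c, hp, hc, hσ, hsum⟩ := exists_centralResolution_mul_density_le (invAlg D w)
  refine ⟨N, p, c, hp, hc, hσ, hsum.trans (Real.sqrt_le_sqrt ?_)⟩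
  rw [Nat.cast_mul, mul_pow]
  gcongr
  · exact_mod_cast finrank_starCenter_invAlg_le w
  · exact_mod_cast finrank_invAlg_le w

end InvariantAlgebra

section TypeCounting

open scoped Matrix MatrixOrder Nat

lemma factorial_mul_pow_le_factorial_mul_pow_self (m k : ℕ) : m ! * m ^ k ≤ k ! * m ^ m := by
  obtain h | h := le_total m k
  · calc m ! * m ^ k = (m ! * m ^ (k - m)) * m ^ m := by
          rw [mul_assoc, ← pow_add, Nat.sub_add_cancel h]
      _ ≤ k ! * m ^ m := Nat.mul_le_mul_right _ (Nat.factorial_mul_pow_sub_le_factorial h)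
  · have hdesc := Nat.factorial_mul_descFactorial (Nat.sub_le m k)
    rw [Nat.sub_sub_self h] at hdesc
    calc m ! * m ^ k = k ! * (m.descFactorial (m - k) * m ^ k) := by rw [← hdesc, mul_assoc]
      _ ≤ k ! * (m ^ (m - k) * m ^ k) := by
          gcongr
          exact Nat.descFactorial_le_pow m (m - k)
      _ = k ! * m ^ m := by rw [← pow_add, Nat.sub_add_cancel h]

-- Under the distribution `m / n`, the type class of `m` is the most likely one.
lemma prod_factorial_mul_pow_le {S : Type*} [Fintype S] [Nonempty S] {n : ℕ} {m : S → ℕ}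
    (hm : ∑ a, m a = n) :
    (∏ a, (m a)!) * n ^ n ≤ n ! * ((n + 1) ^ (Fintype.card S - 1) * ∏ a, m a ^ m a) := by
  classical
  have hterm : ∀ f ∈ (Finset.univ : Finset S).piAntidiag n,
      (∏ a, (m a)!) * (Nat.multinomial Finset.univ f * ∏ a, m a ^ f a) ≤
        n ! * ∏ a, m a ^ m a := by
    intro f hf
    have hspec := Nat.multinomial_spec (Finset.univ : Finset S) f
    rw [(Finset.mem_piAntidiag.1 hf).1] at hspec
    calc (∏ a, (m a)!) * (Nat.multinomial Finset.univ f * ∏ a, m a ^ f a)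
        = Nat.multinomial Finset.univ f * ∏ a, ((m a)! * m a ^ f a) := by
          rw [Finset.prod_mul_distrib]; ring
      _ ≤ Nat.multinomial Finset.univ f * ∏ a, ((f a)! * m a ^ m a) :=
          Nat.mul_le_mul_left _ (Finset.prod_le_prod' fun a _ =>
            factorial_mul_pow_le_factorial_mul_pow_self _ _)
      _ = n ! * ∏ a, m a ^ m a := by rw [Finset.prod_mul_distrib, ← hspec]; ring
  calc (∏ a, (m a)!) * n ^ n
      = ∑ f ∈ (Finset.univ : Finset S).piAntidiag n,
          (∏ a, (m a)!) * (Nat.multinomial Finset.univ f * ∏ a, m a ^ f a) := by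
        rw [← Finset.mul_sum]
        conv_lhs => rw [← hm]
        rw [Finset.sum_pow_eq_sum_piAntidiag, hm]
        rfl
    _ ≤ (Finset.univ.piAntidiag n).card • (n ! * ∏ a, m a ^ m a) :=
        Finset.sum_le_card_nsmul _ _ _ hterm
    _ ≤ (n + 1) ^ (Fintype.card S - 1) * (n ! * ∏ a, m a ^ m a) :=
        Nat.mul_le_mul_right _ (card_piAntidiag_le Finset.univ_nonempty n)
    _ = n ! * ((n + 1) ^ (Fintype.card S - 1) * ∏ a, m a ^ m a) := by ring

variable {S k : Type*} [DecidableEq S] [Fintype k]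

/-- The empirical distribution (type) of a finite word `s`. -/
def empiricalDist (s : k → S) (a : S) : ℝ := ({b | s b = a} : Finset k).card / Fintype.card k

lemma empiricalDist_nonneg (s : k → S) (a : S) : 0 ≤ empiricalDist s a := by
  unfold empiricalDist
  positivity

variable [Fintype S]

lemma sum_card_fiber (s : k → S) : ∑ a, ({b | s b = a} : Finset k).card = Fintype.card k :=
  (Finset.card_eq_sum_card_fiberwise fun _ _ => by simp).symm

lemma sum_empiricalDist [Nonempty k] (s : k → S) : ∑ a, empiricalDist s a = 1 := by
  unfold empiricalDist
  rw [← Finset.sum_div, ← Nat.cast_sum, sum_card_fiber, div_self]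
  exact_mod_cast Fintype.card_ne_zero

lemma prod_empiricalDist (s : k → S) :
    ∏ b, empiricalDist s (s b) = (∏ a, ({b | s b = a} : Finset k).card ^
      ({b | s b = a} : Finset k).card : ℕ) / (Fintype.card k : ℝ) ^ Fintype.card k := by
  have hfiber (a : S) : ∏ b with s b = a, empiricalDist s (s b) =
      empiricalDist s a ^ ({b | s b = a} : Finset k).card := by
    rw [Finset.prod_congr rfl fun b hb => by rw [(Finset.mem_filter.1 hb).2], Finset.prod_const]
  rw [← Finset.prod_fiberwise Finset.univ s, Finset.prod_congr rfl fun a _ => hfiber a]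
  simp only [empiricalDist, div_pow]
  rw [Finset.prod_div_distrib, Finset.prod_pow_eq_pow_sum, sum_card_fiber]
  push_cast
  rfl

variable [DecidableEq k]

lemma card_perm_comp_eq (s : k → S) (π₀ : Equiv.Perm k) :
    ({π | s ∘ π = s ∘ π₀} : Finset (Equiv.Perm k)).card =
      ∏ a, (({b | s b = a} : Finset k).card)! := by
  have hstab := DomMulAct.stabilizer_card s
  simp only [Fintype.card_subtype] at hstab
  rw [← hstab]
  refine Finset.card_equiv (Equiv.mulRight π₀⁻¹) fun π => ?_
  simp only [Finset.mem_filter_univ, Equiv.coe_mulRight, Equiv.Perm.coe_mul, Equiv.Perm.inv_def]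
  rw [← Function.comp_assoc, Equiv.comp_symm_eq]

lemma card_perm_comp_eq_le [Nonempty k] [Nonempty S] (s f : k → S) :
    (({π | s ∘ π = f} : Finset (Equiv.Perm k)).card : ℝ) ≤ (Fintype.card k)! *
      (((Fintype.card k : ℝ) + 1) ^ (Fintype.card S - 1) * ∏ b, empiricalDist s (f b)) := by
  by_cases h : ∃ π₀ : Equiv.Perm k, s ∘ π₀ = f
  · obtain ⟨π₀, rfl⟩ := h
    have hprod : ∏ b, empiricalDist s ((s ∘ π₀) b) = ∏ b, empiricalDist s (s b) :=
      Equiv.prod_comp π₀ fun b => empiricalDist s (s b)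
    have hpos : (0 : ℝ) < (Fintype.card k : ℝ) ^ Fintype.card k :=
      pow_pos (Nat.cast_pos.2 Fintype.card_pos) _
    rw [card_perm_comp_eq, hprod, prod_empiricalDist, ← mul_div_assoc, ← mul_div_assoc,
      le_div_iff₀ hpos]
    exact_mod_cast prod_factorial_mul_pow_le (sum_card_fiber s)
  · rw [Finset.filter_false_of_mem fun π _ hπ => h ⟨π, hπ⟩, Finset.card_empty, Nat.cast_zero]
    have hprod : 0 ≤ ∏ b, empiricalDist s (f b) :=
      Finset.prod_nonneg fun b _ => empiricalDist_nonneg s (f b)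
    positivity

/-- The average of `f` over all permutations of `k`. -/
def permAvg {E : Type*} [AddCommGroup E] [Module ℝ E] (f : Equiv.Perm k → E) : E :=
  ((Fintype.card k)! : ℝ)⁻¹ • ∑ π, f π

lemma permAvg_const {E : Type*} [AddCommGroup E] [Module ℝ E] (c : E) :
    permAvg (fun _ : Equiv.Perm k => c) = c := by
  rw [permAvg, Finset.sum_const, Finset.card_univ, Fintype.card_perm, ← Nat.cast_smul_eq_nsmul ℝ,
    inv_smul_smul₀ (Nat.cast_ne_zero.2 (Nat.factorial_ne_zero _))]

lemma map_permAvg {E F : Type*} [AddCommGroup E] [Module ℝ E] [AddCommGroup F] [Module ℝ F]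
    (L : E →ₗ[ℝ] F) (f : Equiv.Perm k → E) : L (permAvg f) = permAvg fun π => L (f π) := by
  rw [permAvg, map_smul, map_sum, permAvg]

lemma permAvg_tensorFam_le [Nonempty k] [Nonempty S] {D : Type*} [Finite D] (s : k → S)
    {R : k → S → Matrix D D ℂ} (hR : ∀ b a, (R b a).PosSemidef) :
    permAvg (fun π : Equiv.Perm k => tensorFam fun b => R b (s (π b))) ≤
      ((Fintype.card k : ℝ) + 1) ^ (Fintype.card S - 1) •
        tensorFam fun b => ∑ a, empiricalDist s a • R b a := by
  have := Fintype.ofFinite D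
  have hsum : ∑ π : Equiv.Perm k, tensorFam (fun b => R b (s (π b))) =
      ∑ f : k → S, (({π | s ∘ π = f} : Finset (Equiv.Perm k)).card : ℝ) •
        tensorFam fun b => R b (f b) := by
    rw [← Finset.sum_fiberwise Finset.univ fun π : Equiv.Perm k => s ∘ π]
    refine Finset.sum_congr rfl fun f _ => ?_
    rw [Nat.cast_smul_eq_nsmul]
    exact Finset.sum_eq_card_nsmul fun π hπ => by rw [← (Finset.mem_filter.1 hπ).2]; rfl
  have hfact : (0 : ℝ) < (Fintype.card k)! := Nat.cast_pos.2 (Nat.factorial_pos _)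
  rw [permAvg, hsum, tensorFam_sum_univ, Finset.smul_sum, Finset.smul_sum]
  refine Finset.sum_le_sum fun f _ => ?_
  rw [tensorFam_real_smul (fun b => empiricalDist s (f b)), smul_smul, smul_smul]
  refine smul_le_smul_of_nonneg_right ?_ (posSemidef_tensorFam fun b => hR b (f b)).nonneg
  rw [inv_mul_le_iff₀ hfact]
  exact card_perm_comp_eq_le s f

end TypeCounting

section TraceInequalities

open scoped MatrixOrder

variable {m : Type*} [Fintype m]

/-- The `i`-th diagonal entry of `A` in the basis given by the columns of `U`. -/
def diagIn (U A : Matrix m m ℂ) (i : m) : ℝ := ((star U * A * U) i i).re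

lemma diagIn_mono {A B : Matrix m m ℂ} (h : A ≤ B) (U : Matrix m m ℂ) (i : m) :
    diagIn U A i ≤ diagIn U B i := by
  have hdiag := ((Matrix.le_iff.1 h).conjTranspose_mul_mul_same U).diag_nonneg (i := i)
  rw [mul_sub, sub_mul, Matrix.sub_apply, sub_nonneg] at hdiag
  exact (Complex.le_def.1 hdiag).1

lemma diagIn_nonneg {A : Matrix m m ℂ} (hA : A.PosSemidef) (U : Matrix m m ℂ) (i : m) :
    0 ≤ diagIn U A i := by
  simpa [diagIn] using diagIn_mono hA.nonneg U i

lemma diagIn_smul (U A : Matrix m m ℂ) (c : ℝ) (i : m) :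
    diagIn U (c • A) i = c * diagIn U A i := by
  rw [diagIn, mul_smul_comm, smul_mul_assoc, Matrix.smul_apply, Complex.smul_re, smul_eq_mul,
    diagIn]

variable [DecidableEq m]

lemma diagIn_mul_specForm {U : Matrix m m ℂ} (hU : U ∈ Matrix.unitaryGroup m ℂ)
    (A : Matrix m m ℂ) (a : m → ℝ) (i : m) :
    diagIn U (A * specForm U a) i = a i * diagIn U A i := by
  have hassoc : star U * (A * specForm U a) * U =
      star U * A * U * Matrix.diagonal fun i => (a i : ℂ) := by
    simp only [specForm, mul_assoc, Matrix.mem_unitaryGroup_iff'.1 hU, mul_one]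
  rw [diagIn, hassoc, Matrix.mul_diagonal, Complex.re_mul_ofReal, mul_comm, diagIn]

lemma sum_diagIn {U : Matrix m m ℂ} (hU : U ∈ Matrix.unitaryGroup m ℂ) (A : Matrix m m ℂ) :
    ∑ i, diagIn U A i = A.trace.re := by
  simp only [diagIn, ← Complex.re_sum]
  change (star U * A * U).trace.re = A.trace.re
  rw [Matrix.trace_mul_cycle, Matrix.mem_unitaryGroup_iff.1 hU, one_mul]

lemma sum_diagIn_of_sum_eq_one {ι : Type*} [Fintype ι] {q : ι → Matrix m m ℂ}
    (hq : ∑ j, q j = 1) {U : Matrix m m ℂ} (hU : U ∈ Matrix.unitaryGroup m ℂ) (i : m) :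
    ∑ j, diagIn U (q j) i = 1 := by
  simp only [diagIn, ← Complex.re_sum]
  rw [← Matrix.sum_apply, ← Finset.sum_mul, ← Finset.mul_sum, hq, mul_one,
    Matrix.mem_unitaryGroup_iff'.1 hU, Matrix.one_apply_eq, Complex.one_re]

lemma re_trace_mul_specForm {U : Matrix m m ℂ} (hU : U ∈ Matrix.unitaryGroup m ℂ)
    (A : Matrix m m ℂ) (a : m → ℝ) :
    (A * specForm U a).trace.re = ∑ i, a i * diagIn U A i := by
  simp only [← sum_diagIn hU, diagIn_mul_specForm hU]

lemma rpow_neg_mul_re_trace_mul_le {N p ω : Matrix m m ℂ} (hN : N.PosSemidef) (hNp : N ≤ p)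
    (hω : ω.PosSemidef) {c : ℝ} (hc : p * ω ≤ c • p) {t : ℝ} (ht : 0 ≤ t) :
    c ^ (-t) * (N * ω).trace.re ≤ (N * mpow ω (1 - t)).trace.re := by
  obtain ⟨U, hU, a, ha, rfl⟩ := exists_eq_specForm_nonneg hω
  rw [mpow_specForm hU, re_trace_mul_specForm hU, re_trace_mul_specForm hU, Finset.mul_sum]
  refine Finset.sum_le_sum fun i _ => ?_
  have hN0 := diagIn_nonneg hN U i
  obtain hN0 | hNpos := hN0.eq_or_lt
  · simp [← hN0]
  have hac : a i ≤ c := by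
    have := diagIn_mono hc U i
    rw [diagIn_mul_specForm hU, diagIn_smul] at this
    exact le_of_mul_le_mul_right this (hNpos.trans_le (diagIn_mono hNp U i))
  rw [← mul_assoc]
  refine mul_le_mul_of_nonneg_right ?_ hN0
  obtain ha0 | hapos := (ha i).eq_or_lt
  · simp [← ha0, supPow]
  · calc c ^ (-t) * a i ≤ a i ^ (-t) * a i :=
          mul_le_mul_of_nonneg_right
            (Real.rpow_le_rpow_of_nonpos hapos hac (neg_nonpos.2 ht)) hapos.le
      _ = supPow (1 - t) (a i) := by
          rw [supPow, if_neg hapos.not_ge, sub_eq_neg_add, Real.rpow_add hapos, Real.rpow_one]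

lemma sum_rpow_mul_rpow_le {ι : Type*} (s : Finset ι) {f g : ι → ℝ} (hf : ∀ i ∈ s, 0 ≤ f i)
    (hg : ∀ i ∈ s, 0 ≤ g i) {t : ℝ} (ht0 : 0 < t) (ht1 : t < 1) :
    ∑ i ∈ s, f i ^ (1 - t) * g i ^ t ≤ (∑ i ∈ s, f i) ^ (1 - t) * (∑ i ∈ s, g i) ^ t := by
  have ht1' : 0 < 1 - t := sub_pos.2 ht1
  have hpq : (1 - t)⁻¹.HolderConjugate t⁻¹ := by
    rw [Real.holderConjugate_iff]
    exact ⟨(one_lt_inv₀ ht1').2 (by linarith), by rw [inv_inv, inv_inv]; ring⟩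
  have hholder := Real.inner_le_Lp_mul_Lq_of_nonneg s hpq
    (fun i hi => Real.rpow_nonneg (hf i hi) (1 - t)) (fun i hi => Real.rpow_nonneg (hg i hi) t)
  rw [one_div, one_div, inv_inv, inv_inv] at hholder
  rwa [Finset.sum_congr rfl fun i hi => Real.rpow_rpow_inv (hf i hi) ht1'.ne',
    Finset.sum_congr rfl fun i hi => Real.rpow_rpow_inv (hg i hi) ht0.ne'] at hholder

lemma supPow_eq_rpow {p u : ℝ} (hp : p ≠ 0) (hu : 0 ≤ u) : supPow p u = u ^ p := by
  unfold supPow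
  split_ifs with h
  · rw [le_antisymm h hu, Real.zero_rpow hp]
  · rfl

lemma sum_rpow_mul_re_trace_mul_le {ι : Type*} [Fintype ι] {q : ι → Matrix m m ℂ}
    (hq : ∀ j, (q j).PosSemidef) (hq1 : ∑ j, q j = 1) {c : ι → ℝ} (hc : ∀ j, 0 ≤ c j)
    {K : Matrix m m ℂ} (hK : K.PosSemidef) {t : ℝ} (ht0 : 0 < t) (ht1 : t < 1) :
    ∑ j, c j ^ t * (q j * K).trace.re ≤
      (mpow K (1 / (1 - t))).trace.re ^ (1 - t) * (∑ j, c j * (q j).trace.re) ^ t := by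
  obtain ⟨U, hU, a, ha, rfl⟩ := exists_eq_specForm_nonneg hK
  have ht1' : 0 < 1 - t := sub_pos.2 ht1
  have hμ (j : ι) (i : m) := diagIn_nonneg (hq j) U i
  have ha' (i : m) : 0 ≤ a i ^ (1 - t)⁻¹ := Real.rpow_nonneg (ha i) _
  have hpow : (mpow (specForm U a) (1 / (1 - t))).trace.re =
      ∑ x : ι × m, a x.2 ^ (1 - t)⁻¹ * diagIn U (q x.1) x.2 := by
    rw [mpow_specForm hU, trace_specForm hU, Complex.ofReal_re, Fintype.sum_prod_type_right]
    refine Finset.sum_congr rfl fun i _ => ?_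
    dsimp only
    rw [← Finset.mul_sum, sum_diagIn_of_sum_eq_one hq1 hU, mul_one, one_div,
      supPow_eq_rpow (inv_ne_zero ht1'.ne') (ha i)]
  have hvol : ∑ j, c j * (q j).trace.re = ∑ x : ι × m, c x.1 * diagIn U (q x.1) x.2 := by
    rw [Fintype.sum_prod_type]
    simp only [← sum_diagIn hU, Finset.mul_sum]
  have hterm (j : ι) (i : m) : c j ^ t * (a i * diagIn U (q j) i) =
      (a i ^ (1 - t)⁻¹ * diagIn U (q j) i) ^ (1 - t) * (c j * diagIn U (q j) i) ^ t := by
    rw [Real.mul_rpow (ha' i) (hμ j i), Real.mul_rpow (hc j) (hμ j i),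
      Real.rpow_inv_rpow (ha i) ht1'.ne', mul_mul_mul_comm,
      ← Real.rpow_add_of_nonneg (hμ j i) ht1'.le ht0.le, sub_add_cancel, Real.rpow_one]
    ring
  rw [hpow, hvol]
  refine (le_of_eq ?_).trans (sum_rpow_mul_rpow_le _ (fun x _ => mul_nonneg (ha' _) (hμ _ _))
    (fun x _ => mul_nonneg (hc _) (hμ _ _)) ht0 ht1)
  rw [Fintype.sum_prod_type]
  simp only [re_trace_mul_specForm hU, Finset.mul_sum, hterm]

end TraceInequalities

section Symmetrization

open scoped MatrixOrder

variable {k D W : Type*} [Fintype k] [DecidableEq k] [Fintype D] [DecidableEq D]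

/-- The symmetrization of a family of matrices on `D^k` indexed by words `w : k → W`, under
simultaneous permutation of the tensor factors and of the letters. -/
def symmetrize (F : (k → W) → Matrix (k → D) (k → D) ℂ) (w : k → W) :
    Matrix (k → D) (k → D) ℂ :=
  permAvg fun π : Equiv.Perm k => permAut π (F (w ∘ π))

lemma posSemidef_permAut {M : Matrix (k → D) (k → D) ℂ} (hM : M.PosSemidef) (π : Equiv.Perm k) :
    (permAut π M).PosSemidef := hM.submatrix _

lemma posSemidef_symmetrize {F : (k → W) → Matrix (k → D) (k → D) ℂ}
    (hF : ∀ w, (F w).PosSemidef) (w : k → W) : (symmetrize F w).PosSemidef := by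
  have hsum : (∑ π : Equiv.Perm k, permAut π (F (w ∘ π))).PosSemidef :=
    Matrix.posSemidef_sum _ fun π _ => posSemidef_permAut (hF _) π
  exact hsum.smul (inv_nonneg.2 (Nat.cast_nonneg (α := ℝ) _))

lemma trace_symmetrize (F : (k → W) → Matrix (k → D) (k → D) ℂ) (w : k → W) :
    (symmetrize F w).trace = permAvg fun π : Equiv.Perm k => (F (w ∘ π)).trace :=
  (map_permAvg (Matrix.traceLinearMap (k → D) ℝ ℂ) _).trans
    (congrArg permAvg (funext fun π => trace_permAut π _))

lemma isDensity_symmetrize {F : (k → W) → Matrix (k → D) (k → D) ℂ}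
    (hF : ∀ w, IsDensity (F w)) (w : k → W) : IsDensity (symmetrize F w) :=
  ⟨posSemidef_symmetrize (fun w => (hF w).1) w, by
    simp only [trace_symmetrize, (hF _).2, permAvg_const]⟩

lemma symmetrize_mem_invAlg (F : (k → W) → Matrix (k → D) (k → D) ℂ) (w : k → W) :
    symmetrize F w ∈ invAlg D w := by
  intro π hπ
  have hmap := map_permAvg ((permAut (D := D) π).toLinearMap.restrictScalars ℝ)
    fun τ : Equiv.Perm k => permAut τ (F (w ∘ τ))
  refine hmap.trans (congrArg (((Fintype.card k).factorial : ℝ)⁻¹ • ·) ?_)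
  rw [← Equiv.sum_comp (Equiv.mulLeft π) fun τ => permAut τ (F (w ∘ τ))]
  refine Finset.sum_congr rfl fun τ _ => ?_
  rw [Equiv.coe_mulLeft, Equiv.Perm.coe_mul, ← Function.comp_assoc, hπ]
  rfl

lemma trace_permAut_mul (π : Equiv.Perm k) (M N : Matrix (k → D) (k → D) ℂ) :
    (permAut π M * N).trace = (M * permAut π⁻¹ N).trace := by
  have hN : permAut π (permAut π⁻¹ N) = N := (permAut π).apply_symm_apply N
  rw [← trace_permAut π (M * permAut π⁻¹ N), map_mul, hN]

lemma re_trace_symmetrize_mul (F : (k → W) → Matrix (k → D) (k → D) ℂ) (w : k → W)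
    (G : Matrix (k → D) (k → D) ℂ) :
    (symmetrize F w * G).trace.re =
      permAvg fun π : Equiv.Perm k => (permAut π (F (w ∘ π)) * G).trace.re :=
  map_permAvg (Complex.reLm ∘ₗ Matrix.traceLinearMap (k → D) ℝ ℂ ∘ₗ LinearMap.mulRight ℝ G) _

lemma sum_mul_re_trace_symmetrize_mul [Fintype W] {P : (k → W) → ℝ}
    (hP : ∀ w (π : Equiv.Perm k), P (w ∘ π) = P w)
    (F G : (k → W) → Matrix (k → D) (k → D) ℂ) :
    ∑ w, P w * (symmetrize F w * G w).trace.re = ∑ w, P w * (F w * symmetrize G w).trace.re := by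
  have hpull (F G : (k → W) → Matrix (k → D) (k → D) ℂ) :
      ∑ w, P w * (symmetrize F w * G w).trace.re = permAvg fun π : Equiv.Perm k =>
        ∑ w, P w * (permAut π (F (w ∘ π)) * G w).trace.re := by
    simp only [re_trace_symmetrize_mul, permAvg, smul_eq_mul, mul_left_comm (P _),
      ← Finset.mul_sum]
    rw [Finset.sum_comm]
    simp only [Finset.mul_sum]
  simp only [Matrix.trace_mul_comm (F _), hpull, permAvg]
  refine congrArg _ (Fintype.sum_equiv (Equiv.inv (Equiv.Perm k)) _ _ fun π => ?_)
  refine Fintype.sum_equiv (Equiv.arrowCongr π⁻¹ (Equiv.refl W)) _ _ fun w => ?_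
  have hw : Equiv.arrowCongr π⁻¹ (Equiv.refl W) w = w ∘ π := rfl
  have hcancel : (w ∘ π) ∘ (π⁻¹ : Equiv.Perm k) = w := funext fun b => by simp
  rw [hw, hP, Equiv.inv_apply, hcancel, trace_permAut_mul, Matrix.trace_mul_comm]

end Symmetrization

section ComparisonWeight

/-- A smooth substitute for the indicator of `max u v ≤ c`. -/
def comparisonWeight (c u v : ℝ) : ℝ := c / (c + u + v)

variable {c u v : ℝ}

lemma comparisonWeight_nonneg (hc : 0 < c) (hu : 0 < u) (hv : 0 < v) :
    0 ≤ comparisonWeight c u v := by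
  unfold comparisonWeight
  positivity

lemma comparisonWeight_comm : comparisonWeight c u v = comparisonWeight c v u := by
  rw [comparisonWeight, add_right_comm, comparisonWeight]

lemma comparisonWeight_le_rpow_neg_one (hc : 0 < c) (hu : 0 < u) (hv : 0 < v) :
    comparisonWeight c u v ≤ (u / c) ^ (-1 : ℝ) := by
  rw [Real.rpow_neg_one, inv_div]
  unfold comparisonWeight
  gcongr
  linarith

lemma one_sub_comparisonWeight (hc : 0 < c) (hu : 0 < u) (hv : 0 < v) :
    1 - comparisonWeight c u v = u / (c + u + v) + v / (c + u + v) := by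
  unfold comparisonWeight
  field_simp
  ring

lemma one_sub_comparisonWeight_nonneg (hc : 0 < c) (hu : 0 < u) (hv : 0 < v) :
    0 ≤ 1 - comparisonWeight c u v := by
  rw [one_sub_comparisonWeight hc hu hv]
  positivity

lemma div_add_le_rpow (hc : 0 < c) (hu : 0 < u) {t : ℝ} (ht0 : 0 ≤ t) (ht1 : t ≤ 1) :
    u / (c + u) ≤ (u / c) ^ t := by
  obtain h | h := le_total u c
  · calc u / (c + u) ≤ u / c := by gcongr; linarith
      _ ≤ (u / c) ^ t := by
          simpa using Real.rpow_le_rpow_of_exponent_ge (by positivity) ((div_le_one hc).2 h) ht1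
  · calc u / (c + u) ≤ 1 := (div_le_one (by positivity)).2 (by linarith)
      _ ≤ (u / c) ^ t := Real.one_le_rpow ((one_le_div hc).2 h) ht0

lemma one_sub_comparisonWeight_le (hc : 0 < c) (hu : 0 < u) (hv : 0 < v) {t : ℝ} (ht0 : 0 ≤ t)
    (ht1 : t ≤ 1) : 1 - comparisonWeight c u v ≤ (u / c) ^ t + (v / c) ^ t := by
  rw [one_sub_comparisonWeight hc hu hv]
  have hdrop_v : u / (c + u + v) ≤ u / (c + u) :=
    div_le_div_of_nonneg_left hu.le (by positivity) (by linarith)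
  have hdrop_u : v / (c + u + v) ≤ v / (c + v) :=
    div_le_div_of_nonneg_left hv.le (by positivity) (by linarith)
  exact add_le_add (hdrop_v.trans (div_add_le_rpow hc hu ht0 ht1))
    (hdrop_u.trans (div_add_le_rpow hc hv ht0 ht1))

end ComparisonWeight

section WeightedResolution

open scoped MatrixOrder

variable {m : Type*} [Fintype m] [DecidableEq m]

/-- A resolution of the identity into positive semidefinite matrices with a positive weight on
each of them; it encodes the operator `∑ᵢ weight i • part i`. -/
structure WeightedResolution (m : Type*) [Fintype m] [DecidableEq m] where
  size : ℕ
  part : Fin size → Matrix m m ℂ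
  weight : Fin size → ℝ
  posSemidef_part : ∀ i, (part i).PosSemidef
  sum_part : ∑ i, part i = 1
  weight_pos : ∀ i, 0 < weight i

namespace WeightedResolution

/-- `σ` is bounded by the operator encoded by `E`, blockwise. -/
def Dominates (E : WeightedResolution m) (σ : Matrix m m ℂ) : Prop :=
  ∀ i, E.part i * σ ≤ E.weight i • E.part i

/-- All parts of `E` commute with all parts of `F`. -/
def Commutes (E F : WeightedResolution m) : Prop := ∀ i j, Commute (E.part i) (F.part j)

/-- The trace of the operator encoded by `E`. -/
def volume (E : WeightedResolution m) : ℝ := ∑ i, E.weight i * (E.part i).trace.re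

/-- The power `∑ᵢ weight i ^ t • part i` of the operator encoded by `E`. -/
def rpow (E : WeightedResolution m) (t : ℝ) : Matrix m m ℂ := ∑ i, E.weight i ^ t • E.part i

/-- The power `(K F E⁻¹) ^ t` of the quotient of the operators encoded by `F` and `E`. -/
def ratioRpow (E F : WeightedResolution m) (K t : ℝ) : Matrix m m ℂ :=
  ∑ i, ∑ j, (K * F.weight j / E.weight i) ^ t • (E.part i * F.part j)

/-- The test which accepts, smoothly, where the operator of `E₁` exceeds `K₁` times that of `E₂`
and `K₂` times that of `E₃`. -/
def comparisonTest (E₁ E₂ E₃ : WeightedResolution m) (K₁ K₂ : ℝ) : Matrix m m ℂ :=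
  ∑ i, ∑ j, ∑ l, comparisonWeight (E₁.weight i) (K₁ * E₂.weight j) (K₂ * E₃.weight l) •
    (E₁.part i * E₂.part j * E₃.part l)

variable {E F E₁ E₂ E₃ : WeightedResolution m} {K K₁ K₂ : ℝ}

lemma re_trace_part_nonneg (E : WeightedResolution m) (i : Fin E.size) :
    0 ≤ (E.part i).trace.re :=
  (Complex.le_def.1 (E.posSemidef_part i).trace_nonneg).1

lemma volume_nonneg (E : WeightedResolution m) : 0 ≤ E.volume :=
  Finset.sum_nonneg fun i _ => mul_nonneg (E.weight_pos i).le (E.re_trace_part_nonneg i)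

lemma part_le_one (E : WeightedResolution m) (i : Fin E.size) : E.part i ≤ 1 := by
  rw [← E.sum_part]
  exact Finset.single_le_sum (fun j _ => (E.posSemidef_part j).nonneg) (Finset.mem_univ i)

lemma posSemidef_part_mul_part (h : E.Commutes F) (i : Fin E.size) (j : Fin F.size) :
    (E.part i * F.part j).PosSemidef :=
  posSemidef_mul_of_commute (E.posSemidef_part i) (F.posSemidef_part j) (h i j)

lemma part_mul_part_le (h : E.Commutes F) (i : Fin E.size) (j : Fin F.size) :
    E.part i * F.part j ≤ E.part i := by
  have hcompl := posSemidef_mul_of_commute (E.posSemidef_part i)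
    (Matrix.le_iff.1 (F.part_le_one j)) ((Commute.one_right _).sub_right (h i j))
  rwa [mul_sub, mul_one] at hcompl

lemma posSemidef_part_mul_part_mul_part (h₁₂ : E₁.Commutes E₂) (h₁₃ : E₁.Commutes E₃)
    (h₂₃ : E₂.Commutes E₃) (i : Fin E₁.size) (j : Fin E₂.size) (l : Fin E₃.size) :
    (E₁.part i * E₂.part j * E₃.part l).PosSemidef :=
  posSemidef_mul_of_commute (posSemidef_part_mul_part h₁₂ i j) (E₃.posSemidef_part l)
    ((h₁₃ i l).mul_left (h₂₃ j l))

lemma re_trace_rpow_mul (E : WeightedResolution m) (t : ℝ) (M : Matrix m m ℂ) :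
    (E.rpow t * M).trace.re = ∑ i, E.weight i ^ t * (E.part i * M).trace.re := by
  simp only [rpow, Finset.sum_mul, Matrix.trace_sum, Complex.re_sum, smul_mul_assoc,
    Matrix.trace_smul, Complex.smul_re, smul_eq_mul]

lemma re_trace_rpow_mul_le (E : WeightedResolution m) {M : Matrix m m ℂ} (hM : M.PosSemidef)
    {t : ℝ} (ht0 : 0 < t) (ht1 : t < 1) :
    (E.rpow t * M).trace.re ≤ (mpow M (1 / (1 - t))).trace.re ^ (1 - t) * E.volume ^ t := by
  rw [re_trace_rpow_mul]
  exact sum_rpow_mul_re_trace_mul_le E.posSemidef_part E.sum_part (fun i => (E.weight_pos i).le)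
    hM ht0 ht1

lemma re_trace_ratioRpow_mul (E F : WeightedResolution m) (K t : ℝ) (M : Matrix m m ℂ) :
    (E.ratioRpow F K t * M).trace.re = ∑ i, ∑ j, (K * F.weight j / E.weight i) ^ t *
      (E.part i * F.part j * M).trace.re := by
  simp only [ratioRpow, Finset.sum_mul, Matrix.trace_sum, Complex.re_sum, smul_mul_assoc,
    Matrix.trace_smul, Complex.smul_re, smul_eq_mul]

lemma re_trace_ratioRpow_neg_one_mul_le {σ : Matrix m m ℂ} (hσ : F.Dominates σ) (hK : 0 < K) :
    (E.ratioRpow F K (-1) * σ).trace.re ≤ E.volume / K := by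
  have hterm (i : Fin E.size) (j : Fin F.size) :
      (K * F.weight j / E.weight i) ^ (-1 : ℝ) * (E.part i * F.part j * σ).trace.re ≤
        E.weight i / K * (E.part i * F.part j).trace.re := by
    have hE := E.weight_pos i
    have hF := F.weight_pos j
    have hle := re_trace_mul_le (E.posSemidef_part i) (hσ j)
    rw [mul_smul_comm, Matrix.trace_smul, Complex.smul_re, smul_eq_mul] at hle
    calc (K * F.weight j / E.weight i) ^ (-1 : ℝ) * (E.part i * F.part j * σ).trace.re
        ≤ (K * F.weight j / E.weight i) ^ (-1 : ℝ) *
            (F.weight j * (E.part i * F.part j).trace.re) := by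
          rw [mul_assoc (E.part i)]
          gcongr
      _ = E.weight i / K * (E.part i * F.part j).trace.re := by
          rw [Real.rpow_neg_one]
          field_simp
  rw [re_trace_ratioRpow_mul, volume, Finset.sum_div]
  refine Finset.sum_le_sum fun i _ => (Finset.sum_le_sum fun j _ => hterm i j).trans_eq ?_
  rw [← Finset.mul_sum, ← Complex.re_sum, ← Matrix.trace_sum, ← Finset.mul_sum, F.sum_part,
    mul_one, div_mul_eq_mul_div]

lemma re_trace_ratioRpow_mul_le (h : E.Commutes F) {ω : Matrix m m ℂ} (hω : ω.PosSemidef)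
    (hEω : E.Dominates ω) (hK : 0 ≤ K) {t : ℝ} (ht : 0 ≤ t) :
    (E.ratioRpow F K t * ω).trace.re ≤ K ^ t * (F.rpow t * mpow ω (1 - t)).trace.re := by
  have hterm (i : Fin E.size) (j : Fin F.size) :
      (K * F.weight j / E.weight i) ^ t * (E.part i * F.part j * ω).trace.re ≤
        K ^ t * (F.weight j ^ t * (E.part i * F.part j * mpow ω (1 - t)).trace.re) := by
    have hF := F.weight_pos j
    have hle := rpow_neg_mul_re_trace_mul_le (posSemidef_part_mul_part h i j)
      (part_mul_part_le h i j) hω (hEω i) ht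
    calc (K * F.weight j / E.weight i) ^ t * (E.part i * F.part j * ω).trace.re
        = (K ^ t * F.weight j ^ t) * (E.weight i ^ (-t) * (E.part i * F.part j * ω).trace.re) := by
          rw [Real.div_rpow (mul_nonneg hK hF.le) (E.weight_pos i).le, Real.mul_rpow hK hF.le,
            Real.rpow_neg (E.weight_pos i).le, div_eq_mul_inv, mul_assoc]
      _ ≤ (K ^ t * F.weight j ^ t) * (E.part i * F.part j * mpow ω (1 - t)).trace.re := by gcongr
      _ = _ := mul_assoc _ _ _
  rw [re_trace_ratioRpow_mul, re_trace_rpow_mul, Finset.sum_comm, Finset.mul_sum]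
  refine Finset.sum_le_sum fun j _ => (Finset.sum_le_sum fun i _ => hterm i j).trans_eq ?_
  rw [← Finset.mul_sum, ← Finset.mul_sum, ← Complex.re_sum, ← Matrix.trace_sum, ← Finset.sum_mul,
    ← Finset.sum_mul, E.sum_part, one_mul]

lemma sum_smul_part_mul_part_mul_part_right (g : Fin E₁.size → Fin E₂.size → ℝ) :
    ∑ i, ∑ j, ∑ l, g i j • (E₁.part i * E₂.part j * E₃.part l) =
      ∑ i, ∑ j, g i j • (E₁.part i * E₂.part j) := by
  simp only [← Finset.smul_sum, ← Finset.mul_sum, E₃.sum_part, mul_one]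

lemma sum_smul_part_mul_part_mul_part_middle (g : Fin E₁.size → Fin E₃.size → ℝ) :
    ∑ i, ∑ j, ∑ l, g i l • (E₁.part i * E₂.part j * E₃.part l) =
      ∑ i, ∑ l, g i l • (E₁.part i * E₃.part l) := by
  refine Finset.sum_congr rfl fun i _ => ?_
  rw [Finset.sum_comm]
  simp only [← Finset.smul_sum, ← Finset.sum_mul, ← Finset.mul_sum, E₂.sum_part, mul_one]

lemma one_sub_comparisonTest :
    1 - comparisonTest E₁ E₂ E₃ K₁ K₂ = ∑ i, ∑ j, ∑ l,
      (1 - comparisonWeight (E₁.weight i) (K₁ * E₂.weight j) (K₂ * E₃.weight l)) •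
        (E₁.part i * E₂.part j * E₃.part l) := by
  have hone : ∑ i, ∑ j, ∑ l, E₁.part i * E₂.part j * E₃.part l = 1 := by
    simp only [← Finset.mul_sum, E₃.sum_part, E₂.sum_part, E₁.sum_part, mul_one]
  simp only [sub_smul, one_smul, Finset.sum_sub_distrib, hone, comparisonTest]

lemma posSemidef_comparisonTest (h₁₂ : E₁.Commutes E₂) (h₁₃ : E₁.Commutes E₃)
    (h₂₃ : E₂.Commutes E₃) (hK₁ : 0 < K₁) (hK₂ : 0 < K₂) :
    (comparisonTest E₁ E₂ E₃ K₁ K₂).PosSemidef :=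
  Matrix.posSemidef_sum _ fun i _ => Matrix.posSemidef_sum _ fun j _ =>
    Matrix.posSemidef_sum _ fun l _ =>
      (posSemidef_part_mul_part_mul_part h₁₂ h₁₃ h₂₃ i j l).smul (comparisonWeight_nonneg
        (E₁.weight_pos i) (mul_pos hK₁ (E₂.weight_pos j)) (mul_pos hK₂ (E₃.weight_pos l)))

lemma posSemidef_one_sub_comparisonTest (h₁₂ : E₁.Commutes E₂) (h₁₃ : E₁.Commutes E₃)
    (h₂₃ : E₂.Commutes E₃) (hK₁ : 0 < K₁) (hK₂ : 0 < K₂) :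
    (1 - comparisonTest E₁ E₂ E₃ K₁ K₂).PosSemidef := by
  rw [one_sub_comparisonTest]
  exact Matrix.posSemidef_sum _ fun i _ => Matrix.posSemidef_sum _ fun j _ =>
    Matrix.posSemidef_sum _ fun l _ =>
      (posSemidef_part_mul_part_mul_part h₁₂ h₁₃ h₂₃ i j l).smul (one_sub_comparisonWeight_nonneg
        (E₁.weight_pos i) (mul_pos hK₁ (E₂.weight_pos j)) (mul_pos hK₂ (E₃.weight_pos l)))

lemma comparisonTest_le_ratioRpow_left (h₁₂ : E₁.Commutes E₂) (h₁₃ : E₁.Commutes E₃)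
    (h₂₃ : E₂.Commutes E₃) (hK₁ : 0 < K₁) (hK₂ : 0 < K₂) :
    comparisonTest E₁ E₂ E₃ K₁ K₂ ≤ E₁.ratioRpow E₂ K₁ (-1) := by
  rw [ratioRpow, ← sum_smul_part_mul_part_mul_part_right (E₃ := E₃), comparisonTest]
  gcongr with i _ j _ l _
  · exact (posSemidef_part_mul_part_mul_part h₁₂ h₁₃ h₂₃ i j l).nonneg
  · exact comparisonWeight_le_rpow_neg_one (E₁.weight_pos i) (mul_pos hK₁ (E₂.weight_pos j))
      (mul_pos hK₂ (E₃.weight_pos l))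

lemma comparisonTest_le_ratioRpow_right (h₁₂ : E₁.Commutes E₂) (h₁₃ : E₁.Commutes E₃)
    (h₂₃ : E₂.Commutes E₃) (hK₁ : 0 < K₁) (hK₂ : 0 < K₂) :
    comparisonTest E₁ E₂ E₃ K₁ K₂ ≤ E₁.ratioRpow E₃ K₂ (-1) := by
  rw [ratioRpow, ← sum_smul_part_mul_part_mul_part_middle (E₂ := E₂), comparisonTest]
  gcongr with i _ j _ l _
  · exact (posSemidef_part_mul_part_mul_part h₁₂ h₁₃ h₂₃ i j l).nonneg
  · rw [comparisonWeight_comm]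
    exact comparisonWeight_le_rpow_neg_one (E₁.weight_pos i) (mul_pos hK₂ (E₃.weight_pos l))
      (mul_pos hK₁ (E₂.weight_pos j))

lemma one_sub_comparisonTest_le (h₁₂ : E₁.Commutes E₂) (h₁₃ : E₁.Commutes E₃)
    (h₂₃ : E₂.Commutes E₃) (hK₁ : 0 < K₁) (hK₂ : 0 < K₂) {t : ℝ} (ht0 : 0 ≤ t) (ht1 : t ≤ 1) :
    1 - comparisonTest E₁ E₂ E₃ K₁ K₂ ≤ E₁.ratioRpow E₂ K₁ t + E₁.ratioRpow E₃ K₂ t := by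
  rw [one_sub_comparisonTest, ratioRpow, ratioRpow,
    ← sum_smul_part_mul_part_mul_part_right (E₃ := E₃),
    ← sum_smul_part_mul_part_mul_part_middle (E₂ := E₂)]
  simp only [← Finset.sum_add_distrib, ← add_smul]
  gcongr with i _ j _ l _
  · exact (posSemidef_part_mul_part_mul_part h₁₂ h₁₃ h₂₃ i j l).nonneg
  · exact one_sub_comparisonWeight_le (E₁.weight_pos i) (mul_pos hK₁ (E₂.weight_pos j))
      (mul_pos hK₂ (E₃.weight_pos l)) ht0 ht1

lemma re_trace_comparisonTest_mul_le_left (h₁₂ : E₁.Commutes E₂) (h₁₃ : E₁.Commutes E₃)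
    (h₂₃ : E₂.Commutes E₃) (hK₁ : 0 < K₁) (hK₂ : 0 < K₂) {σ : Matrix m m ℂ}
    (hσ : σ.PosSemidef) (hEσ : E₂.Dominates σ) :
    (comparisonTest E₁ E₂ E₃ K₁ K₂ * σ).trace.re ≤ E₁.volume / K₁ :=
  (re_trace_mul_le_of_le_left (comparisonTest_le_ratioRpow_left h₁₂ h₁₃ h₂₃ hK₁ hK₂) hσ).trans
    (re_trace_ratioRpow_neg_one_mul_le hEσ hK₁)

lemma re_trace_comparisonTest_mul_le_right (h₁₂ : E₁.Commutes E₂) (h₁₃ : E₁.Commutes E₃)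
    (h₂₃ : E₂.Commutes E₃) (hK₁ : 0 < K₁) (hK₂ : 0 < K₂) {σ : Matrix m m ℂ}
    (hσ : σ.PosSemidef) (hEσ : E₃.Dominates σ) :
    (comparisonTest E₁ E₂ E₃ K₁ K₂ * σ).trace.re ≤ E₁.volume / K₂ :=
  (re_trace_mul_le_of_le_left (comparisonTest_le_ratioRpow_right h₁₂ h₁₃ h₂₃ hK₁ hK₂) hσ).trans
    (re_trace_ratioRpow_neg_one_mul_le hEσ hK₂)

lemma re_trace_one_sub_comparisonTest_mul_le (h₁₂ : E₁.Commutes E₂) (h₁₃ : E₁.Commutes E₃)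
    (h₂₃ : E₂.Commutes E₃) (hK₁ : 0 < K₁) (hK₂ : 0 < K₂) {ω : Matrix m m ℂ}
    (hω : ω.PosSemidef) (hEω : E₁.Dominates ω) {t : ℝ} (ht0 : 0 ≤ t) (ht1 : t ≤ 1) :
    ((1 - comparisonTest E₁ E₂ E₃ K₁ K₂) * ω).trace.re ≤
      K₁ ^ t * (E₂.rpow t * mpow ω (1 - t)).trace.re +
        K₂ ^ t * (E₃.rpow t * mpow ω (1 - t)).trace.re := by
  refine (re_trace_mul_le_of_le_left
    (one_sub_comparisonTest_le h₁₂ h₁₃ h₂₃ hK₁ hK₂ ht0 ht1) hω).trans ?_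
  rw [add_mul, Matrix.trace_add, Complex.add_re]
  exact add_le_add (re_trace_ratioRpow_mul_le h₁₂ hω hEω hK₁.le ht0)
    (re_trace_ratioRpow_mul_le h₁₃ hω hEω hK₂.le ht0)

end WeightedResolution

end WeightedResolution

section UniversalResolution

open scoped MatrixOrder

variable {k D W : Type*} [Fintype k] [DecidableEq k] [Fintype D] [DecidableEq D] [Nonempty D]
  [Fintype W]

lemma exists_weightedResolution_invAlg (w : k → W) :
    ∃ E : WeightedResolution (k → D), (∀ i, E.part i ∈ starCenter (invAlg D w)) ∧
      (∀ σ ∈ invAlg D w, IsDensity σ → E.Dominates σ) ∧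
      E.volume ≤ universalVolume (Fintype.card k) (Fintype.card D) (Fintype.card W) := by
  obtain ⟨N, p, c, hp, hc, hσ, hvol⟩ := exists_centralResolution_invAlg (D := D) w
  exact ⟨⟨N, p, c, hp.posSemidef, hp.complete, hc⟩, hp.mem_starCenter,
    fun σ hσw hσd i => hσ i σ hσw hσd, hvol⟩

/-- A central weighted resolution of the invariant algebra of `w` which dominates every invariant
state, i.e. a universal symmetric state up to normalization. -/
def universalResolution (D : Type*) [Fintype D] [DecidableEq D] [Nonempty D] (w : k → W) :
    WeightedResolution (k → D) :=
  (exists_weightedResolution_invAlg w).choose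

lemma part_universalResolution_mem_starCenter (w : k → W)
    (i : Fin (universalResolution D w).size) :
    (universalResolution D w).part i ∈ starCenter (invAlg D w) :=
  (exists_weightedResolution_invAlg w).choose_spec.1 i

lemma universalResolution_dominates {w : k → W} {σ : Matrix (k → D) (k → D) ℂ}
    (hσ : σ ∈ invAlg D w) (hσd : IsDensity σ) : (universalResolution D w).Dominates σ :=
  (exists_weightedResolution_invAlg w).choose_spec.2.1 σ hσ hσd

lemma volume_universalResolution_le (w : k → W) : (universalResolution D w).volume ≤
    universalVolume (Fintype.card k) (Fintype.card D) (Fintype.card W) :=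
  (exists_weightedResolution_invAlg w).choose_spec.2.2

lemma universalResolution_commutes_comp {V : Type*} [Fintype V] (w : k → W) (q : W → V) :
    (universalResolution D w).Commutes (universalResolution D (q ∘ w)) := fun i j =>
  ((mem_starCenter.1 (part_universalResolution_mem_starCenter w i)).2 _ (mem_invAlg_of_comp
    (mem_starCenter.1 (part_universalResolution_mem_starCenter (q ∘ w) j)).1)).symm

end UniversalResolution

section FiberSum

lemma re_trace_nonneg {m : Type*} [Fintype m] {A : Matrix m m ℂ} (hA : A.PosSemidef) :
    0 ≤ A.trace.re := (Complex.le_def.1 hA.trace_nonneg).1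

lemma isDensity_sum_smul {m S : Type*} [Fintype m] [Fintype S] {Q : S → ℝ} (hQ : ∀ a, 0 ≤ Q a)
    (hQ1 : ∑ a, Q a = 1) {R : S → Matrix m m ℂ} (hR : ∀ a, IsDensity (R a)) :
    IsDensity (∑ a, Q a • R a) := by
  refine ⟨Matrix.posSemidef_sum _ fun a _ => (hR a).1.smul (hQ a), ?_⟩
  simp only [Matrix.trace_sum, Matrix.trace_smul, (hR _).2]
  rw [← Finset.sum_smul, hQ1, one_smul]

lemma re_trace_tensorFam {k D : Type*} [Fintype k] [DecidableEq k] [Fintype D]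
    {A : k → Matrix D D ℂ} (hA : ∀ b, (A b).PosSemidef) :
    (tensorFam A).trace.re = ∏ b, (A b).trace.re := by
  rw [trace_tensorFam, Finset.prod_congr rfl fun b _ => trace_eq_re (hA b), ← Complex.ofReal_prod,
    Complex.ofReal_re]

variable {k D W V : Type*} [Fintype W] [DecidableEq V]

/-- The sum of `p a • M a` over the fibre of `q` above `v`. -/
def fiberSum (q : W → V) (p : W → ℝ) (M : W → Matrix D D ℂ) (v : V) : Matrix D D ℂ :=
  ∑ a with q a = v, p a • M a

lemma posSemidef_fiberSum (q : W → V) {p : W → ℝ} (hp : ∀ a, 0 ≤ p a) {M : W → Matrix D D ℂ}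
    (hM : ∀ a, (M a).PosSemidef) (v : V) : (fiberSum q p M v).PosSemidef :=
  Matrix.posSemidef_sum _ fun a _ => (hM a).smul (hp a)

variable [Fintype k] [DecidableEq k]

lemma tensorFam_fiberSum (q : W → V) (p : W → ℝ) (M : W → Matrix D D ℂ) (v : k → V) :
    tensorFam (fun b => fiberSum q p M (v b)) =
      ∑ w : k → W with q ∘ w = v, (∏ b, p (w b)) • tensorFam fun b => M (w b) := by
  simp only [fiberSum, tensorFam_sum]
  refine Finset.sum_congr ?_ fun w _ => tensorFam_real_smul _ _
  ext w
  simp [funext_iff]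

variable [Fintype D] [Fintype V]

lemma sum_prod_mul_re_trace_mul_tensorFam (q : W → V) (p : W → ℝ) (M : W → Matrix D D ℂ)
    (A : (k → V) → Matrix (k → D) (k → D) ℂ) :
    ∑ w : k → W, (∏ b, p (w b)) * (A (q ∘ w) * tensorFam fun b => M (w b)).trace.re =
      ∑ v, (A v * tensorFam fun b => fiberSum q p M (v b)).trace.re := by
  simp only [tensorFam_fiberSum, Finset.mul_sum, Matrix.trace_sum, Complex.re_sum, mul_smul_comm,
    Matrix.trace_smul, Complex.smul_re, smul_eq_mul]
  rw [← Finset.sum_fiberwise Finset.univ fun w : k → W => q ∘ w]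
  refine Finset.sum_congr rfl fun v _ => Finset.sum_congr rfl fun w hw => ?_
  rw [(Finset.mem_filter.1 hw).2]

variable [DecidableEq D]

/-- The sum `∑ᵥ (Tr (∑_{q a = v} p a R_a^{1-t})^{1/(1-t)})^{1-t}` governing the conditional Rényi
quantity of order `1 - t` given the value of `q`. -/
def renyiSum (q : W → V) (p : W → ℝ) (R : W → Matrix D D ℂ) (t : ℝ) : ℝ :=
  ∑ v, (mpow (fiberSum q p (fun a => mpow (R a) (1 - t)) v) (1 / (1 - t))).trace.re ^ (1 - t)

lemma re_trace_rpow_mul_tensorFam_le (E : WeightedResolution (k → D)) {A : k → Matrix D D ℂ}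
    (hA : ∀ b, (A b).PosSemidef) {t : ℝ} (ht0 : 0 < t) (ht1 : t < 1) :
    (E.rpow t * tensorFam A).trace.re ≤
      E.volume ^ t * ∏ b, (mpow (A b) (1 / (1 - t))).trace.re ^ (1 - t) := by
  refine (E.re_trace_rpow_mul_le (posSemidef_tensorFam hA) ht0 ht1).trans_eq ?_
  rw [mpow_tensorFam hA, re_trace_tensorFam fun b => posSemidef_mpow (hA b) _,
    ← Real.finsetProd_rpow _ _ fun b _ => re_trace_nonneg (posSemidef_mpow (hA b) _), mul_comm]

lemma sum_prod_mul_re_trace_rpow_mul_mpow_le (q : W → V) {p : W → ℝ} (hp : ∀ a, 0 ≤ p a)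
    {R : W → Matrix D D ℂ} (hR : ∀ a, (R a).PosSemidef)
    (E : (k → V) → WeightedResolution (k → D)) {L : ℝ} (hL : ∀ v, (E v).volume ≤ L)
    {t : ℝ} (ht0 : 0 < t) (ht1 : t < 1) :
    ∑ w : k → W, (∏ b, p (w b)) *
        ((E (q ∘ w)).rpow t * mpow (tensorFam fun b => R (w b)) (1 - t)).trace.re ≤
      L ^ t * renyiSum q p R t ^ Fintype.card k := by
  have hA (v : V) := posSemidef_fiberSum q hp (fun a => posSemidef_mpow (hR a) (1 - t)) v
  simp only [mpow_tensorFam fun _ => hR _]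
  rw [sum_prod_mul_re_trace_mul_tensorFam q p (fun a => mpow (R a) (1 - t)) fun v => (E v).rpow t,
    renyiSum, ← Finset.card_univ, ← Finset.prod_const, Finset.prod_univ_sum, Fintype.piFinset_univ,
    Finset.mul_sum]
  refine Finset.sum_le_sum fun v _ =>
    (re_trace_rpow_mul_tensorFam_le (E v) (fun b => hA (v b)) ht0 ht1).trans ?_
  gcongr
  · exact Finset.prod_nonneg fun b _ =>
      Real.rpow_nonneg (re_trace_nonneg (posSemidef_mpow (hA (v b)) _)) _
  · exact (E v).volume_nonneg
  · exact hL v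

end FiberSum

section UniversalTest

open scoped MatrixOrder

variable {k D W : Type*} [Fintype k] [DecidableEq k] [Fintype D] [DecidableEq D]

lemma one_sub_symmetrize (F : (k → W) → Matrix (k → D) (k → D) ℂ) (w : k → W) :
    1 - symmetrize F w = symmetrize (fun w => 1 - F w) w := by
  have hone := permAvg_const (k := k) (1 : Matrix (k → D) (k → D) ℂ)
  simp only [symmetrize, map_sub, map_one]
  rw [← hone, permAvg, permAvg, permAvg, ← smul_sub, Finset.sum_sub_distrib, ← permAvg, hone]

lemma symmetrize_tensorFam_le [Nonempty k] {S : Type*} [Fintype S] [DecidableEq S] [Nonempty S]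
    {R : W → S → Matrix D D ℂ} (hR : ∀ a i, (R a i).PosSemidef) (s : k → S) (w : k → W) :
    symmetrize (fun w => tensorFam fun b => R (w b) (s b)) w ≤
      ((Fintype.card k : ℝ) + 1) ^ (Fintype.card S - 1) •
        tensorFam fun b => ∑ i, empiricalDist s i • R (w b) i := by
  have hsymm : symmetrize (fun w => tensorFam fun b => R (w b) (s b)) w =
      permAvg fun π : Equiv.Perm k => tensorFam fun b => R (w b) (s (π b)) := by
    simp only [symmetrize, permAvg, permAut_tensorFam, Function.comp_apply, Equiv.apply_symm_apply]
    rw [← Equiv.sum_comp (Equiv.inv (Equiv.Perm k))]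
    rfl
  exact hsymm.trans_le (permAvg_tensorFam_le s fun b i => hR (w b) i)

lemma sum_prod_mul_le [Fintype W] {p : W → ℝ} (hp : ∀ a, 0 ≤ p a) (hp1 : ∑ a, p a = 1)
    {f : (k → W) → ℝ} {C : ℝ} (hf : ∀ w, f w ≤ C) : ∑ w : k → W, (∏ b, p (w b)) * f w ≤ C := by
  have hsum : ∑ w : k → W, ∏ b, p (w b) = 1 := by
    rw [← Fintype.piFinset_univ, ← Finset.prod_univ_sum, hp1, Finset.prod_const_one]
  calc ∑ w : k → W, (∏ b, p (w b)) * f w ≤ ∑ w : k → W, (∏ b, p (w b)) * C := by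
        gcongr with w
        · exact Finset.prod_nonneg fun b _ => hp (w b)
        · exact hf w
    _ = C := by rw [← Finset.sum_mul, hsum, one_mul]

lemma sum_prod_mul_re_trace_symmetrize_mul [Fintype W] (p : W → ℝ)
    (F G : (k → W) → Matrix (k → D) (k → D) ℂ) :
    ∑ w : k → W, (∏ b, p (w b)) * (symmetrize F w * G w).trace.re =
      ∑ w : k → W, (∏ b, p (w b)) * (F w * symmetrize G w).trace.re :=
  sum_mul_re_trace_symmetrize_mul (fun w π => Equiv.prod_comp π fun b => p (w b)) F G

variable [Nonempty D] {V : Type*} [Fintype W] [Fintype V]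
  {q : W → V} {K₁ K₂ : ℝ}

/-- The comparison of the universal states for the words `w`, `q ∘ w` and the constant word. -/
def wordTest (D : Type*) [Fintype D] [DecidableEq D] [Nonempty D] (q : W → V) (K₁ K₂ : ℝ)
    (w : k → W) : Matrix (k → D) (k → D) ℂ :=
  (universalResolution D w).comparisonTest (universalResolution D (q ∘ w))
    (universalResolution D ((fun _ => ()) ∘ w)) K₁ K₂

lemma universalResolution_commutes_const (w : k → W) : (universalResolution D w).Commutes
    (universalResolution D ((fun _ => ()) ∘ w)) :=
  universalResolution_commutes_comp w fun _ => ()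

lemma posSemidef_wordTest (hK₁ : 0 < K₁) (hK₂ : 0 < K₂) (w : k → W) :
    (wordTest D q K₁ K₂ w).PosSemidef :=
  WeightedResolution.posSemidef_comparisonTest (universalResolution_commutes_comp w q)
    (universalResolution_commutes_const w) (universalResolution_commutes_const (q ∘ w)) hK₁ hK₂

lemma posSemidef_one_sub_wordTest (hK₁ : 0 < K₁) (hK₂ : 0 < K₂) (w : k → W) :
    (1 - wordTest D q K₁ K₂ w).PosSemidef :=
  WeightedResolution.posSemidef_one_sub_comparisonTest (universalResolution_commutes_comp w q)
    (universalResolution_commutes_const w) (universalResolution_commutes_const (q ∘ w)) hK₁ hK₂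

lemma re_trace_wordTest_mul_le_comp (hK₁ : 0 < K₁) (hK₂ : 0 < K₂) {w : k → W}
    {σ : Matrix (k → D) (k → D) ℂ} (hσ : σ ∈ invAlg D (q ∘ w)) (hσd : IsDensity σ) :
    (wordTest D q K₁ K₂ w * σ).trace.re ≤
      universalVolume (Fintype.card k) (Fintype.card D) (Fintype.card W) / K₁ :=
  (WeightedResolution.re_trace_comparisonTest_mul_le_left (universalResolution_commutes_comp w q)
    (universalResolution_commutes_const w) (universalResolution_commutes_const (q ∘ w)) hK₁ hK₂
    hσd.1 (universalResolution_dominates hσ hσd)).trans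
    (div_le_div_of_nonneg_right (volume_universalResolution_le w) hK₁.le)

lemma re_trace_wordTest_mul_le_const (hK₁ : 0 < K₁) (hK₂ : 0 < K₂) {w : k → W}
    {σ : Matrix (k → D) (k → D) ℂ} (hσ : σ ∈ invAlg D ((fun _ => ()) ∘ w)) (hσd : IsDensity σ) :
    (wordTest D q K₁ K₂ w * σ).trace.re ≤
      universalVolume (Fintype.card k) (Fintype.card D) (Fintype.card W) / K₂ :=
  (WeightedResolution.re_trace_comparisonTest_mul_le_right (universalResolution_commutes_comp w q)
    (universalResolution_commutes_const w) (universalResolution_commutes_const (q ∘ w)) hK₁ hK₂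
    hσd.1 (universalResolution_dominates hσ hσd)).trans
    (div_le_div_of_nonneg_right (volume_universalResolution_le w) hK₂.le)

lemma re_trace_one_sub_wordTest_mul_le (hK₁ : 0 < K₁) (hK₂ : 0 < K₂) {w : k → W}
    {σ : Matrix (k → D) (k → D) ℂ} (hσ : σ ∈ invAlg D w) (hσd : IsDensity σ) {t : ℝ}
    (ht0 : 0 ≤ t) (ht1 : t ≤ 1) :
    ((1 - wordTest D q K₁ K₂ w) * σ).trace.re ≤
      K₁ ^ t * ((universalResolution D (q ∘ w)).rpow t * mpow σ (1 - t)).trace.re +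
        K₂ ^ t * ((universalResolution D ((fun _ => ()) ∘ w)).rpow t *
          mpow σ (1 - t)).trace.re :=
  WeightedResolution.re_trace_one_sub_comparisonTest_mul_le (universalResolution_commutes_comp w q)
    (universalResolution_commutes_const w) (universalResolution_commutes_const (q ∘ w)) hK₁ hK₂
    hσd.1 (universalResolution_dominates hσ hσd) ht0 ht1

/-- The symmetrized universal test against states depending on `q ∘ w` only, with threshold `K₁`,
and against constant states, with threshold `K₂`. -/
def universalTest (D : Type*) [Fintype D] [DecidableEq D] [Nonempty D] (q : W → V) (K₁ K₂ : ℝ) :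
    (k → W) → Matrix (k → D) (k → D) ℂ :=
  symmetrize (wordTest D q K₁ K₂)

lemma posSemidef_universalTest (hK₁ : 0 < K₁) (hK₂ : 0 < K₂) (w : k → W) :
    (universalTest D q K₁ K₂ w).PosSemidef :=
  posSemidef_symmetrize (posSemidef_wordTest hK₁ hK₂) w

lemma posSemidef_one_sub_universalTest (hK₁ : 0 < K₁) (hK₂ : 0 < K₂) (w : k → W) :
    (1 - universalTest D q K₁ K₂ w).PosSemidef := by
  rw [universalTest, one_sub_symmetrize]
  exact posSemidef_symmetrize (posSemidef_one_sub_wordTest hK₁ hK₂) w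

theorem sum_prod_mul_re_trace_universalTest_mul_comp_le (hK₁ : 0 < K₁) (hK₂ : 0 < K₂)
    {p : W → ℝ} (hp : ∀ a, 0 ≤ p a) (hp1 : ∑ a, p a = 1)
    {σ : (k → V) → Matrix (k → D) (k → D) ℂ} (hσ : ∀ v, IsDensity (σ v)) :
    ∑ w : k → W, (∏ b, p (w b)) * (universalTest D q K₁ K₂ w * σ (q ∘ w)).trace.re ≤
      universalVolume (Fintype.card k) (Fintype.card D) (Fintype.card W) / K₁ := by
  rw [universalTest, sum_prod_mul_re_trace_symmetrize_mul p _ fun w => σ (q ∘ w)]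
  refine sum_prod_mul_le hp hp1 fun w => ?_
  exact re_trace_wordTest_mul_le_comp hK₁ hK₂ (symmetrize_mem_invAlg σ (q ∘ w))
    (isDensity_symmetrize (fun w => hσ (q ∘ w)) w)

theorem sum_prod_mul_re_trace_universalTest_mul_const_le (hK₁ : 0 < K₁) (hK₂ : 0 < K₂)
    {p : W → ℝ} (hp : ∀ a, 0 ≤ p a) (hp1 : ∑ a, p a = 1) {σ : Matrix (k → D) (k → D) ℂ}
    (hσ : IsDensity σ) :
    ∑ w : k → W, (∏ b, p (w b)) * (universalTest D q K₁ K₂ w * σ).trace.re ≤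
      universalVolume (Fintype.card k) (Fintype.card D) (Fintype.card W) / K₂ := by
  rw [universalTest, sum_prod_mul_re_trace_symmetrize_mul p _ fun _ => σ]
  refine sum_prod_mul_le hp hp1 fun w => ?_
  exact re_trace_wordTest_mul_le_const hK₁ hK₂
    (symmetrize_mem_invAlg (fun _ => σ) ((fun _ => ()) ∘ w)) (isDensity_symmetrize (fun _ => hσ) _)

lemma re_trace_one_sub_wordTest_mul_symmetrize_le [Nonempty k] (hK₁ : 0 < K₁) (hK₂ : 0 < K₂)
    {S : Type*} [Fintype S] [DecidableEq S] [Nonempty S] {R : W → S → Matrix D D ℂ}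
    (hR : ∀ a i, IsDensity (R a i)) (s : k → S) {t : ℝ} (ht0 : 0 ≤ t) (ht1 : t ≤ 1) (w : k → W) :
    ((1 - wordTest D q K₁ K₂ w) *
        symmetrize (fun w => tensorFam fun b => R (w b) (s b)) w).trace.re ≤
      ((Fintype.card k : ℝ) + 1) ^ (Fintype.card S - 1) *
        (K₁ ^ t * ((universalResolution D (q ∘ w)).rpow t *
            mpow (tensorFam fun b => ∑ i, empiricalDist s i • R (w b) i) (1 - t)).trace.re +
          K₂ ^ t * ((universalResolution D ((fun _ => ()) ∘ w)).rpow t *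
            mpow (tensorFam fun b => ∑ i, empiricalDist s i • R (w b) i) (1 - t)).trace.re) := by
  have hd : IsDensity (tensorFam fun b => ∑ i, empiricalDist s i • R (w b) i) :=
    isDensity_tensorFam fun b =>
      isDensity_sum_smul (empiricalDist_nonneg s) (sum_empiricalDist s) (hR (w b))
  have hmem := tensorFam_mem_invAlg w fun a => ∑ i, empiricalDist s i • R a i
  refine (re_trace_mul_le (posSemidef_one_sub_wordTest hK₁ hK₂ w)
    (symmetrize_tensorFam_le (fun a i => (hR a i).1) s w)).trans ?_
  rw [mul_smul_comm, Matrix.trace_smul, Complex.smul_re, smul_eq_mul]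
  gcongr
  exact re_trace_one_sub_wordTest_mul_le hK₁ hK₂ hmem hd ht0 ht1

theorem sum_prod_mul_re_trace_one_sub_universalTest_mul_le [DecidableEq V] [Nonempty k]
    (hK₁ : 0 < K₁) (hK₂ : 0 < K₂) {p : W → ℝ} (hp : ∀ a, 0 ≤ p a) {S : Type*} [Fintype S]
    [DecidableEq S] [Nonempty S] {R : W → S → Matrix D D ℂ} (hR : ∀ a i, IsDensity (R a i))
    (s : k → S) {t : ℝ} (ht0 : 0 < t) (ht1 : t < 1) :
    ∑ w : k → W, (∏ b, p (w b)) *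
        ((1 - universalTest D q K₁ K₂ w) * tensorFam fun b => R (w b) (s b)).trace.re ≤
      ((Fintype.card k : ℝ) + 1) ^ (Fintype.card S - 1) *
        (K₁ ^ t * (universalVolume (Fintype.card k) (Fintype.card D) (Fintype.card V) ^ t *
            renyiSum q p (fun a => ∑ i, empiricalDist s i • R a i) t ^ Fintype.card k) +
          K₂ ^ t * (universalVolume (Fintype.card k) (Fintype.card D) 1 ^ t *
            renyiSum (fun _ => ()) p (fun a => ∑ i, empiricalDist s i • R a i) t ^
              Fintype.card k)) := by
  have hd (a : W) : IsDensity (∑ i, empiricalDist s i • R a i) :=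
    isDensity_sum_smul (empiricalDist_nonneg s) (sum_empiricalDist s) (hR a)
  have hcond := sum_prod_mul_re_trace_rpow_mul_mpow_le q hp (fun a => (hd a).1)
    (universalResolution D (k := k)) volume_universalResolution_le ht0 ht1
  have hconst := sum_prod_mul_re_trace_rpow_mul_mpow_le (fun _ => ()) hp (fun a => (hd a).1)
    (universalResolution D (k := k)) volume_universalResolution_le ht0 ht1
  simp only [universalTest, one_sub_symmetrize]
  rw [sum_prod_mul_re_trace_symmetrize_mul p _ fun w => tensorFam fun b => R (w b) (s b)]
  refine (Finset.sum_le_sum fun w _ => mul_le_mul_of_nonneg_left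
    (re_trace_one_sub_wordTest_mul_symmetrize_le hK₁ hK₂ hR s ht0.le ht1.le w)
    (Finset.prod_nonneg fun b _ => hp (w b))).trans ?_
  simp only [mul_left_comm (∏ _, p _), mul_add, Finset.sum_add_distrib, ← Finset.mul_sum]
  rw [Fintype.card_unit] at hconst
  gcongr

end UniversalTest

section PolynomialFactors

lemma multichoose_le_add_one_pow (m n : ℕ) : (m + 1).multichoose n ≤ (n + 1) ^ m := by
  induction m with
  | zero => simp
  | succ m ih =>
    rw [Nat.multichoose_eq, show m + 1 + 1 + n - 1 = n + (m + 1) by omega, Nat.choose_symm_add]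
    rw [Nat.multichoose_eq, show m + 1 + n - 1 = n + m by omega, Nat.choose_symm_add] at ih
    refine Nat.le_of_mul_le_mul_right ?_ (Nat.succ_pos m)
    calc (n + m + 1).choose (m + 1) * (m + 1) = (n + m + 1) * (n + m).choose m :=
          (Nat.add_one_mul_choose_eq (n + m) m).symm
      _ ≤ ((n + 1) * (m + 1)) * (n + 1) ^ m := Nat.mul_le_mul (by nlinarith) ih
      _ = (n + 1) ^ (m + 1) * (m + 1) := by ring

lemma multichoose_le_add_one_mul_pow {n : ℕ} (hn : 2 ≤ n) (m : ℕ) :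
    (m + 2).multichoose n ≤ (n + 1) * n ^ m := by
  have heq (m : ℕ) : (m + 2).multichoose n = (n + m + 1).choose (m + 1) := by
    rw [Nat.multichoose_eq, show m + 2 + n - 1 = n + (m + 1) by omega, Nat.choose_symm_add,
      add_assoc]
  induction m with
  | zero => simp [heq]
  | succ m ih =>
    rw [heq] at ih ⊢
    refine Nat.le_of_mul_le_mul_right ?_ (Nat.succ_pos (m + 1))
    calc (n + (m + 1) + 1).choose (m + 1 + 1) * (m + 1 + 1)
        = (n + (m + 1) + 1) * (n + m + 1).choose (m + 1) :=
          (Nat.add_one_mul_choose_eq (n + (m + 1)) (m + 1)).symm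
      _ ≤ (n * (m + 1 + 1)) * ((n + 1) * n ^ m) := Nat.mul_le_mul (by nlinarith) ih
      _ = (n + 1) * n ^ (m + 1) * (m + 1 + 1) := by ring

lemma add_one_sq_eq_choose_two (e : ℕ) :
    (e + 1) * (e + 1) = (e + 1).choose 2 + ((e + 1).choose 2 + e) + 1 := by
  induction e with
  | zero => rfl
  | succ e ih =>
    rw [Nat.choose_succ_succ' (e + 1) 1, Nat.choose_one_right]
    linarith

lemma add_one_sq_le_two_pow (e : ℕ) : (e + 1) * (e + 1) ≤ 2 ^ ((e + 1).choose 2 + e) := by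
  induction e with
  | zero => simp
  | succ e ih =>
    have hpow : 2 ^ ((e + 1 + 1).choose 2 + (e + 1)) =
        2 ^ ((e + 1).choose 2 + e) * (4 * 2 ^ e) := by
      rw [Nat.choose_succ_succ' (e + 1) 1, Nat.choose_one_right]
      ring
    calc (e + 1 + 1) * (e + 1 + 1) ≤ (e + 1) * (e + 1) * (4 * 1) := by nlinarith
      _ ≤ 2 ^ ((e + 1).choose 2 + e) * (4 * 2 ^ e) := by gcongr; exact Nat.one_le_two_pow
      _ = _ := hpow.symm

lemma multichoose_add_one_sq_le {n : ℕ} (hn : 1 ≤ n) (e : ℕ) :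
    ((e + 1) * (e + 1)).multichoose n ≤
      n ^ (e + 1).choose 2 * (n + 1) ^ ((e + 1).choose 2 + e) := by
  obtain rfl | hn := hn.eq_or_lt
  · simpa [Nat.multichoose_one_right] using add_one_sq_le_two_pow e
  cases e with
  | zero => simp
  | succ e =>
    set a := (e + 1 + 1).choose 2 with ha
    calc ((e + 1 + 1) * (e + 1 + 1)).multichoose n = (a + (a + e) + 2).multichoose n := by
          rw [add_one_sq_eq_choose_two, ← ha]
          rfl
      _ ≤ (n + 1) * n ^ (a + (a + e)) := multichoose_le_add_one_mul_pow hn _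
      _ = n ^ a * (n ^ (a + e) * (n + 1)) := by ring
      _ ≤ n ^ a * ((n + 1) ^ (a + e) * (n + 1)) := by gcongr; omega
      _ = n ^ a * (n + 1) ^ (a + (e + 1)) := by ring

lemma numPartLe_pos (n : ℕ) {d : ℕ} (hd : d ≠ 0) : 0 < numPartLe n d := by
  have hcard : (Nat.Partition.indiscrete n).parts.card ≤ d := by
    obtain rfl | hn := eq_or_ne n 0
    · simp
    · rw [Nat.Partition.indiscrete_parts hn]
      simpa using Nat.one_le_iff_ne_zero.2 hd
  have : Nonempty {p : Nat.Partition n // p.parts.card ≤ d} := ⟨⟨_, hcard⟩⟩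
  exact Nat.card_pos

lemma gFac_eq_pow (n c d : ℕ) :
    gFac n c d = ((n : ℝ) ^ d.choose 2 * numPartLe n d) ^ c := by
  have hexp : (c : ℝ) * d * (d - 1) / 2 = (d.choose 2 * c : ℕ) := by
    rw [Nat.cast_mul, Nat.cast_choose_two]
    ring
  rw [gFac, hexp, Real.rpow_natCast, pow_mul, mul_pow]

lemma gFac_pos {n d : ℕ} (hn : 1 ≤ n) (hd : d ≠ 0) (c : ℕ) : 0 < gFac n c d := by
  have := numPartLe_pos n hd
  rw [gFac_eq_pow]
  positivity

lemma universalVolume_eq_pow (n d c : ℕ) :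
    universalVolume n d c = √(numPartLe n d * (d * d).multichoose n) ^ c := by
  rw [universalVolume, Nat.cast_mul]
  refine Real.sqrt_eq_cases.2 (Or.inl ⟨?_, by positivity⟩)
  rw [← mul_pow, Real.mul_self_sqrt (by positivity)]

lemma universalVolume_pos (n : ℕ) {d : ℕ} (hd : d ≠ 0) (c : ℕ) : 0 < universalVolume n d c := by
  have hmultichoose : 0 < (d * d).multichoose n := by
    rw [Nat.multichoose_eq]
    exact Nat.choose_pos (by have := Nat.mul_pos hd.bot_lt hd.bot_lt; omega)
  have := numPartLe_pos n hd
  rw [universalVolume_eq_pow]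
  positivity

/-- The factor `(n + 1) ^ (d(d-1)/2 + (d-1))` by which a universal state of a single letter
exceeds `gFac n 1 d`. -/
def excessFactor (n d : ℕ) : ℝ := ((n : ℝ) + 1) ^ (d.choose 2 + (d - 1))

lemma sqrt_numPartLe_mul_multichoose_le (n : ℕ) {d : ℕ} (hd : d ≠ 0) :
    √(numPartLe n d * (d * d).multichoose n) ≤ excessFactor n d := by
  obtain ⟨e, rfl⟩ := Nat.exists_eq_succ_of_ne_zero hd
  rw [Real.sqrt_le_left (by unfold excessFactor; positivity), excessFactor]
  have hle := Nat.mul_le_mul (numPartLe_le n hd)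
    (multichoose_le_add_one_pow ((e + 1).choose 2 + ((e + 1).choose 2 + e)) n)
  rw [← add_one_sq_eq_choose_two] at hle
  norm_cast
  refine hle.trans_eq ?_
  rw [Nat.succ_eq_add_one, Nat.add_sub_cancel]
  ring

lemma numPartLe_mul_multichoose_le {n d : ℕ} (hn : 1 ≤ n) (hd : d ≠ 0) :
    (numPartLe n d * (d * d).multichoose n : ℝ) ≤
      (n : ℝ) ^ d.choose 2 * numPartLe n d * excessFactor n d := by
  obtain ⟨e, rfl⟩ := Nat.exists_eq_succ_of_ne_zero hd
  have hle : (((e + 1) * (e + 1)).multichoose n : ℝ) ≤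
      (n : ℝ) ^ (e + 1).choose 2 * excessFactor n (e + 1) := by
    rw [excessFactor, Nat.add_sub_cancel]
    exact_mod_cast multichoose_add_one_sq_le hn e
  calc (numPartLe n (e + 1) * ((e + 1) * (e + 1)).multichoose n : ℝ)
      ≤ numPartLe n (e + 1) * ((n : ℝ) ^ (e + 1).choose 2 * excessFactor n (e + 1)) := by gcongr
    _ = _ := by ring

lemma universalVolume_mul_universalVolume_le {n d c N : ℕ} (hn : 1 ≤ n) (hd : d ≠ 0)
    (hc : c ≤ N) :
    universalVolume n d N * universalVolume n d c ≤ gFac n c d * excessFactor n d ^ N := by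
  have hexcess : 0 ≤ excessFactor n d := by unfold excessFactor; positivity
  have hsq := numPartLe_mul_multichoose_le hn hd
  have hle := sqrt_numPartLe_mul_multichoose_le n hd
  obtain ⟨M, rfl⟩ := Nat.exists_eq_add_of_le hc
  rw [gFac_eq_pow, universalVolume_eq_pow, universalVolume_eq_pow]
  set v := √(numPartLe n d * (d * d).multichoose n : ℝ)
  have hv : v ^ 2 = numPartLe n d * (d * d).multichoose n := Real.sq_sqrt (by positivity)
  calc v ^ (c + M) * v ^ c = v ^ M * (v ^ 2) ^ c := by ring
    _ ≤ excessFactor n d ^ M *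
        ((n : ℝ) ^ d.choose 2 * numPartLe n d * excessFactor n d) ^ c := by rw [hv]; gcongr
    _ = _ := by ring

lemma fFac_eq {d S : ℕ} (hd : d ≠ 0) (hS : S ≠ 0) (n a b : ℕ) (t : ℝ) :
    fFac n S a b d t = ((n : ℝ) + 1) ^ (S - 1) * (excessFactor n d ^ (a * b)) ^ t := by
  have hpos : (0 : ℝ) < n + 1 := by positivity
  rw [fFac, excessFactor, ← Real.rpow_natCast _ (S - 1), ← pow_mul, ← Real.rpow_natCast _ (_ * _),
    ← Real.rpow_mul hpos.le, ← Real.rpow_add hpos]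
  congr 1
  push_cast [Nat.cast_sub (Nat.one_le_iff_ne_zero.2 hS), Nat.cast_sub (Nat.one_le_iff_ne_zero.2 hd),
    Nat.cast_choose_two]
  ring

end PolynomialFactors

section RenyiExponent

open scoped MatrixOrder

lemma sum_smul_le_one {W D : Type*} [Fintype W] [Finite D] [DecidableEq D] {p : W → ℝ}
    (hp : ∀ a, 0 ≤ p a) (hp1 : ∑ a, p a = 1) {M : W → Matrix D D ℂ} (hM : ∀ a, M a ≤ 1) :
    ∑ a, p a • M a ≤ 1 := by
  have := Fintype.ofFinite D
  calc ∑ a, p a • M a ≤ ∑ a, p a • (1 : Matrix D D ℂ) :=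
        Finset.sum_le_sum fun a _ => smul_le_smul_of_nonneg_left (hM a) (hp a)
    _ = 1 := by rw [← Finset.sum_smul, hp1, one_smul]

variable {D : Type*} [Fintype D] [DecidableEq D]

lemma real_smul_specForm (U : Matrix D D ℂ) (a : D → ℝ) (c : ℝ) :
    c • specForm U a = specForm U (fun i => c * a i) := by
  rw [specForm, ← Matrix.smul_mul, ← Matrix.mul_smul, specForm]
  congr 2
  ext i j
  simp [Matrix.diagonal_apply]

lemma specForm_le_one {U : Matrix D D ℂ} (hU : U ∈ Matrix.unitaryGroup D ℂ) {a : D → ℝ}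
    (ha : ∀ i, a i ≤ 1) : specForm U a ≤ 1 := by
  have hdiag : Matrix.diagonal (fun i => ((1 - a i : ℝ) : ℂ)) =
      1 - Matrix.diagonal (fun i => (a i : ℂ)) := by
    ext i j
    by_cases h : i = j <;> simp [h]
  have hsub : specForm U (fun i => 1 - a i) = 1 - specForm U a := by
    rw [specForm, hdiag, mul_sub, sub_mul, mul_one, Matrix.mem_unitaryGroup_iff.1 hU, specForm]
  exact Matrix.le_iff.2 (hsub ▸ posSemidef_specForm U fun i => sub_nonneg.2 (ha i))

lemma le_one_of_specForm_le_one {U : Matrix D D ℂ} (hU : U ∈ Matrix.unitaryGroup D ℂ)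
    {a : D → ℝ} (h : specForm U a ≤ 1) (i : D) : a i ≤ 1 := by
  have hone : diagIn U 1 i = 1 := by
    rw [diagIn, mul_one, Matrix.mem_unitaryGroup_iff'.1 hU, Matrix.one_apply_eq, Complex.one_re]
  have hspec := diagIn_mul_specForm hU 1 a i
  rw [one_mul, hone, mul_one] at hspec
  rw [← hspec, ← hone]
  exact diagIn_mono h U i

lemma supPow_le_one {p u : ℝ} (hp : 0 ≤ p) (hu : u ≤ 1) : supPow p u ≤ 1 := by
  unfold supPow
  split_ifs with h
  · exact zero_le_one
  · exact Real.rpow_le_one (not_le.1 h).le hu hp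

lemma IsDensity.mpow_le_one {A : Matrix D D ℂ} (hA : IsDensity A) {p : ℝ} (hp : 0 ≤ p) :
    mpow A p ≤ 1 := by
  obtain ⟨U, hU, a, ha, rfl⟩ := exists_eq_specForm_nonneg hA.1
  have hsum : ∑ i, a i = 1 := by exact_mod_cast (trace_specForm hU a).symm.trans hA.2
  rw [mpow_specForm hU]
  refine specForm_le_one hU fun i => supPow_le_one hp ?_
  exact hsum ▸ Finset.single_le_sum (fun j _ => ha j) (Finset.mem_univ i)

lemma re_trace_mpow_le_card {K : Matrix D D ℂ} (hK : K.PosSemidef) (hK1 : K ≤ 1) {r : ℝ}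
    (hr : 0 ≤ r) : (mpow K r).trace.re ≤ Fintype.card D := by
  obtain ⟨U, hU, a, -, rfl⟩ := exists_eq_specForm_nonneg hK
  rw [mpow_specForm hU, trace_specForm hU, Complex.ofReal_re]
  refine (Finset.sum_le_sum fun i _ =>
    supPow_le_one hr (le_one_of_specForm_le_one hU hK1 i)).trans_eq ?_
  simp

lemma re_trace_mpow_smul {K : Matrix D D ℂ} (hK : K.PosSemidef) {c : ℝ} (hc : 0 ≤ c) {r : ℝ}
    (hr : r ≠ 0) : (mpow (c • K) r).trace.re = c ^ r * (mpow K r).trace.re := by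
  obtain ⟨U, hU, a, ha, rfl⟩ := exists_eq_specForm_nonneg hK
  rw [real_smul_specForm, mpow_specForm hU, mpow_specForm hU, trace_specForm hU, trace_specForm hU,
    Complex.ofReal_re, Complex.ofReal_re, Finset.mul_sum]
  refine Finset.sum_congr rfl fun i _ => ?_
  rw [supPow_eq_rpow hr (mul_nonneg hc (ha i)), supPow_eq_rpow hr (ha i), Real.mul_rpow hc (ha i)]

variable {V : Type*} [Fintype V]

/-- The quantity `-((1-t)/t) · log₂ ∑ᵥ pᵥ Tr Kᵥ^{1/(1-t)}`; all the Rényi quantities of order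
`1 - t` are of this form. -/
def renyiExponent (p : V → ℝ) (K : V → Matrix D D ℂ) (t : ℝ) : ℝ :=
  -((1 - t) / t) * Real.logb 2 (∑ v, p v * (mpow (K v) (1 / (1 - t))).trace.re)

variable {p : V → ℝ} {K : V → Matrix D D ℂ} {t : ℝ}

lemma sum_mul_re_trace_mpow_nonneg (hp : ∀ v, 0 ≤ p v) (hK : ∀ v, (K v).PosSemidef) (r : ℝ) :
    0 ≤ ∑ v, p v * (mpow (K v) r).trace.re :=
  Finset.sum_nonneg fun v _ => mul_nonneg (hp v) (re_trace_nonneg (posSemidef_mpow (hK v) r))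

lemma neg_logb_card_le_renyiExponent (hp : ∀ v, 0 ≤ p v) (hp1 : ∑ v, p v = 1)
    (hK : ∀ v, (K v).PosSemidef) (hK1 : ∀ v, K v ≤ 1) (ht0 : 0 < t) (ht1 : t < 1) :
    -((1 - t) / t) * Real.logb 2 (Fintype.card D) ≤ renyiExponent p K t := by
  have : 0 ≤ 1 - t := by linarith
  set S := ∑ v, p v * (mpow (K v) (1 / (1 - t))).trace.re
  have hS0 : 0 ≤ S := sum_mul_re_trace_mpow_nonneg hp hK _
  have hSd : S ≤ Fintype.card D :=
    calc S ≤ ∑ v, p v * Fintype.card D := Finset.sum_le_sum fun v _ =>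
          mul_le_mul_of_nonneg_left (re_trace_mpow_le_card (hK v) (hK1 v) (by positivity)) (hp v)
      _ = Fintype.card D := by rw [← Finset.sum_mul, hp1, one_mul]
  have hlog : Real.logb 2 S ≤ Real.logb 2 (Fintype.card D) := by
    rcases hS0.eq_or_lt with h | h
    · rw [← h, Real.logb_zero]
      exact div_nonneg (Real.log_natCast_nonneg _) (Real.log_nonneg one_le_two)
    · exact Real.logb_le_logb_of_le one_lt_two h hSd
  rw [renyiExponent, neg_mul, neg_mul, neg_le_neg_iff]
  gcongr

lemma rpow_le_two_rpow_neg_renyiExponent (hp : ∀ v, 0 ≤ p v) (hK : ∀ v, (K v).PosSemidef)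
    (ht0 : 0 < t) (ht1 : t < 1) :
    (∑ v, p v * (mpow (K v) (1 / (1 - t))).trace.re) ^ (1 - t) ≤
      (2 : ℝ) ^ (-(t * renyiExponent p K t)) := by
  have hexp : -(t * renyiExponent p K t) =
      Real.logb 2 (∑ v, p v * (mpow (K v) (1 / (1 - t))).trace.re) * (1 - t) := by
    unfold renyiExponent
    field_simp
  rw [hexp, Real.rpow_mul zero_le_two]
  rcases (sum_mul_re_trace_mpow_nonneg hp hK (1 / (1 - t))).eq_or_lt with h | h
  · rw [← h, Real.zero_rpow (by linarith)]
    positivity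
  · rw [Real.rpow_logb two_pos one_lt_two.ne' h]

lemma sum_mul_rpow_le_rpow_sum {z : V → ℝ} (hp : ∀ v, 0 ≤ p v) (hp1 : ∑ v, p v = 1)
    (hz : ∀ v, 0 ≤ z v) {r : ℝ} (hr0 : 0 ≤ r) (hr1 : r ≤ 1) :
    ∑ v, p v * z v ^ r ≤ (∑ v, p v * z v) ^ r := by
  simpa using (Real.concaveOn_rpow hr0 hr1).le_map_sum (t := Finset.univ) (fun v _ => hp v) hp1
    fun v _ => Set.mem_Ici.2 (hz v)

lemma sum_re_trace_mpow_smul_rpow_le (hp : ∀ v, 0 ≤ p v) (hp1 : ∑ v, p v = 1)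
    (hK : ∀ v, (K v).PosSemidef) (ht0 : 0 < t) (ht1 : t < 1) :
    ∑ v, (mpow (p v • K v) (1 / (1 - t))).trace.re ^ (1 - t) ≤
      (2 : ℝ) ^ (-(t * renyiExponent p K t)) := by
  have h1t : 0 < 1 - t := by linarith
  have hz (v : V) : 0 ≤ (mpow (K v) (1 / (1 - t))).trace.re :=
    re_trace_nonneg (posSemidef_mpow (hK v) _)
  calc ∑ v, (mpow (p v • K v) (1 / (1 - t))).trace.re ^ (1 - t)
      = ∑ v, p v * (mpow (K v) (1 / (1 - t))).trace.re ^ (1 - t) := by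
        refine Finset.sum_congr rfl fun v _ => ?_
        rw [re_trace_mpow_smul (hK v) (hp v) (by positivity),
          Real.mul_rpow (Real.rpow_nonneg (hp v) _) (hz v), ← Real.rpow_mul (hp v),
          one_div_mul_cancel h1t.ne', Real.rpow_one]
    _ ≤ (∑ v, p v * (mpow (K v) (1 / (1 - t))).trace.re) ^ (1 - t) :=
        sum_mul_rpow_le_rpow_sum hp hp1 hz h1t.le (by linarith)
    _ ≤ _ := rpow_le_two_rpow_neg_renyiExponent hp hK ht0 ht1

end RenyiExponent

section MultipleAccess

open scoped MatrixOrder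

variable {𝒳 𝒴 : Type*} [Fintype 𝒳] [Fintype 𝒴] {PX : 𝒳 → ℝ} {PY : 𝒴 → ℝ} {d : ℕ}
  {R : 𝒳 → 𝒴 → Matrix (Fin d) (Fin d) ℂ} {t : ℝ}

lemma sum_mul_eq_one (hX : ∑ x, PX x = 1) (hY : ∑ y, PY y = 1) :
    ∑ a : 𝒳 × 𝒴, PX a.1 * PY a.2 = 1 := by
  rw [Fintype.sum_prod_type, ← Finset.sum_mul_sum, hX, hY, one_mul]

lemma renyiXgY_eq_renyiExponent (PX : 𝒳 → ℝ) (PY : 𝒴 → ℝ)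
    (R : 𝒳 → 𝒴 → Matrix (Fin d) (Fin d) ℂ) (t : ℝ) :
    renyiXgY PX PY R t = renyiExponent PY (fun y => ∑ x, PX x • mpow (R x y) (1 - t)) t :=
  rfl

lemma renyiXY_eq_renyiExponent (PX : 𝒳 → ℝ) (PY : 𝒴 → ℝ)
    (R : 𝒳 → 𝒴 → Matrix (Fin d) (Fin d) ℂ) (t : ℝ) :
    renyiXY PX PY R t = renyiExponent (fun _ : Unit => 1)
      (fun _ => ∑ a : 𝒳 × 𝒴, (PX a.1 * PY a.2) • mpow (R a.1 a.2) (1 - t)) t := by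
  simp [renyiXY, renyiExponent, Fintype.sum_prod_type]

lemma neg_logb_le_renyiXgY (hX0 : ∀ x, 0 ≤ PX x) (hX : ∑ x, PX x = 1) (hY0 : ∀ y, 0 ≤ PY y)
    (hY : ∑ y, PY y = 1) (hR : ∀ x y, IsDensity (R x y)) (ht0 : 0 < t) (ht1 : t < 1) :
    -((1 - t) / t) * Real.logb 2 d ≤ renyiXgY PX PY R t := by
  rw [renyiXgY_eq_renyiExponent]
  simpa only [Fintype.card_fin] using neg_logb_card_le_renyiExponent hY0 hY
    (fun y => Matrix.posSemidef_sum _ fun x _ => (posSemidef_mpow (hR x y).1 _).smul (hX0 x))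
    (fun y => sum_smul_le_one hX0 hX fun x => (hR x y).mpow_le_one (by linarith)) ht0 ht1

lemma neg_logb_le_renyiYgX (hX0 : ∀ x, 0 ≤ PX x) (hX : ∑ x, PX x = 1) (hY0 : ∀ y, 0 ≤ PY y)
    (hY : ∑ y, PY y = 1) (hR : ∀ x y, IsDensity (R x y)) (ht0 : 0 < t) (ht1 : t < 1) :
    -((1 - t) / t) * Real.logb 2 d ≤ renyiYgX PX PY R t :=
  neg_logb_le_renyiXgY hY0 hY hX0 hX (fun y x => hR x y) ht0 ht1

lemma neg_logb_le_renyiXY (hX0 : ∀ x, 0 ≤ PX x) (hX : ∑ x, PX x = 1) (hY0 : ∀ y, 0 ≤ PY y)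
    (hY : ∑ y, PY y = 1) (hR : ∀ x y, IsDensity (R x y)) (ht0 : 0 < t) (ht1 : t < 1) :
    -((1 - t) / t) * Real.logb 2 d ≤ renyiXY PX PY R t := by
  have hp (a : 𝒳 × 𝒴) : 0 ≤ PX a.1 * PY a.2 := mul_nonneg (hX0 _) (hY0 _)
  rw [renyiXY_eq_renyiExponent]
  simpa only [Fintype.card_fin] using neg_logb_card_le_renyiExponent
    (fun _ => zero_le_one) (by simp)
    (fun _ => Matrix.posSemidef_sum _ fun a _ => (posSemidef_mpow (hR a.1 a.2).1 _).smul (hp a))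
    (fun _ => sum_smul_le_one hp (sum_mul_eq_one hX hY) fun a =>
      (hR a.1 a.2).mpow_le_one (by linarith)) ht0 ht1

lemma fiberSum_snd [DecidableEq 𝒴] {D : Type*} (PX : 𝒳 → ℝ) (PY : 𝒴 → ℝ)
    (M : 𝒳 × 𝒴 → Matrix D D ℂ) (y : 𝒴) :
    fiberSum Prod.snd (fun a => PX a.1 * PY a.2) M y = PY y • ∑ x, PX x • M (x, y) := by
  rw [fiberSum, Finset.sum_filter, Fintype.sum_prod_type, Finset.smul_sum]
  simp [smul_smul, mul_comm]

lemma fiberSum_fst [DecidableEq 𝒳] {D : Type*} (PX : 𝒳 → ℝ) (PY : 𝒴 → ℝ)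
    (M : 𝒳 × 𝒴 → Matrix D D ℂ) (x : 𝒳) :
    fiberSum Prod.fst (fun a => PX a.1 * PY a.2) M x = PX x • ∑ y, PY y • M (x, y) := by
  rw [fiberSum, Finset.sum_filter, Fintype.sum_prod_type_right, Finset.smul_sum]
  simp [smul_smul]

lemma renyiSum_snd_le [DecidableEq 𝒴] (hX0 : ∀ x, 0 ≤ PX x) (hY0 : ∀ y, 0 ≤ PY y)
    (hY : ∑ y, PY y = 1) (hR : ∀ x y, (R x y).PosSemidef) (ht0 : 0 < t) (ht1 : t < 1) :
    renyiSum Prod.snd (fun a => PX a.1 * PY a.2) (fun a => R a.1 a.2) t ≤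
      (2 : ℝ) ^ (-(t * renyiXgY PX PY R t)) := by
  simp only [renyiSum, fiberSum_snd]
  exact sum_re_trace_mpow_smul_rpow_le hY0 hY
    (fun y => Matrix.posSemidef_sum _ fun x _ => (posSemidef_mpow (hR x y) _).smul (hX0 x)) ht0 ht1

lemma renyiSum_fst_le [DecidableEq 𝒳] (hX0 : ∀ x, 0 ≤ PX x) (hX : ∑ x, PX x = 1)
    (hY0 : ∀ y, 0 ≤ PY y) (hR : ∀ x y, (R x y).PosSemidef) (ht0 : 0 < t) (ht1 : t < 1) :
    renyiSum Prod.fst (fun a => PX a.1 * PY a.2) (fun a => R a.1 a.2) t ≤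
      (2 : ℝ) ^ (-(t * renyiYgX PX PY R t)) := by
  simp only [renyiSum, fiberSum_fst]
  exact sum_re_trace_mpow_smul_rpow_le hX0 hX
    (fun x => Matrix.posSemidef_sum _ fun y _ => (posSemidef_mpow (hR x y) _).smul (hY0 y)) ht0 ht1

lemma renyiSum_unit_le (hX0 : ∀ x, 0 ≤ PX x) (hY0 : ∀ y, 0 ≤ PY y)
    (hR : ∀ x y, (R x y).PosSemidef) (ht0 : 0 < t) (ht1 : t < 1) :
    renyiSum (fun _ => ()) (fun a : 𝒳 × 𝒴 => PX a.1 * PY a.2) (fun a => R a.1 a.2) t ≤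
      (2 : ℝ) ^ (-(t * renyiXY PX PY R t)) := by
  have hle := sum_re_trace_mpow_smul_rpow_le (p := fun _ : Unit => 1)
    (K := fun _ => ∑ a : 𝒳 × 𝒴, (PX a.1 * PY a.2) • mpow (R a.1 a.2) (1 - t))
    (fun _ => zero_le_one) (by simp) (fun _ => Matrix.posSemidef_sum _ fun a _ =>
      (posSemidef_mpow (hR a.1 a.2) _).smul (mul_nonneg (hX0 _) (hY0 _))) ht0 ht1
  rw [renyiXY_eq_renyiExponent]
  simpa [renyiSum, fiberSum] using hle

end MultipleAccess

section RateTest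

universe u

variable {W V : Type*} [Fintype W] [Fintype V] {n d : ℕ} {q : W → V} {r₁ r₂ : ℝ}

/-- A test on words over `W` which is universal at the rates `r₁` and `r₂`: under every i.i.d.
distribution of the word `w` it rarely accepts states depending on `q ∘ w` only, or on nothing at
all, and it rarely rejects product states, with error exponents governed by `renyiSum`. In
`reject_le` the exponents `I₁`, `I₂` may be any lower bounds of the Rényi quantities. -/
structure IsRateTest [DecidableEq V] (q : W → V) (r₁ r₂ : ℝ)
    (T : (Fin n → W) → Matrix (Fin n → Fin d) (Fin n → Fin d) ℂ) : Prop where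
  posSemidef : ∀ w, (T w).PosSemidef
  posSemidef_one_sub : ∀ w, (1 - T w).PosSemidef
  accept_comp_le : ∀ p : W → ℝ, (∀ a, 0 ≤ p a) → ∑ a, p a = 1 →
    ∀ σ : (Fin n → V) → Matrix (Fin n → Fin d) (Fin n → Fin d) ℂ, (∀ v, IsDensity (σ v)) →
    ∑ w, (∏ b, p (w b)) * (T w * σ (q ∘ w)).trace.re ≤
      gFac n (Fintype.card V) d * (2 : ℝ) ^ (-(n : ℝ) * r₁)
  accept_const_le : ∀ p : W → ℝ, (∀ a, 0 ≤ p a) → ∑ a, p a = 1 →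
    ∀ σ : Matrix (Fin n → Fin d) (Fin n → Fin d) ℂ, IsDensity σ →
    ∑ w, (∏ b, p (w b)) * (T w * σ).trace.re ≤ gFac n 1 d * (2 : ℝ) ^ (-(n : ℝ) * r₂)
  reject_le : Function.Surjective q → ∀ p : W → ℝ, (∀ a, 0 ≤ p a) → ∑ a, p a = 1 →
    ∀ (S : Type u) [Fintype S] [DecidableEq S] (R : W → S → Matrix (Fin d) (Fin d) ℂ),
    (∀ a i, IsDensity (R a i)) → ∀ (s : Fin n → S) (t : ℝ), 0 < t → t < 1 → ∀ I₁ I₂ : ℝ,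
    renyiSum q p (fun a => ∑ i, empiricalDist s i • R a i) t ≤ (2 : ℝ) ^ (-(t * I₁)) →
    renyiSum (fun _ => ()) p (fun a => ∑ i, empiricalDist s i • R a i) t ≤
      (2 : ℝ) ^ (-(t * I₂)) →
    ∑ w, (∏ b, p (w b)) * ((1 - T w) * tensorFam fun b => R (w b) (s b)).trace.re ≤
      ((n : ℝ) + 1) ^ (Fintype.card S - 1) * (excessFactor n d ^ Fintype.card W) ^ t *
        ((2 : ℝ) ^ ((n : ℝ) * t * (r₁ - I₁)) + (2 : ℝ) ^ ((n : ℝ) * t * (r₂ - I₂)))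

lemma IsDensity.nonempty {m : Type*} [Fintype m] {A : Matrix m m ℂ} (hA : IsDensity A) :
    Nonempty m := by
  by_contra h
  rw [not_nonempty_iff] at h
  simpa [Matrix.trace] using hA.2

lemma nonempty_of_sum_eq_one {p : W → ℝ} (hp1 : ∑ a, p a = 1) : Nonempty W := by
  by_contra h
  rw [not_nonempty_iff] at h
  simp at hp1

/-- The threshold `2^{nr}`, normalized so that the bound on the acceptance probability of the
universal test becomes `gFac n c d * 2^{-nr}`. -/
def rateThreshold (n d N c : ℕ) (r : ℝ) : ℝ :=
  universalVolume n d N / gFac n c d * (2 : ℝ) ^ ((n : ℝ) * r)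

/-- The universal test with the thresholds `rateThreshold`. -/
def rateTest (n d : ℕ) [NeZero d] (q : W → V) (r₁ r₂ : ℝ) :
    (Fin n → W) → Matrix (Fin n → Fin d) (Fin n → Fin d) ℂ :=
  universalTest (Fin d) q (rateThreshold n d (Fintype.card W) (Fintype.card V) r₁)
    (rateThreshold n d (Fintype.card W) 1 r₂)

lemma rateThreshold_pos (hn : 1 ≤ n) (hd : d ≠ 0) (N c : ℕ) (r : ℝ) :
    0 < rateThreshold n d N c r := by
  have := universalVolume_pos n hd N
  have := gFac_pos hn hd c
  unfold rateThreshold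
  positivity

lemma universalVolume_div_rateThreshold (hn : 1 ≤ n) (hd : d ≠ 0) (N c : ℕ) (r : ℝ) :
    universalVolume n d N / rateThreshold n d N c r = gFac n c d * (2 : ℝ) ^ (-(n : ℝ) * r) := by
  have := universalVolume_pos n hd N
  have := gFac_pos hn hd c
  rw [rateThreshold, neg_mul, Real.rpow_neg zero_le_two]
  field_simp

lemma rateThreshold_mul_universalVolume_le (hn : 1 ≤ n) (hd : d ≠ 0) {N c : ℕ} (hc : c ≤ N)
    (r : ℝ) : rateThreshold n d N c r * universalVolume n d c ≤
      excessFactor n d ^ N * (2 : ℝ) ^ ((n : ℝ) * r) := by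
  have hle : universalVolume n d N / gFac n c d * universalVolume n d c ≤ excessFactor n d ^ N := by
    rw [div_mul_eq_mul_div, div_le_iff₀ (gFac_pos hn hd c), mul_comm (excessFactor n d ^ N)]
    exact universalVolume_mul_universalVolume_le hn hd hc
  rw [rateThreshold, mul_right_comm]
  gcongr

lemma rateThreshold_rpow_mul_le (hn : 1 ≤ n) (hd : d ≠ 0) {N c : ℕ} (hc : c ≤ N) (r : ℝ)
    {t z I : ℝ} (ht : 0 ≤ t) (hz0 : 0 ≤ z) (hz : z ≤ (2 : ℝ) ^ (-(t * I))) :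
    rateThreshold n d N c r ^ t * (universalVolume n d c ^ t * z ^ n) ≤
      (excessFactor n d ^ N) ^ t * (2 : ℝ) ^ ((n : ℝ) * t * (r - I)) := by
  have hK := rateThreshold_pos hn hd N c r
  have hv := universalVolume_pos n hd c
  have hE : 0 ≤ excessFactor n d ^ N := by unfold excessFactor; positivity
  calc rateThreshold n d N c r ^ t * (universalVolume n d c ^ t * z ^ n)
      = (rateThreshold n d N c r * universalVolume n d c) ^ t * z ^ n := by
        rw [Real.mul_rpow hK.le hv.le, mul_assoc]
    _ ≤ (excessFactor n d ^ N * (2 : ℝ) ^ ((n : ℝ) * r)) ^ t * ((2 : ℝ) ^ (-(t * I))) ^ n := by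
        exact mul_le_mul (Real.rpow_le_rpow (by positivity)
          (rateThreshold_mul_universalVolume_le hn hd hc r) ht) (pow_le_pow_left₀ hz0 hz n)
          (by positivity) (by positivity)
    _ = (excessFactor n d ^ N) ^ t * (2 : ℝ) ^ ((n : ℝ) * t * (r - I)) := by
        rw [Real.mul_rpow hE (by positivity), ← Real.rpow_mul zero_le_two,
          ← Real.rpow_natCast _ n, ← Real.rpow_mul zero_le_two, mul_assoc, ← Real.rpow_add two_pos]
        congr 2
        ring

variable [DecidableEq V]

lemma renyiSum_nonneg {D : Type*} [Fintype D] [DecidableEq D] (q : W → V) {p : W → ℝ}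
    (hp : ∀ a, 0 ≤ p a) {R : W → Matrix D D ℂ} (hR : ∀ a, (R a).PosSemidef) (t : ℝ) :
    0 ≤ renyiSum q p R t :=
  Finset.sum_nonneg fun v _ => Real.rpow_nonneg (re_trace_nonneg (posSemidef_mpow
    (posSemidef_fiberSum q hp (fun a => posSemidef_mpow (hR a) _) v) _)) _

lemma sum_prod_mul_re_trace_one_sub_rateTest_mul_le [NeZero d] (hn : 1 ≤ n)
    (hq : Function.Surjective q) {p : W → ℝ} (hp : ∀ a, 0 ≤ p a) (hp1 : ∑ a, p a = 1)
    {S : Type*} [Fintype S] [DecidableEq S] {R : W → S → Matrix (Fin d) (Fin d) ℂ}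
    (hR : ∀ a i, IsDensity (R a i)) (s : Fin n → S) {t : ℝ} (ht0 : 0 < t) (ht1 : t < 1)
    {I₁ I₂ : ℝ}
    (hI₁ : renyiSum q p (fun a => ∑ i, empiricalDist s i • R a i) t ≤ (2 : ℝ) ^ (-(t * I₁)))
    (hI₂ : renyiSum (fun _ => ()) p (fun a => ∑ i, empiricalDist s i • R a i) t ≤
      (2 : ℝ) ^ (-(t * I₂))) :
    ∑ w, (∏ b, p (w b)) *
        ((1 - rateTest n d q r₁ r₂ w) * tensorFam fun b => R (w b) (s b)).trace.re ≤
      ((n : ℝ) + 1) ^ (Fintype.card S - 1) * (excessFactor n d ^ Fintype.card W) ^ t *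
        ((2 : ℝ) ^ ((n : ℝ) * t * (r₁ - I₁)) + (2 : ℝ) ^ ((n : ℝ) * t * (r₂ - I₂))) := by
  have hd : d ≠ 0 := NeZero.ne d
  have : Nonempty (Fin n) := ⟨⟨0, hn⟩⟩
  have : Nonempty S := ⟨s ⟨0, hn⟩⟩
  have : Nonempty W := nonempty_of_sum_eq_one hp1
  have hmix (a : W) : (∑ i, empiricalDist s i • R a i).PosSemidef :=
    (isDensity_sum_smul (empiricalDist_nonneg s) (sum_empiricalDist s) (hR a)).1
  have hle := sum_prod_mul_re_trace_one_sub_universalTest_mul_le (q := q)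
    (rateThreshold_pos hn hd (Fintype.card W) (Fintype.card V) r₁)
    (rateThreshold_pos hn hd (Fintype.card W) 1 r₂) hp hR s ht0 ht1
  simp only [Fintype.card_fin] at hle
  refine hle.trans ?_
  rw [mul_assoc, mul_add ((excessFactor n d ^ _) ^ t)]
  refine mul_le_mul_of_nonneg_left (add_le_add ?_ ?_) (by positivity)
  · exact rateThreshold_rpow_mul_le hn hd (Fintype.card_le_of_surjective q hq) r₁ ht0.le
      (renyiSum_nonneg q hp hmix t) hI₁
  · exact rateThreshold_rpow_mul_le hn hd (Fintype.card_pos (α := W)) r₂ ht0.le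
      (renyiSum_nonneg _ hp hmix t) hI₂

lemma isRateTest_rateTest [NeZero d] (hn : 1 ≤ n) (q : W → V) (r₁ r₂ : ℝ) :
    IsRateTest.{u} q r₁ r₂ (rateTest n d q r₁ r₂) := by
  have hd : d ≠ 0 := NeZero.ne d
  have hK₁ := rateThreshold_pos hn hd (Fintype.card W) (Fintype.card V) r₁
  have hK₂ := rateThreshold_pos hn hd (Fintype.card W) 1 r₂
  refine ⟨posSemidef_universalTest hK₁ hK₂, posSemidef_one_sub_universalTest hK₁ hK₂,
    fun p hp hp1 σ hσ => ?_, fun p hp hp1 σ hσ => ?_,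
    fun hq p hp hp1 S _ _ R hR s t ht0 ht1 I₁ I₂ =>
      sum_prod_mul_re_trace_one_sub_rateTest_mul_le hn hq hp hp1 hR s ht0 ht1⟩
  · rw [← universalVolume_div_rateThreshold hn hd (Fintype.card W)]
    simpa only [rateTest, Fintype.card_fin] using
      sum_prod_mul_re_trace_universalTest_mul_comp_le hK₁ hK₂ hp hp1 hσ
  · rw [← universalVolume_div_rateThreshold hn hd (Fintype.card W)]
    simpa only [rateTest, Fintype.card_fin] using
      sum_prod_mul_re_trace_universalTest_mul_const_le hK₁ hK₂ hp hp1 hσ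

lemma exists_isRateTest (hn : 1 ≤ n) (d : ℕ) (q : W → V) (r₁ r₂ : ℝ) :
    ∃ T : (Fin n → W) → Matrix (Fin n → Fin d) (Fin n → Fin d) ℂ, IsRateTest.{u} q r₁ r₂ T := by
  rcases Nat.eq_zero_or_pos d with rfl | hd
  · have hempty : IsEmpty (Fin n → Fin 0) := ⟨fun i => (i ⟨0, hn⟩).elim0⟩
    refine ⟨0, fun _ => .zero, fun _ => by simpa using .one, fun p _ hp1 σ hσ => ?_,
      fun p _ _ σ hσ => (hσ.nonempty.elim hempty.false).elim,
      fun _ p _ hp1 S _ _ R hR s => ?_⟩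
    · obtain ⟨a⟩ := nonempty_of_sum_eq_one hp1
      exact ((hσ fun _ => q a).nonempty.elim hempty.false).elim
    · obtain ⟨a⟩ := nonempty_of_sum_eq_one hp1
      exact ((hR a (s ⟨0, hn⟩)).nonempty.elim Fin.elim0)
  · have : NeZero d := ⟨hd.ne'⟩
    exact ⟨_, isRateTest_rateTest hn q r₁ r₂⟩

end RateTest

section Domination

open scoped MatrixOrder

universe u

/-- The probability distributions on `𝒮` supported on the finite set `S`. -/
abbrev MixingDist {𝒮 : Type*} (S : Finset 𝒮) : Type _ :=
  {Q : 𝒮 → ℝ // (∀ s, 0 ≤ Q s) ∧ (∀ s ∉ S, Q s = 0) ∧ ∑ s ∈ S, Q s = 1}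

lemma isDensity_sum_mixingDist_smul {𝒮 m : Type*} [Fintype m] {S : Finset 𝒮} (Q : MixingDist S)
    {R : 𝒮 → Matrix m m ℂ} (hR : ∀ s, IsDensity (R s)) : IsDensity (∑ s ∈ S, Q.1 s • R s) := by
  rw [← Finset.sum_coe_sort S fun s => Q.1 s • R s]
  exact isDensity_sum_smul (Q := fun s : S => Q.1 s) (fun s => Q.2.1 s)
    ((Finset.sum_coe_sort S Q.1).trans Q.2.2.2) fun s => hR s

lemma exists_mixingDist_eq {𝒮 : Type*} {S : Finset 𝒮} {Q : S → ℝ} (hQ : ∀ s, 0 ≤ Q s)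
    (hQ1 : ∑ s, Q s = 1) : ∃ Q' : MixingDist S, ∀ s : S, Q'.1 s = Q s := by
  classical
  have heq (s : S) : (if h : (s : 𝒮) ∈ S then Q ⟨s, h⟩ else 0) = Q s := dif_pos s.2
  refine ⟨⟨fun s => if h : s ∈ S then Q ⟨s, h⟩ else 0, fun s => ?_, fun s hs => dif_neg hs, ?_⟩,
    heq⟩
  · change 0 ≤ if h : s ∈ S then Q ⟨s, h⟩ else 0
    split_ifs with h
    exacts [hQ _, le_rfl]
  · rw [← Finset.sum_coe_sort S, ← hQ1]
    exact Finset.sum_congr rfl fun s _ => heq s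

lemma two_rpow_neg_mul_le_iInf {ι : Type*} {f : ι → ℝ} (hf : BddBelow (Set.range f)) {t : ℝ}
    (ht : 0 ≤ t) (i : ι) : (2 : ℝ) ^ (-(t * f i)) ≤ (2 : ℝ) ^ (-(t * ⨅ j, f j)) :=
  Real.rpow_le_rpow_of_exponent_le one_le_two
    (neg_le_neg (mul_le_mul_of_nonneg_left (ciInf_le hf i) ht))

variable {W D : Type*} [Fintype W] {n : ℕ}

lemma sum_prod_mul_re_trace_mul_tensorFam_le [Fintype D] {p : W → ℝ}
    (hp : ∀ a, 0 ≤ p a) {A : (Fin n → W) → Matrix (Fin n → D) (Fin n → D) ℂ}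
    (hA : ∀ w, (A w).PosSemidef) {R R' : Fin n → W → Matrix D D ℂ}
    (hR : ∀ b a, (R b a).PosSemidef) {c : ℝ} (hle : ∀ b a, R b a ≤ c • R' b a) :
    ∑ w, (∏ b, p (w b)) * (A w * tensorFam fun b => R b (w b)).trace.re ≤
      c ^ n * ∑ w, (∏ b, p (w b)) * (A w * tensorFam fun b => R' b (w b)).trace.re := by
  rw [Finset.mul_sum]
  refine Finset.sum_le_sum fun w _ => ?_
  have hscale : tensorFam (fun b => c • R' b (w b)) = c ^ n • tensorFam fun b => R' b (w b) := by
    simpa using tensorFam_real_smul (fun _ => c) fun b => R' b (w b)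
  have htrace := re_trace_mul_le (hA w)
    (tensorFam_le_tensorFam (fun b => hR b (w b)) fun b => hle b (w b))
  rw [hscale, mul_smul_comm, Matrix.trace_smul, Complex.smul_re, smul_eq_mul] at htrace
  rw [mul_left_comm]
  exact mul_le_mul_of_nonneg_left htrace (Finset.prod_nonneg fun b _ => hp _)

variable {V : Type*} [DecidableEq V] [Fintype V] {d : ℕ} {q : W → V} {r₁ r₂ : ℝ}
  {T : (Fin n → W) → Matrix (Fin n → Fin d) (Fin n → Fin d) ℂ}

lemma IsRateTest.reject_le_of_dominated (hT : IsRateTest.{u} q r₁ r₂ T)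
    (hq : Function.Surjective q) {p : W → ℝ} (hp : ∀ a, 0 ≤ p a) (hp1 : ∑ a, p a = 1)
    {𝒮 : Type u} {R : W → 𝒮 → Matrix (Fin d) (Fin d) ℂ} (hR : ∀ a s, IsDensity (R a s))
    {S : Finset 𝒮} {c : ℝ} (hc : 0 ≤ c) (hS : ∀ s, ∃ s' ∈ S, ∀ a, R a s ≤ c • R a s')
    {t : ℝ} (ht0 : 0 < t) (ht1 : t < 1) {f₁ f₂ : MixingDist S → ℝ}
    (hf₁ : BddBelow (Set.range f₁)) (hf₂ : BddBelow (Set.range f₂))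
    (hle₁ : ∀ Q : MixingDist S,
      renyiSum q p (fun a => ∑ s ∈ S, Q.1 s • R a s) t ≤ (2 : ℝ) ^ (-(t * f₁ Q)))
    (hle₂ : ∀ Q : MixingDist S,
      renyiSum (fun _ => ()) p (fun a => ∑ s ∈ S, Q.1 s • R a s) t ≤ (2 : ℝ) ^ (-(t * f₂ Q)))
    (hn : 1 ≤ n) (s : Fin n → 𝒮) :
    ∑ w, (∏ b, p (w b)) * ((1 - T w) * tensorFam fun b => R (w b) (s b)).trace.re ≤
      ((n : ℝ) + 1) ^ (S.card - 1) * (excessFactor n d ^ Fintype.card W) ^ t * c ^ n *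
        ((2 : ℝ) ^ ((n : ℝ) * t * (r₁ - ⨅ Q, f₁ Q)) +
          (2 : ℝ) ^ ((n : ℝ) * t * (r₂ - ⨅ Q, f₂ Q))) := by
  classical
  choose s' hs'S hs' using hS
  have : Nonempty (Fin n) := ⟨⟨0, hn⟩⟩
  let σ (b : Fin n) : S := ⟨s' (s b), hs'S _⟩
  obtain ⟨Q, hQ⟩ := exists_mixingDist_eq (empiricalDist_nonneg σ) (sum_empiricalDist σ)
  have hmix (a : W) : ∑ i, empiricalDist σ i • R a i = ∑ i ∈ S, Q.1 i • R a i := by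
    rw [← Finset.sum_coe_sort S fun i => Q.1 i • R a i]
    simp only [hQ]
  refine (sum_prod_mul_re_trace_mul_tensorFam_le hp hT.posSemidef_one_sub
    (fun b a => (hR a (s b)).1) fun b a => hs' (s b) a).trans ?_
  rw [mul_right_comm, mul_comm _ (c ^ n)]
  refine mul_le_mul_of_nonneg_left ?_ (by positivity)
  simpa only [Fintype.card_coe] using hT.reject_le hq p hp hp1 S (fun a i => R a i)
    (fun a i => hR a i) σ t ht0 ht1 (⨅ Q, f₁ Q) (⨅ Q, f₂ Q)
    (by simpa only [hmix] using (hle₁ Q).trans (two_rpow_neg_mul_le_iInf hf₁ ht0.le Q))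
    (by simpa only [hmix] using (hle₂ Q).trans (two_rpow_neg_mul_le_iInf hf₂ ht0.le Q))

end Domination

section PairBlocks

open scoped MatrixOrder

variable {A B : Type*} [DecidableEq A]

/-- The operator `∑ₐ |a⟩⟨a| ⊗ T a`, with the classical register in the first factor. -/
def blockOp (T : A → Matrix B B ℂ) : Matrix (A × B) (A × B) ℂ :=
  (Matrix.blockDiagonal T).submatrix Prod.swap Prod.swap

lemma one_sub_blockOp [DecidableEq B] (T : A → Matrix B B ℂ) :
    1 - blockOp T = blockOp fun a => 1 - T a := by
  have hone : (1 : Matrix (A × B) (A × B) ℂ) =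
      (1 : Matrix (B × A) (B × A) ℂ).submatrix Prod.swap Prod.swap :=
    (Matrix.submatrix_one_equiv (Equiv.prodComm A B)).symm
  rw [blockOp, blockOp, hone, ← Matrix.blockDiagonal_one]
  exact congrArg (·.submatrix Prod.swap Prod.swap) (Matrix.blockDiagonal_sub 1 T).symm

lemma posSemidef_blockOp [Finite A] [Finite B] {T : A → Matrix B B ℂ}
    (hT : ∀ a, (T a).PosSemidef) : (blockOp T).PosSemidef := by
  classical
  have := Fintype.ofFinite A
  have := Fintype.ofFinite B
  choose F hF using fun a => CStarAlgebra.nonneg_iff_eq_star_mul_self.1 (hT a).nonneg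
  have hsq : Matrix.blockDiagonal T =
      (Matrix.blockDiagonal F).conjTranspose * Matrix.blockDiagonal F := by
    rw [Matrix.blockDiagonal_conjTranspose, ← Matrix.blockDiagonal_mul]
    exact congrArg _ (funext hF)
  exact (hsq ▸ Matrix.posSemidef_conjTranspose_mul_self _).submatrix _

variable [Fintype A] [Fintype B]

lemma trace_blockOp_mul_blockOp (S T : A → Matrix B B ℂ) :
    (blockOp S * blockOp T).trace = ∑ a, (S a * T a).trace := by
  have hmul : blockOp S * blockOp T =
      (Matrix.blockDiagonal fun a => S a * T a).submatrix Prod.swap Prod.swap := by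
    rw [Matrix.blockDiagonal_mul]
    exact Matrix.submatrix_mul_equiv _ _ _ (Equiv.prodComm A B) _
  rw [hmul, ← Matrix.trace_blockDiagonal]
  exact (Equiv.prodComm A B).sum_comp fun i => Matrix.blockDiagonal (fun a => S a * T a) i i

variable {𝒳 𝒴 : Type*} [DecidableEq 𝒳] [DecidableEq 𝒴] {n d : ℕ}

/-- The operator on `(ℂ^𝒳)^{⊗n} ⊗ (ℂ^𝒴)^{⊗n} ⊗ (ℂ^d)^{⊗n}` whose blocks are indexed by words of
pairs. -/
def pairBlocks (T : (Fin n → 𝒳 × 𝒴) → Matrix (Fin n → Fin d) (Fin n → Fin d) ℂ) :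
    Matrix (((Fin n → 𝒳) × (Fin n → 𝒴)) × (Fin n → Fin d))
      (((Fin n → 𝒳) × (Fin n → 𝒴)) × (Fin n → Fin d)) ℂ :=
  blockOp fun a => T fun b => (a.1 b, a.2 b)

lemma one_sub_pairBlocks (T : (Fin n → 𝒳 × 𝒴) → Matrix (Fin n → Fin d) (Fin n → Fin d) ℂ) :
    1 - pairBlocks T = pairBlocks fun w => 1 - T w :=
  one_sub_blockOp _

variable [Fintype 𝒳] [Fintype 𝒴]

lemma cq2n_eq_blockOp (PX : 𝒳 → ℝ) (PY : 𝒴 → ℝ)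
    (F : (Fin n → 𝒳) → (Fin n → 𝒴) → Matrix (Fin n → Fin d) (Fin n → Fin d) ℂ) :
    cq2n n PX PY F =
      blockOp fun a => (∏ b, PX (a.1 b) * PY (a.2 b)) • F a.1 a.2 := by
  ext i j
  simp [cq2n, cqState2, blockOp, Matrix.blockDiagonal_apply, Finset.prod_mul_distrib]

lemma re_trace_pairBlocks_mul_cq2n
    (T : (Fin n → 𝒳 × 𝒴) → Matrix (Fin n → Fin d) (Fin n → Fin d) ℂ) (PX : 𝒳 → ℝ) (PY : 𝒴 → ℝ)
    (F : (Fin n → 𝒳) → (Fin n → 𝒴) → Matrix (Fin n → Fin d) (Fin n → Fin d) ℂ) :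
    (pairBlocks T * cq2n n PX PY F).trace.re = ∑ w : Fin n → 𝒳 × 𝒴,
      (∏ b, PX (w b).1 * PY (w b).2) * (T w * F (Prod.fst ∘ w) (Prod.snd ∘ w)).trace.re := by
  rw [cq2n_eq_blockOp, pairBlocks, trace_blockOp_mul_blockOp, Complex.re_sum,
    ← (Equiv.arrowProdEquivProdArrow (Fin n) (fun _ => 𝒳) fun _ => 𝒴).sum_comp]
  refine Finset.sum_congr rfl fun w _ => ?_
  rw [mul_smul_comm, Matrix.trace_smul, Complex.smul_re]
  rfl

end PairBlocks

section Universality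

universe u

variable {𝒳 𝒴 : Type*} [Fintype 𝒳] [DecidableEq 𝒳] [Fintype 𝒴] [DecidableEq 𝒴]
  {V : Type*} [DecidableEq V] [Fintype V] {n d : ℕ} {q : 𝒳 × 𝒴 → V} {r₁ r₂ : ℝ}
  {T : (Fin n → 𝒳 × 𝒴) → Matrix (Fin n → Fin d) (Fin n → Fin d) ℂ} {PX : 𝒳 → ℝ} {PY : 𝒴 → ℝ}
  {𝒮 : Type u} {ρ : 𝒳 → 𝒴 → 𝒮 → Matrix (Fin d) (Fin d) ℂ} {t ε : ℝ} {S : Finset 𝒮}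

lemma IsRateTest.re_trace_one_sub_pairBlocks_mul_cq2n_le (hT : IsRateTest.{u} q r₁ r₂ T)
    (hq : Function.Surjective q) (hX0 : ∀ x, 0 ≤ PX x) (hX : ∑ x, PX x = 1)
    (hY0 : ∀ y, 0 ≤ PY y) (hY : ∑ y, PY y = 1) (hρ : ∀ x y s, IsDensity (ρ x y s))
    (ht : t ∈ Set.Ioo (0 : ℝ) 1) (hε : 0 < ε)
    (hS : ∀ s, ∃ s' ∈ S, ∀ x y, Loewner (ρ x y s) ((1 + ε) • ρ x y s'))
    {f : MixingDist S → ℝ} (hf : BddBelow (Set.range f))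
    (hle : ∀ Q : MixingDist S, renyiSum q (fun a => PX a.1 * PY a.2)
      (fun a => ∑ s ∈ S, Q.1 s • ρ a.1 a.2 s) t ≤ (2 : ℝ) ^ (-(t * f Q)))
    (hn : 1 ≤ n) (s : Fin n → 𝒮) :
    ((1 - pairBlocks T) *
        cq2n n PX PY fun xv yv => tensorFam fun k => ρ (xv k) (yv k) (s k)).trace.re ≤
      fFac n S.card (Fintype.card 𝒳) (Fintype.card 𝒴) d t * (1 + ε) ^ n *
        ((2 : ℝ) ^ ((n : ℝ) * t * (r₁ - ⨅ Q, f Q)) +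
          (2 : ℝ) ^ ((n : ℝ) * t * (r₂ - ⨅ Q : MixingDist S,
            renyiXY PX PY (fun x y => ∑ i ∈ S, Q.1 i • ρ x y i) t))) := by
  obtain ⟨x⟩ := nonempty_of_sum_eq_one hX
  obtain ⟨y⟩ := nonempty_of_sum_eq_one hY
  obtain ⟨s', hs'S, -⟩ := hS (s ⟨0, hn⟩)
  have hd : d ≠ 0 := fun h => by
    subst h
    exact (hρ x y s').nonempty.elim Fin.elim0
  have hmix (Q : MixingDist S) (x : 𝒳) (y : 𝒴) : IsDensity (∑ i ∈ S, Q.1 i • ρ x y i) :=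
    isDensity_sum_mixingDist_smul Q (hρ x y)
  have hbdd : BddBelow (Set.range fun Q : MixingDist S =>
      renyiXY PX PY (fun x y => ∑ i ∈ S, Q.1 i • ρ x y i) t) :=
    ⟨_, Set.forall_mem_range.2 fun Q => neg_logb_le_renyiXY hX0 hX hY0 hY (hmix Q) ht.1 ht.2⟩
  rw [one_sub_pairBlocks, re_trace_pairBlocks_mul_cq2n,
    fFac_eq hd (Finset.card_ne_zero_of_mem hs'S), ← Fintype.card_prod]
  have hunit (Q : MixingDist S) := renyiSum_unit_le hX0 hY0 (fun x y => (hmix Q x y).1) ht.1 ht.2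
  exact hT.reject_le_of_dominated (p := fun a => PX a.1 * PY a.2) (R := fun a => ρ a.1 a.2) hq
    (fun a => mul_nonneg (hX0 a.1) (hY0 a.2)) (sum_mul_eq_one hX hY) (fun a => hρ a.1 a.2)
    (by positivity) (fun s => (hS s).imp fun s' h => ⟨h.1, fun a => h.2 a.1 a.2⟩)
    ht.1 ht.2 hf hbdd hle hunit hn s

end Universality

universe u

theorem statement6_general {𝒳 𝒴 : Type*} [Fintype 𝒳] [DecidableEq 𝒳] [Fintype 𝒴]
    [DecidableEq 𝒴] (d : ℕ) {n : ℕ} (hn : 1 ≤ n) (R1 R2 : ℝ) :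
    ∃ TX TY : Matrix (((Fin n → 𝒳) × (Fin n → 𝒴)) × (Fin n → Fin d))
        (((Fin n → 𝒳) × (Fin n → 𝒴)) × (Fin n → Fin d)) ℂ,
      TX.PosSemidef ∧ (1 - TX).PosSemidef ∧ TY.PosSemidef ∧ (1 - TY).PosSemidef ∧
      ∀ PX : 𝒳 → ℝ, (∀ x, 0 ≤ PX x) → (∑ x, PX x = 1) →
      ∀ PY : 𝒴 → ℝ, (∀ y, 0 ≤ PY y) → (∑ y, PY y = 1) →
        (∀ (𝒮 : Type u) (ρ : 𝒳 → 𝒴 → 𝒮 → Matrix (Fin d) (Fin d) ℂ),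
          (∀ x y s, IsDensity (ρ x y s)) → ∀ t ∈ Set.Ioo (0 : ℝ) 1, ∀ ε : ℝ, 0 < ε →
          ∀ Sε : Finset 𝒮,
          (∀ s : 𝒮, ∃ s' ∈ Sε, ∀ x y, Loewner (ρ x y s) ((1 + ε) • ρ x y s')) →
          ∀ sv : Fin n → 𝒮,
            (Matrix.trace ((1 - TX) *
              cq2n n PX PY (fun xv yv => tensorFam fun k => ρ (xv k) (yv k) (sv k)))).re ≤
              fFac n Sε.card (Fintype.card 𝒳) (Fintype.card 𝒴) d t * (1 + ε) ^ n *
                ((2 : ℝ) ^ ((n : ℝ) * t * (R1 - ⨅ Q : MixingDist Sε,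
                    renyiXgY PX PY (fun x y => ∑ s ∈ Sε, Q.1 s • ρ x y s) t)) +
                  (2 : ℝ) ^ ((n : ℝ) * t * (R1 + R2 - ⨅ Q : MixingDist Sε,
                    renyiXY PX PY (fun x y => ∑ s ∈ Sε, Q.1 s • ρ x y s) t))) ∧
            (Matrix.trace ((1 - TY) *
              cq2n n PX PY (fun xv yv => tensorFam fun k => ρ (xv k) (yv k) (sv k)))).re ≤
              fFac n Sε.card (Fintype.card 𝒳) (Fintype.card 𝒴) d t * (1 + ε) ^ n *
                ((2 : ℝ) ^ ((n : ℝ) * t * (R2 - ⨅ Q : MixingDist Sε,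
                    renyiYgX PX PY (fun x y => ∑ s ∈ Sε, Q.1 s • ρ x y s) t)) +
                  (2 : ℝ) ^ ((n : ℝ) * t * (R1 + R2 - ⨅ Q : MixingDist Sε,
                    renyiXY PX PY (fun x y => ∑ s ∈ Sε, Q.1 s • ρ x y s) t)))) ∧
        (∀ σf : (Fin n → 𝒴) → Matrix (Fin n → Fin d) (Fin n → Fin d) ℂ,
          (∀ yv, IsDensity (σf yv)) →
          (Matrix.trace (TX * cq2n n PX PY (fun _ yv => σf yv))).re ≤
            gFac n (Fintype.card 𝒴) d * (2 : ℝ) ^ (-(n : ℝ) * R1)) ∧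
        (∀ σ : Matrix (Fin n → Fin d) (Fin n → Fin d) ℂ, IsDensity σ →
          (Matrix.trace (TX * cq2n n PX PY (fun _ _ => σ))).re ≤
            gFac n 1 d * (2 : ℝ) ^ (-(n : ℝ) * (R1 + R2))) ∧
        (∀ σf : (Fin n → 𝒳) → Matrix (Fin n → Fin d) (Fin n → Fin d) ℂ,
          (∀ xv, IsDensity (σf xv)) →
          (Matrix.trace (TY * cq2n n PX PY (fun xv _ => σf xv))).re ≤
            gFac n (Fintype.card 𝒳) d * (2 : ℝ) ^ (-(n : ℝ) * R2)) ∧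
        (∀ σ : Matrix (Fin n → Fin d) (Fin n → Fin d) ℂ, IsDensity σ →
          (Matrix.trace (TY * cq2n n PX PY (fun _ _ => σ))).re ≤
            gFac n 1 d * (2 : ℝ) ^ (-(n : ℝ) * (R1 + R2))) := by
  obtain ⟨TX, hTX⟩ := exists_isRateTest hn d (Prod.snd : 𝒳 × 𝒴 → 𝒴) R1 (R1 + R2)
  obtain ⟨TY, hTY⟩ := exists_isRateTest hn d (Prod.fst : 𝒳 × 𝒴 → 𝒳) R2 (R1 + R2)
  refine ⟨pairBlocks TX, pairBlocks TY, posSemidef_blockOp fun _ => hTX.posSemidef _,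
    one_sub_pairBlocks TX ▸ posSemidef_blockOp fun _ => hTX.posSemidef_one_sub _,
    posSemidef_blockOp fun _ => hTY.posSemidef _,
    one_sub_pairBlocks TY ▸ posSemidef_blockOp fun _ => hTY.posSemidef_one_sub _,
    fun PX hX0 hX PY hY0 hY => ?_⟩
  have hp (a : 𝒳 × 𝒴) : 0 ≤ PX a.1 * PY a.2 := mul_nonneg (hX0 _) (hY0 _)
  have hp1 := sum_mul_eq_one hX hY
  have : Nonempty 𝒳 := nonempty_of_sum_eq_one hX
  have : Nonempty 𝒴 := nonempty_of_sum_eq_one hY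
  simp only [re_trace_pairBlocks_mul_cq2n]
  refine ⟨fun 𝒮 ρ hρ t ht ε hε S hS s => ?_, hTX.accept_comp_le _ hp hp1,
    hTX.accept_const_le _ hp hp1, hTY.accept_comp_le _ hp hp1, hTY.accept_const_le _ hp hp1⟩
  have hmix (Q : MixingDist S) (x : 𝒳) (y : 𝒴) : IsDensity (∑ i ∈ S, Q.1 i • ρ x y i) :=
    isDensity_sum_mixingDist_smul Q (hρ x y)
  have hsnd (Q : MixingDist S) := renyiSum_snd_le hX0 hY0 hY (fun x y => (hmix Q x y).1) ht.1 ht.2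
  have hfst (Q : MixingDist S) := renyiSum_fst_le hX0 hX hY0 (fun x y => (hmix Q x y).1) ht.1 ht.2
  exact ⟨hTX.re_trace_one_sub_pairBlocks_mul_cq2n_le Prod.snd_surjective hX0 hX hY0 hY hρ ht hε hS
      ⟨_, Set.forall_mem_range.2 fun Q =>
        neg_logb_le_renyiXgY hX0 hX hY0 hY (hmix Q) ht.1 ht.2⟩ hsnd hn s,
    hTY.re_trace_one_sub_pairBlocks_mul_cq2n_le Prod.fst_surjective hX0 hX hY0 hY hρ ht hε hS
      ⟨_, Set.forall_mem_range.2 fun Q =>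
        neg_logb_le_renyiYgX hX0 hX hY0 hY (hmix Q) ht.1 ht.2⟩ hfst hn s⟩

/-- Universal non-simultaneous tests for multiple independence testing,
under Assumption A for the family `{ρ_{x,y,s}}`. -/
theorem statement6 {𝒳 𝒴 𝒮 : Type*} [Fintype 𝒳] [DecidableEq 𝒳] [Fintype 𝒴] [DecidableEq 𝒴]
    [Nonempty 𝒮] {d : ℕ}
    (ρ : 𝒳 → 𝒴 → 𝒮 → Matrix (Fin d) (Fin d) ℂ)
    (hρ : ∀ x y s, IsDensity (ρ x y s))
    (hAss : ∀ ε : ℝ, 0 < ε → ∃ Sε : Finset 𝒮, ∀ s : 𝒮, ∃ s' ∈ Sε, ∀ x y,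
      Loewner (ρ x y s) ((1 + ε) • ρ x y s'))
    (n : ℕ) (hn : 1 ≤ n) (R1 R2 : ℝ) (hR1 : 0 < R1) (hR2 : 0 < R2) :
    ∃ TX TY : Matrix (((Fin n → 𝒳) × (Fin n → 𝒴)) × (Fin n → Fin d))
        (((Fin n → 𝒳) × (Fin n → 𝒴)) × (Fin n → Fin d)) ℂ,
      TX.PosSemidef ∧ (1 - TX).PosSemidef ∧ TY.PosSemidef ∧ (1 - TY).PosSemidef ∧
      ∀ PX : 𝒳 → ℝ, (∀ x, 0 ≤ PX x) → (∑ x, PX x = 1) →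
      ∀ PY : 𝒴 → ℝ, (∀ y, 0 ≤ PY y) → (∑ y, PY y = 1) →
      ∀ t : ℝ, t ∈ Set.Ioo (0 : ℝ) 1 →
      ∀ ε : ℝ, 0 < ε →
      ∀ Sε : Finset 𝒮,
        (∀ s : 𝒮, ∃ s' ∈ Sε, ∀ x y, Loewner (ρ x y s) ((1 + ε) • ρ x y s')) →
        -- (i)
        (∀ sv : Fin n → 𝒮,
          (Matrix.trace ((1 - TX) *
            cq2n n PX PY (fun xv yv => tensorFam fun k => ρ (xv k) (yv k) (sv k)))).re ≤
            fFac n Sε.card (Fintype.card 𝒳) (Fintype.card 𝒴) d t * (1 + ε) ^ n *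
              ((2 : ℝ) ^ ((n : ℝ) * t *
                  (R1 - ⨅ Q : {Q : 𝒮 → ℝ // (∀ s, 0 ≤ Q s) ∧ (∀ s ∉ Sε, Q s = 0) ∧
                      ∑ s ∈ Sε, Q s = 1},
                    renyiXgY PX PY (fun x y => ∑ s ∈ Sε, Q.1 s • ρ x y s) t)) +
                (2 : ℝ) ^ ((n : ℝ) * t *
                  (R1 + R2 - ⨅ Q : {Q : 𝒮 → ℝ // (∀ s, 0 ≤ Q s) ∧ (∀ s ∉ Sε, Q s = 0) ∧
                      ∑ s ∈ Sε, Q s = 1},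
                    renyiXY PX PY (fun x y => ∑ s ∈ Sε, Q.1 s • ρ x y s) t)))) ∧
        -- (ii)
        (∀ sv : Fin n → 𝒮,
          (Matrix.trace ((1 - TY) *
            cq2n n PX PY (fun xv yv => tensorFam fun k => ρ (xv k) (yv k) (sv k)))).re ≤
            fFac n Sε.card (Fintype.card 𝒳) (Fintype.card 𝒴) d t * (1 + ε) ^ n *
              ((2 : ℝ) ^ ((n : ℝ) * t *
                  (R2 - ⨅ Q : {Q : 𝒮 → ℝ // (∀ s, 0 ≤ Q s) ∧ (∀ s ∉ Sε, Q s = 0) ∧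
                      ∑ s ∈ Sε, Q s = 1},
                    renyiYgX PX PY (fun x y => ∑ s ∈ Sε, Q.1 s • ρ x y s) t)) +
                (2 : ℝ) ^ ((n : ℝ) * t *
                  (R1 + R2 - ⨅ Q : {Q : 𝒮 → ℝ // (∀ s, 0 ≤ Q s) ∧ (∀ s ∉ Sε, Q s = 0) ∧
                      ∑ s ∈ Sε, Q s = 1},
                    renyiXY PX PY (fun x y => ∑ s ∈ Sε, Q.1 s • ρ x y s) t)))) ∧
        -- (iii)
        (∀ σf : (Fin n → 𝒴) → Matrix (Fin n → Fin d) (Fin n → Fin d) ℂ,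
          (∀ yv, IsDensity (σf yv)) →
          (Matrix.trace (TX * cq2n n PX PY (fun _ yv => σf yv))).re ≤
            gFac n (Fintype.card 𝒴) d * (2 : ℝ) ^ (-(n : ℝ) * R1)) ∧
        -- (iv)
        (∀ σ : Matrix (Fin n → Fin d) (Fin n → Fin d) ℂ, IsDensity σ →
          (Matrix.trace (TX * cq2n n PX PY (fun _ _ => σ))).re ≤
            gFac n 1 d * (2 : ℝ) ^ (-(n : ℝ) * (R1 + R2))) ∧
        -- (v)
        (∀ σf : (Fin n → 𝒳) → Matrix (Fin n → Fin d) (Fin n → Fin d) ℂ,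
          (∀ xv, IsDensity (σf xv)) →
          (Matrix.trace (TY * cq2n n PX PY (fun xv _ => σf xv))).re ≤
            gFac n (Fintype.card 𝒳) d * (2 : ℝ) ^ (-(n : ℝ) * R2)) ∧
        -- (vi)
        (∀ σ : Matrix (Fin n → Fin d) (Fin n → Fin d) ℂ, IsDensity σ →
          (Matrix.trace (TY * cq2n n PX PY (fun _ _ => σ))).re ≤
            gFac n 1 d * (2 : ℝ) ^ (-(n : ℝ) * (R1 + R2))) := by
  obtain ⟨TX, TY, hTX, hTX', hTY, hTY', hbound⟩ :=
    statement6_general (𝒳 := 𝒳) (𝒴 := 𝒴) d hn R1 R2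
  refine ⟨TX, TY, hTX, hTX', hTY, hTY', fun PX hX0 hX PY hY0 hY t ht ε hε S hS => ?_⟩
  obtain ⟨hreject, haccept⟩ := hbound PX hX0 hX PY hY0 hY
  exact ⟨fun s => (hreject _ ρ hρ t ht ε hε S hS s).1,
    fun s => (hreject _ ρ hρ t ht ε hε S hS s).2, haccept⟩
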